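/- (Renormalization lemma, Berger–Turaev) Let (M, ω) be a surface with an area form and f : M → M a C^∞ symplectic diffeomorphism having a hyperbolic periodic point O with a homoclinic band I. For every odd integer N, every integer r ≥ 1, all L, δ > 0, and every neighbourhood U_I of I, there exist: an integer n > 1; diffeomorphisms Φ₁, …, Φ_N ∈ Diff^∞_ω(ℝ²) that are δ-close to the identity; and a C^∞ diffeomorphism Q : ℝ² → ℝ² of constant Jacobian with Q(𝔻) ⊂ U_I; such that for all functions ψ₁, …, ψ_N ∈ C^r(ℝ, ℝ) whose C^r norms are bounded by L, there exists a C^r symplectic diffeomorphism f̂ of M which coincides with f on the complement of U_I, satisfies ‖f̂ − f‖_{C^r} < δ, and satisfies Q⁻¹ ∘ f̂ⁿ ∘ Q|_𝔻 = H_{ψ_N} ∘ Φ_N ∘ … ∘ H_{ψ₁} ∘ Φ₁|_𝔻. Moreover f̂^m(Q(𝔻)) ∩ Q(𝔻) = ∅ for every m = 1, …, n−1. -/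

import Mathlib

/-!
The return map near the band is a composition of many iterates of `f`, most of which are spent near
the saddle. In coordinates straightening the invariant manifolds (`exists_chart`, from Irwin's proof
of the stable manifold theorem `exists_stable_graph`), a passage of length `k` near the saddle,
rescaled at the entrance and at the exit, is uniformly close to the identity (`transit`). Some
subinterval of the band lies on both axes of the chart after a uniform number of iterates, forward
and backward (`exists_band_point`, by Baire's theorem). Hence, after a rescaling `u ↦ a + ϵ u` of
the direction transverse to the band, the return maps have bounded derivatives and satisfy a twist
condition, while their intermediate iterates avoid a neighbourhood of a point of the band
(`return_family`).

Choose `N` distinct heights `y i` near that point. By the twist condition some point at height `y i`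
returns at height `y (i + 1)`; in triangular charts of scale `μ` around departure and arrival points
the return is the rotation `(x, y) ↦ (y, -x)` up to a symplectic map `Φ (i + 1)` which is
`O(μ)`-close to the identity (`transit_normal_form`). The charts at departure and arrival must share
their linear parts up to shears, which requires solving `e i * e (i + 1) = 1 / |c i|` cyclically;
this is where `N` odd is used (`exists_cyclic_exponents`). The perturbation is a composition
`f ∘ S`, where `S` is a symplectic shear `(u, y) ↦ (u + ζ i y, y)` near height `y i`
(`shear_family`) carrying the arrival chart to the departure chart composed with
`(x, y) ↦ (x - ψ i y, y)`. The rotation composed with this shear is the Hénon-type map of `ψ i`, and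
`N` returns compose to the required product (`perturbed_dynamics`). With `μ` fixed, `ζ i` is
`O(ϵ)` in the `C^r` sense uniformly in `ψ`, so `f ∘ S` is close to `f` for `ϵ` small.

Global symplectic diffeomorphisms with prescribed local behaviour are built from generating
functions (`gen_diffeo`, `exists_extension`).
-/

open Filter MeasureTheory Set Topology
open scoped ENNReal NNReal

noncomputable section

/-- The plane `ℝ²`. -/
abbrev P2 := ℝ × ℝ

/-- The closed unit disc `𝔻 ⊆ ℝ²`. -/
def Disc : Set P2 := Metric.closedBall 0 1

/-- A `C^r` diffeomorphism of the closed unit disc (given together with its inverse). -/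
structure DiscDiffeo (r : ℕ∞) where
  toFun : P2 → P2
  invFun : P2 → P2
  mapsTo : Set.MapsTo toFun Disc Disc
  mapsTo_inv : Set.MapsTo invFun Disc Disc
  left_inv : ∀ x ∈ Disc, invFun (toFun x) = x
  right_inv : ∀ x ∈ Disc, toFun (invFun x) = x
  contDiffOn : ContDiffOn ℝ r toFun Disc
  contDiffOn_inv : ContDiffOn ℝ r invFun Disc

/-- A diffeomorphism of the disc preserves the standard area form `ω` iff the Jacobian
determinant of its derivative equals `1` everywhere on the disc. -/
def DiscDiffeo.AreaPreserving {r : ℕ∞} (f : DiscDiffeo r) : Prop :=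
  ∀ x ∈ Disc, (fderivWithin ℝ f.toFun Disc x).det = 1

/-- `C^r` distance of two maps over a set `s`:
the sum over `i ≤ r` of the sup over `s` of the norms of the differences of the
`i`-th derivatives (`ℝ≥0∞`-valued, so that no boundedness assumptions are needed). -/
def crDistOn (r : ℕ) (s : Set P2) (f g : P2 → P2) : ℝ≥0∞ :=
  ∑ i ∈ Finset.range (r + 1),
    ⨆ x ∈ s, (‖iteratedFDerivWithin ℝ i f s x - iteratedFDerivWithin ℝ i g s x‖₊ : ℝ≥0∞)

/-- `C^r` distance of two maps of the disc. -/
def crDist (r : ℕ) (f g : P2 → P2) : ℝ≥0∞ := crDistOn r Disc f g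

/-- The entropy at time `n` of the finite measurable partition of `X` given by a map
`P : X → Fin m`, with respect to the dynamics `f`:
`−Σ_w μ(X_w) log μ(X_w)`, the sum being over all itineraries `w : Fin n → Fin m`,
where `X_w` is the set of points whose itinerary is `w`. -/
def partitionDynEntropy {X : Type*} [MeasurableSpace X] (μ : Measure X) (f : X → X)
    {m : ℕ} (P : X → Fin m) (n : ℕ) : ℝ :=
  -∑ w : Fin n → Fin m,
      (μ {x | ∀ i : Fin n, P (f^[(i : ℕ)] x) = w i}).toReal *
        Real.log (μ {x | ∀ i : Fin n, P (f^[(i : ℕ)] x) = w i}).toReal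

/-- The Kolmogorov–Sinai (metric) entropy of `f` with respect to `μ`: the supremum over
all finite measurable partitions of the asymptotic exponential rate of the partition
entropies. -/
def kolmogorovSinaiEntropy {X : Type*} [MeasurableSpace X] (μ : Measure X) (f : X → X) :
    EReal :=
  ⨆ (m : ℕ) (P : {P : X → Fin m // Measurable P}),
    Filter.atTop.liminf fun n : ℕ => ((partitionDynEntropy μ f P.1 n / n : ℝ) : EReal)

/-- The normalized Lebesgue (area) measure on the disc. -/
def discMeasure : Measure P2 := (volume Disc)⁻¹ • volume.restrict Disc

end

noncomputable section

/-- A `C^r` diffeomorphism of the plane `ℝ²` (given together with its inverse). -/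
structure PlaneDiffeo (r : ℕ∞) where
  toFun : P2 → P2
  invFun : P2 → P2
  left_inv : Function.LeftInverse invFun toFun
  right_inv : Function.RightInverse invFun toFun
  contDiff : ContDiff ℝ r toFun
  contDiff_inv : ContDiff ℝ r invFun

/-- A diffeomorphism of the plane preserves the standard area form `ω` (is symplectic)
iff the Jacobian determinant of its derivative equals `1` everywhere. -/
def PlaneDiffeo.Symplectic {r : ℕ∞} (f : PlaneDiffeo r) : Prop :=
  ∀ x : P2, (fderiv ℝ f.toFun x).det = 1

/-- Global `C^r` distance between two maps of the plane. -/
def crDistGlobal (r : ℕ) (f g : P2 → P2) : ℝ≥0∞ :=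
  ∑ i ∈ Finset.range (r + 1),
    ⨆ x : P2, (‖iteratedFDeriv ℝ i f x - iteratedFDeriv ℝ i g x‖₊ : ℝ≥0∞)

/-- The Hénon-type map `H_ψ (x, y) = (y, −x + ψ(y))`. -/
def henon (ψ : ℝ → ℝ) : P2 → P2 := fun p => (p.2, -p.1 + ψ p.2)

/-- The vertical shear `S_ψ (x, y) = (x, y + ψ(x))`. -/
def vshear (ψ : ℝ → ℝ) : P2 → P2 := fun p => (p.1, p.2 + ψ p.1)

/-- The composition `g (n-1) ∘ ⋯ ∘ g 1 ∘ g 0` of a finite sequence of maps. -/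
def seqComp : {n : ℕ} → (Fin n → (P2 → P2)) → P2 → P2
  | 0, _ => id
  | n + 1, g => g (Fin.last n) ∘ seqComp fun i => g i.castSucc

/-- `O` is a hyperbolic periodic point of period `τ` for the map `f` of the plane:
the derivative of `f^τ` at `O` has a pair of real eigenvalues `c, c⁻¹` with `|c| ≠ 1`. -/
def IsHypPerPtPlane (f : P2 → P2) (τ : ℕ) (O : P2) : Prop :=
  0 < τ ∧ f^[τ] O = O ∧
    ∃ (c : ℝ) (v w : P2), c ≠ 0 ∧ |c| ≠ 1 ∧ LinearIndependent ℝ ![v, w] ∧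
      fderiv ℝ (f^[τ]) O v = c • v ∧ fderiv ℝ (f^[τ]) O w = c⁻¹ • w

/-- The stable set (stable manifold) of the point `P` for the dynamics `f` on the
plane.  The unstable set of `P` for a diffeomorphism `f` is `stableSetPlane f⁻¹ P`. -/
def stableSetPlane (f : P2 → P2) (P : P2) : Set P2 :=
  {x | Filter.Tendsto (fun n : ℕ => dist (f^[n] x) (f^[n] P)) Filter.atTop (nhds 0)}

/-- A nontrivial arc in the plane: the injective continuous image of `[0, 1]`. -/
def IsNontrivialArc (A : Set P2) : Prop :=
  ∃ γ : ℝ → P2, ContinuousOn γ (Set.Icc 0 1) ∧ Set.InjOn γ (Set.Icc 0 1) ∧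
    γ '' Set.Icc 0 1 = A

/-- The hyperbolic periodic point `O` of period `τ` of the diffeomorphism `f` (with
inverse `finv`) has a homoclinic band: a nontrivial arc along which the unstable
manifold `W^u(O)` and a stable manifold `W^s(f^j O)` (`0 ≤ j < τ`) coincide. -/
def HasHomoclinicBandPlane (f finv : P2 → P2) (τ : ℕ) (O : P2) : Prop :=
  ∃ j < τ, ∃ A : Set P2, IsNontrivialArc A ∧
    A ⊆ stableSetPlane finv O ∧ A ⊆ stableSetPlane f (f^[j] O)

/-- A `C^∞` area-preserving (symplectic) embedding of the closed disc into the plane. -/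
structure SymplEmbDisc where
  toFun : P2 → P2
  contDiffOn : ContDiffOn ℝ (⊤ : ℕ∞) toFun Disc
  injOn : Set.InjOn toFun Disc
  symp : ∀ x ∈ Disc, (fderivWithin ℝ toFun Disc x).det = 1

end

namespace RL

open scoped ContDiff BoundedContinuousFunction

/-! ### Integrals depending on a parameter -/

section ParamInt

variable {E G : Type} [NormedAddCommGroup E] [NormedSpace ℝ E] [FiniteDimensional ℝ E]
  [NormedAddCommGroup G] [NormedSpace ℝ G]

theorem hasFDerivAt_integral_param {f : ℝ → E → G} (hf : ContDiff ℝ 1 (fun p : ℝ × E => f p.1 p.2))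
    (x₀ : E) :
    HasFDerivAt (fun x => ∫ t in (0:ℝ)..1, f t x) (∫ t in (0:ℝ)..1, fderiv ℝ (f t) x₀) x₀ := by
  have hft : ∀ t, ContDiff ℝ 1 (f t) := fun t => hf.comp (contDiff_const.prodMk contDiff_id)
  have hcd : Continuous (fun p : ℝ × E => fderiv ℝ (f p.1) p.2) := by
    have h0 : ContDiff ℝ 1 (Function.uncurry fun p : ℝ × E => f p.1) :=
      hf.comp (g := fun p : ℝ × E => f p.1 p.2) (f := fun q : (ℝ × E) × E => (q.1.1, q.2))
        (by fun_prop)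
    exact (ContDiff.fderiv (n := 0) h0 contDiff_snd (by norm_num)).continuous
  have hcompact : IsCompact (Icc (0:ℝ) 1 ×ˢ Metric.closedBall x₀ 1) :=
    isCompact_Icc.prod (isCompact_closedBall x₀ 1)
  obtain ⟨C, hC⟩ := hcompact.exists_bound_of_continuousOn hcd.continuousOn
  refine intervalIntegral.hasFDerivAt_integral_of_dominated_of_fderiv_le
    (F := fun x t => f t x) (F' := fun x t => fderiv ℝ (f t) x) (bound := fun _ => C)
    (Metric.closedBall_mem_nhds x₀ one_pos) ?_ ?_ ?_ ?_ ?_ ?_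
  · refine Eventually.of_forall fun x => ?_
    exact (hf.continuous.comp (continuous_id.prodMk continuous_const)).aestronglyMeasurable
  · exact (hf.continuous.comp (continuous_id.prodMk continuous_const)).intervalIntegrable _ _
  · exact (hcd.comp (continuous_id.prodMk continuous_const)).aestronglyMeasurable
  · refine Eventually.of_forall fun t ht x hx => hC (t, x) ⟨?_, hx⟩
    rw [uIoc_of_le zero_le_one] at ht
    exact Ioc_subset_Icc_self ht
  · exact intervalIntegrable_const
  · refine Eventually.of_forall fun t _ x _ => ?_
    exact ((hft t).differentiable (by norm_num) x).hasFDerivAt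

end ParamInt

/-- Differentiation under the integral sign, by induction on the order of smoothness. -/
theorem contDiff_integral_param_nat {E : Type} [NormedAddCommGroup E] [NormedSpace ℝ E]
    [FiniteDimensional ℝ E] (n : ℕ) : ∀ {G : Type} [NormedAddCommGroup G] [NormedSpace ℝ G]
    [CompleteSpace G] {f : ℝ → E → G}, ContDiff ℝ n (fun p : ℝ × E => f p.1 p.2) →
    ContDiff ℝ n (fun x => ∫ t in (0:ℝ)..1, f t x) := by
  induction n with
  | zero =>
    intro G _ _ _ f hf
    rw [Nat.cast_zero, contDiff_zero] at hf ⊢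
    exact intervalIntegral.continuous_parametric_intervalIntegral_of_continuous'
      (f := fun x t => f t x) (hf.comp continuous_swap) 0 1
  | succ n ih =>
    intro G _ _ _ f hf
    have h1 : ContDiff ℝ 1 (fun p : ℝ × E => f p.1 p.2) := hf.of_le (by norm_cast; omega)
    have hd := hasFDerivAt_integral_param h1
    rw [show ((n + 1 : ℕ) : ℕ∞ω) = (n : ℕ∞ω) + 1 by push_cast; rfl,
      contDiff_succ_iff_fderiv]
    refine ⟨fun x => (hd x).differentiableAt, by simp, ?_⟩
    have : fderiv ℝ (fun x => ∫ t in (0:ℝ)..1, f t x) =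
        fun x => ∫ t in (0:ℝ)..1, fderiv ℝ (f t) x := funext fun x => (hd x).fderiv
    rw [this]
    refine ih (f := fun t x => fderiv ℝ (f t) x) ?_
    have h0 : ContDiff ℝ (n + 1 : ℕ) (Function.uncurry fun p : ℝ × E => f p.1) :=
      hf.comp (g := fun p : ℝ × E => f p.1 p.2) (f := fun q : (ℝ × E) × E => (q.1.1, q.2))
        (by fun_prop)
    exact ContDiff.fderiv (n := n) h0 contDiff_snd (by push_cast; exact le_rfl)

theorem contDiff_integral_param {E G : Type} [NormedAddCommGroup E] [NormedSpace ℝ E]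
    [FiniteDimensional ℝ E] [NormedAddCommGroup G] [NormedSpace ℝ G]
    [CompleteSpace G] {f : ℝ → E → G} {n : ℕ∞} (hf : ContDiff ℝ n (fun p : ℝ × E => f p.1 p.2)) :
    ContDiff ℝ n (fun x => ∫ t in (0:ℝ)..1, f t x) := by
  rw [contDiff_iff_forall_nat_le]
  intro m hm
  exact contDiff_integral_param_nat m (hf.of_le (by exact_mod_cast hm))

/-- Hadamard's lemma: increments of a smooth map are the values of a smooth
operator-valued map. -/
theorem exists_hadamard {E G : Type} [NormedAddCommGroup E] [NormedSpace ℝ E]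
    [FiniteDimensional ℝ E] [NormedAddCommGroup G] [NormedSpace ℝ G]
    [CompleteSpace G] {f : E → G} {n : ℕ} (hf : ContDiff ℝ (n + 1 : ℕ) f) :
    ∃ e : E × E → E →L[ℝ] G, ContDiff ℝ n e ∧ (∀ x v, f (x + v) - f x = e (x, v) v) ∧
      ∀ x, e (x, 0) = fderiv ℝ f x := by
  refine ⟨fun p => ∫ t in (0:ℝ)..1, fderiv ℝ f (p.1 + t • p.2), ?_, ?_, ?_⟩
  · have hdf : ContDiff ℝ n (fderiv ℝ f) :=
      hf.fderiv_right (by push_cast; exact le_rfl)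
    refine contDiff_integral_param_nat (E := E × E) n
      (f := fun t (p : E × E) => fderiv ℝ f (p.1 + t • p.2)) ?_
    refine hdf.comp ?_
    fun_prop
  · intro x v
    have hdf : Continuous (fderiv ℝ f) := hf.continuous_fderiv (by simp)
    have hc : Continuous fun t : ℝ => fderiv ℝ f (x + t • v) := hdf.comp (by fun_prop)
    have hder : ∀ t : ℝ, HasDerivAt (fun t : ℝ => f (x + t • v)) (fderiv ℝ f (x + t • v) v) t := by
      intro t
      have h1 : HasDerivAt (fun t : ℝ => x + t • v) v t := by
        simpa using ((hasDerivAt_id t).smul_const v).const_add x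
      exact ((hf.differentiable (by simp) _).hasFDerivAt).comp_hasDerivAt t h1
    have := intervalIntegral.integral_eq_sub_of_hasDerivAt (a := 0) (b := 1)
      (fun t _ => hder t) ((hc.clm_apply continuous_const).intervalIntegrable _ _)
    simp only [one_smul, zero_smul, add_zero] at this
    rw [← this, ContinuousLinearMap.intervalIntegral_apply (hc.intervalIntegrable _ _)]
  · intro x
    simp

/-! ### Bounds for derivatives up to a given order -/

/-- All derivatives of `f` of order at most `r` have norm at most `M` on `s`. -/
def CB {E F : Type} [NormedAddCommGroup E] [NormedSpace ℝ E] [NormedAddCommGroup F]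
    [NormedSpace ℝ F] (s : Set E) (r : ℕ) (M : ℝ) (f : E → F) : Prop :=
  ∀ i ≤ r, ∀ x ∈ s, ‖iteratedFDeriv ℝ i f x‖ ≤ M

namespace CB

variable {D E F G : Type} [NormedAddCommGroup D] [NormedSpace ℝ D]
  [NormedAddCommGroup E] [NormedSpace ℝ E] [NormedAddCommGroup F]
  [NormedSpace ℝ F] [NormedAddCommGroup G] [NormedSpace ℝ G]
  {s : Set E} {t : Set F} {r : ℕ} {M M' : ℝ} {f : E → F} {g : F → G}

theorem mono (h : CB s r M f) {s' : Set E} {r' : ℕ} {M' : ℝ} (hs : s' ⊆ s) (hr : r' ≤ r)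
    (hM : M ≤ M') : CB s' r' M' f :=
  fun i hi x hx => (h i (hi.trans hr) x (hs hx)).trans hM

theorem norm_le (h : CB s r M f) {x : E} (hx : x ∈ s) : ‖f x‖ ≤ M := by
  simpa using h 0 (Nat.zero_le _) x hx

theorem norm_fderiv_le (h : CB s r M f) (hr : 1 ≤ r) {x : E} (hx : x ∈ s) :
    ‖fderiv ℝ f x‖ ≤ M := by
  have := h 1 hr x hx
  rwa [← zero_add 1, ← norm_iteratedFDeriv_fderiv, norm_iteratedFDeriv_zero] at this

theorem congr (h : CB s r M f) {f' : E → F} (hff : ∀ x ∈ s, f' =ᶠ[𝓝 x] f) : CB s r M f' :=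
  fun i hi x hx => by
    rw [(hff x hx).iteratedFDeriv ℝ i |>.eq_of_nhds]
    exact h i hi x hx

theorem fderiv (h : CB s (r + 1) M f) : CB s r M (fderiv ℝ f) := fun i hi x hx => by
  rw [norm_iteratedFDeriv_fderiv]
  exact h (i + 1) (by omega) x hx

theorem of_fderiv (h0 : ∀ x ∈ s, ‖f x‖ ≤ M) (h : CB s r M (_root_.fderiv ℝ f)) :
    CB s (r + 1) M f := fun i hi x hx => by
  cases i with
  | zero => simpa using h0 x hx
  | succ i =>
    rw [← norm_iteratedFDeriv_fderiv]
    exact h i (by omega) x hx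

theorem comp (hC : CB t r M g) (hg : ContDiff ℝ r g) (hf : ContDiff ℝ r f) (hst : MapsTo f s t)
    {K : ℝ} (hK : 1 ≤ K) (hM : 0 ≤ M)
    (hD : ∀ i, 1 ≤ i → i ≤ r → ∀ x ∈ s, ‖iteratedFDeriv ℝ i f x‖ ≤ K) :
    CB s r (r.factorial * M * K ^ r) (g ∘ f) := by
  intro i hi x hx
  have := norm_iteratedFDeriv_comp_le (n := i) (N := r) hg hf (by exact_mod_cast hi) x
    (C := M) (D := K) (fun j hj => hC j (hj.trans hi) _ (hst hx))
    (fun j hj hji => (hD j hj (hji.trans hi) x hx).trans (le_self_pow₀ hK (by omega)))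
  refine this.trans ?_
  have h1 : (i.factorial : ℝ) ≤ r.factorial := by exact_mod_cast Nat.factorial_le hi
  have h2 : K ^ i ≤ K ^ r := pow_le_pow_right₀ hK hi
  have h3 : (0:ℝ) ≤ K ^ i := by positivity
  gcongr

theorem add {f' : E → F} (h : CB s r M f) (h' : CB s r M' f') (hf : ContDiff ℝ r f)
    (hf' : ContDiff ℝ r f') : CB s r (M + M') (fun x => f x + f' x) := fun i hi x hx => by
  have hi' : (i : ℕ∞ω) ≤ r := by exact_mod_cast hi
  have : iteratedFDeriv ℝ i (fun x => f x + f' x) x =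
      iteratedFDeriv ℝ i f x + iteratedFDeriv ℝ i f' x :=
    iteratedFDeriv_add_apply (hf.contDiffAt.of_le hi') (hf'.contDiffAt.of_le hi')
  rw [this]
  exact (norm_add_le _ _).trans (add_le_add (h i hi x hx) (h' i hi x hx))

theorem bilin {f₁ : D → E} {f₂ : D → F} {s : Set D} (B : E →L[ℝ] F →L[ℝ] G) (hB : ‖B‖ ≤ 1)
    (h₁ : CB s r M f₁) (h₂ : CB s r M' f₂) (hM : 0 ≤ M)
    (hf₁ : ContDiff ℝ r f₁) (hf₂ : ContDiff ℝ r f₂) :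
    CB s r (2 ^ r * M * M') (fun x => B (f₁ x) (f₂ x)) := by
  intro i hi x hx
  have hM' : 0 ≤ M' := (norm_nonneg _).trans (h₂ 0 (Nat.zero_le _) x hx)
  refine (B.norm_iteratedFDeriv_le_of_bilinear_of_le_one hf₁ hf₂ x (by exact_mod_cast hi) hB).trans ?_
  calc ∑ j ∈ Finset.range (i + 1), (i.choose j : ℝ) * ‖iteratedFDeriv ℝ j f₁ x‖ *
          ‖iteratedFDeriv ℝ (i - j) f₂ x‖
      ≤ ∑ j ∈ Finset.range (i + 1), (i.choose j : ℝ) * M * M' := by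
        refine Finset.sum_le_sum fun j hj => ?_
        have hj' : j ≤ i := by simpa [Nat.lt_succ_iff] using hj
        have := h₁ j (hj'.trans hi) x hx
        have := h₂ (i - j) ((Nat.sub_le _ _).trans hi) x hx
        gcongr
    _ = 2 ^ i * M * M' := by
        rw [← Finset.sum_mul, ← Finset.sum_mul]
        congr 2
        exact_mod_cast Nat.sum_range_choose i
    _ ≤ 2 ^ r * M * M' := by
        gcongr
        norm_num

theorem clm_apply {f₁ : D → E →L[ℝ] F} {f₂ : D → E} {s : Set D}
    (h₁ : CB s r M f₁) (h₂ : CB s r M' f₂) (hM : 0 ≤ M)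
    (hf₁ : ContDiff ℝ r f₁) (hf₂ : ContDiff ℝ r f₂) :
    CB s r (2 ^ r * M * M') (fun x => f₁ x (f₂ x)) := by
  refine bilin (ContinuousLinearMap.id ℝ (E →L[ℝ] F)) ?_ h₁ h₂ hM hf₁ hf₂
  exact ContinuousLinearMap.norm_id_le

theorem comp_left (L : F →L[ℝ] G) (h : CB s r M f) (hf : ContDiff ℝ r f) :
    CB s r (‖L‖ * M) (fun x => L (f x)) := fun i hi x hx => by
  refine (L.norm_iteratedFDeriv_comp_left (f := f) hf.contDiffAt
    (by exact_mod_cast hi)).trans ?_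
  gcongr
  exact h i hi x hx

theorem prodMk {f' : E → G} (h : CB s r M f) (h' : CB s r M' f') (hf : ContDiff ℝ r f)
    (hf' : ContDiff ℝ r f') : CB s r (M + M') (fun x => (f x, f' x)) := by
  have h1 := (h.comp_left (ContinuousLinearMap.inl ℝ F G) hf).add
    (h'.comp_left (ContinuousLinearMap.inr ℝ F G) hf')
    ((ContinuousLinearMap.inl ℝ F G).contDiff.comp hf)
    ((ContinuousLinearMap.inr ℝ F G).contDiff.comp hf')
  intro i hi x hx
  have hM : 0 ≤ M := (norm_nonneg _).trans (h 0 (Nat.zero_le _) x hx)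
  have hM' : 0 ≤ M' := (norm_nonneg _).trans (h' 0 (Nat.zero_le _) x hx)
  have := h1 i hi x hx
  simp only [ContinuousLinearMap.inl_apply, ContinuousLinearMap.inr_apply, Prod.mk_add_mk,
    add_zero, zero_add] at this
  refine this.trans (add_le_add ?_ ?_)
  · exact mul_le_of_le_one_left hM (ContinuousLinearMap.norm_inl_le_one ℝ F G)
  · exact mul_le_of_le_one_left hM' (ContinuousLinearMap.norm_inr_le_one ℝ F G)

theorem of_compact (hs : IsCompact s) (hf : ContDiff ℝ r f) : ∃ C, 1 ≤ C ∧ CB s r C f := by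
  have : ∀ i ∈ Finset.range (r + 1), ∃ C, ∀ x ∈ s, ‖iteratedFDeriv ℝ i f x‖ ≤ C := by
    intro i hi
    rw [Finset.mem_range] at hi
    exact hs.exists_bound_of_continuousOn
      (hf.continuous_iteratedFDeriv (by exact_mod_cast (by omega : i ≤ r))).continuousOn
  choose! C hC using this
  refine ⟨1 + ∑ i ∈ Finset.range (r + 1), |C i|, ?_, ?_⟩
  · have : 0 ≤ ∑ i ∈ Finset.range (r + 1), |C i| := Finset.sum_nonneg fun i _ => abs_nonneg _
    linarith
  · intro i hi x hx
    have hi' : i ∈ Finset.range (r + 1) := by simp; omega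
    have h1 := hC i hi' x hx
    have h2 : |C i| ≤ ∑ i ∈ Finset.range (r + 1), |C i| :=
      Finset.single_le_sum (fun i _ => abs_nonneg (C i)) hi'
    have := le_abs_self (C i)
    linarith

theorem const {c : F} (hc : ‖c‖ ≤ M) : CB s r M (fun _ => c) := fun i hi x hx => by
  cases i with
  | zero => simpa using hc
  | succ i => simpa [iteratedFDeriv_const_of_ne] using (norm_nonneg _).trans hc

theorem iteratedFDeriv_clm (L : E →L[ℝ] F) (i : ℕ) (hi : 1 ≤ i) (x : E) :
    ‖iteratedFDeriv ℝ i (fun x => L x) x‖ ≤ ‖L‖ := by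
  obtain ⟨i, rfl⟩ : ∃ k, i = k + 1 := ⟨i - 1, by omega⟩
  rw [← norm_iteratedFDeriv_fderiv]
  have : _root_.fderiv ℝ (fun x => L x) = fun _ => L := by
    ext1 x; exact L.fderiv
  rw [this]
  exact CB.const (s := univ) (r := i) (M := ‖L‖) le_rfl i le_rfl x (mem_univ _)

theorem of_clm (L : E →L[ℝ] F) (h0 : ∀ x ∈ s, ‖L x‖ ≤ M) (hL : ‖L‖ ≤ M) :
    CB s r M (fun x => L x) := fun i hi x hx => by
  cases i with
  | zero => simpa using h0 x hx
  | succ i => exact (iteratedFDeriv_clm L _ (by omega) x).trans hL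

end CB

/-! ### Inverses of perturbations of the identity -/

section Inverse

variable {E : Type} [NormedAddCommGroup E] [NormedSpace ℝ E]

/-- The perturbation of the identity by a smooth map with derivative of norm at most `1/2` has a
smooth inverse. -/
theorem exists_inverse [CompleteSpace E] {Δ : E → E} {n : ℕ∞ω} (hn : n ≠ 0) (hΔ : ContDiff ℝ n Δ)
    (h : ∀ x, ‖fderiv ℝ Δ x‖ ≤ 1 / 2) :
    ∃ G : E → E, ContDiff ℝ n G ∧ (∀ x, G (x + Δ x) = x) ∧ ∀ y, G y + Δ (G y) = y := by
  have hlip : ∀ x y, ‖Δ x - Δ y‖ ≤ 1 / 2 * ‖x - y‖ := fun x y =>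
    (convex_univ (𝕜 := ℝ)).norm_image_sub_le_of_norm_fderiv_le
      (fun x _ => hΔ.differentiable hn x) (fun x _ => h x) (mem_univ y) (mem_univ x)
  have happ : ApproximatesLinearOn (fun x => x + Δ x)
      ((ContinuousLinearEquiv.refl ℝ E : E ≃L[ℝ] E) : E →L[ℝ] E) univ (1 / 2) := by
    intro x _ y _
    have := hlip x y
    simpa [add_sub_add_comm] using this
  have hc : Subsingleton E ∨ (1 / 2 : ℝ≥0) <
      ‖((ContinuousLinearEquiv.refl ℝ E).symm : E →L[ℝ] E)‖₊⁻¹ := by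
    rcases subsingleton_or_nontrivial E with h | h
    · exact Or.inl h
    · right
      have : ‖((ContinuousLinearEquiv.refl ℝ E).symm : E →L[ℝ] E)‖₊ = 1 := by
        ext; exact ContinuousLinearMap.norm_id
      rw [this, inv_one]
      exact NNReal.half_lt_self one_ne_zero
  let H := happ.toHomeomorph _ hc
  have hH : ∀ x, H x = x + Δ x := fun x => rfl
  have hunit : ∀ x, IsUnit (1 + fderiv ℝ Δ x) := fun x => by
    have h1 : ‖-fderiv ℝ Δ x‖ < 1 := by rw [norm_neg]; exact (h x).trans_lt (by norm_num)
    have := (Units.oneSub _ h1).isUnit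
    simpa using this
  refine ⟨H.symm, ?_, fun x => ?_, fun y => ?_⟩
  · refine H.contDiff_symm (f₀' := fun x => ContinuousLinearEquiv.unitsEquiv ℝ E (hunit x).unit)
      (fun x => ?_) (contDiff_id.add hΔ)
    have := (hasFDerivAt_id x).add (hΔ.differentiable hn x).hasFDerivAt
    exact this
  · rw [← hH]; exact H.symm_apply_apply x
  · rw [← hH]; exact H.apply_symm_apply y

/-- An inverse of `id + Δ` has derivatives of order `1, …, r` bounded independently of `Δ`. The top
order term of `D(Δ ∘ G)` is absorbed because `‖DΔ‖ ≤ 1/2`. -/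
theorem inverse_bound (r : ℕ) : ∃ C : ℝ, 1 ≤ C ∧ ∀ (Δ G : E → E), ContDiff ℝ r Δ → ContDiff ℝ r G →
    (∀ y, G y + Δ (G y) = y) → CB univ r 1 Δ → (∀ x, ‖fderiv ℝ Δ x‖ ≤ 1 / 2) →
    ∀ i, 1 ≤ i → i ≤ r → ∀ x, ‖iteratedFDeriv ℝ i G x‖ ≤ C := by
  induction r with
  | zero => exact ⟨1, le_rfl, fun _ _ _ _ _ _ _ i h1 h2 => by omega⟩
  | succ r ih =>
    obtain ⟨C, hC1, hC⟩ := ih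
    set B : ℝ := r.factorial * 1 * C ^ r
    have hB : 0 ≤ B := by positivity
    refine ⟨max C (2 * (1 + 2 ^ r * B * C)), le_max_of_le_left hC1, ?_⟩
    intro Δ G hΔ hG hinv hCB hhalf i hi1 hi x
    have hr1 : (r : ℕ∞ω) ≤ (r + 1 : ℕ) := by exact_mod_cast Nat.le_succ r
    have hCG := hC Δ G (hΔ.of_le hr1) (hG.of_le hr1) hinv
      (hCB.mono subset_rfl (Nat.le_succ r) le_rfl) hhalf
    rcases Nat.lt_or_ge r i with hlt | hge
    swap
    · exact (hCG i hi1 hge x).trans (le_max_left _ _)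
    obtain rfl : i = r + 1 := by omega
    refine le_trans ?_ (le_max_right _ _)
    have hΔd : ContDiff ℝ r (fderiv ℝ Δ) := hΔ.fderiv_right (by push_cast; exact le_rfl)
    have hGd : ContDiff ℝ r (fderiv ℝ G) := hG.fderiv_right (by push_cast; exact le_rfl)
    have hGr : ContDiff ℝ r G := hG.of_le hr1
    set P : E → E →L[ℝ] E := fderiv ℝ Δ ∘ G
    have hP : ContDiff ℝ r P := hΔd.comp hGr
    have hPB : CB univ r B P := CB.comp (t := univ) hCB.fderiv hΔd hGr (mapsTo_univ _ _) hC1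
      zero_le_one (fun i h1 h2 x _ => hCG i h1 h2 x)
    have hdiff : Differentiable ℝ G := hG.differentiable (by simp)
    have hdiffΔ : Differentiable ℝ Δ := hΔ.differentiable (by simp)
    have hQ : fderiv ℝ G = fun y => ContinuousLinearMap.id ℝ E - (P y).comp (fderiv ℝ G y) := by
      funext y
      have h1 : HasFDerivAt (fun y => G y + Δ (G y))
          (fderiv ℝ G y + (P y).comp (fderiv ℝ G y)) y :=
        (hdiff y).hasFDerivAt.add ((hdiffΔ (G y)).hasFDerivAt.comp y (hdiff y).hasFDerivAt)
      have h2 : (fun y => G y + Δ (G y)) = id := funext hinv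
      rw [h2] at h1
      have h3 := h1.unique (hasFDerivAt_id y)
      rw [eq_sub_iff_add_eq]
      exact h3
    have hcomp : ContDiff ℝ r fun y => (P y).comp (fderiv ℝ G y) := hP.clm_comp hGd
    have hkey : ‖iteratedFDeriv ℝ r (fun y => (P y).comp (fderiv ℝ G y)) x‖ ≤
        2 ^ r * B * C + 1 / 2 * ‖iteratedFDeriv ℝ r (fderiv ℝ G) x‖ := by
      have hb := (ContinuousLinearMap.compL ℝ E E E).norm_iteratedFDeriv_le_of_bilinear_of_le_one
        hP hGd x le_rfl (ContinuousLinearMap.norm_compL_le ℝ E E E)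
      refine hb.trans ?_
      rw [Finset.sum_range_succ']
      refine add_le_add ?_ ?_
      · calc _ ≤ ∑ j ∈ Finset.range r, (r.choose (j + 1) : ℝ) * B * C := by
              refine Finset.sum_le_sum fun j hj => ?_
              rw [Finset.mem_range] at hj
              have h1 := hPB (j + 1) (by omega) x (mem_univ _)
              have h2 : ‖iteratedFDeriv ℝ (r - (j + 1)) (fderiv ℝ G) x‖ ≤ C := by
                rw [norm_iteratedFDeriv_fderiv]
                exact hCG _ (by omega) (by omega) x
              gcongr
          _ ≤ 2 ^ r * B * C := by
              rw [← Finset.sum_mul, ← Finset.sum_mul]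
              gcongr
              have := Nat.sum_range_choose r
              rw [Finset.sum_range_succ'] at this
              have h3 : (∑ j ∈ Finset.range r, r.choose (j + 1)) ≤ 2 ^ r := by omega
              exact_mod_cast h3
      · simp only [Nat.choose_zero_right, Nat.cast_one, one_mul, norm_iteratedFDeriv_zero,
          Nat.sub_zero]
        gcongr
        exact hhalf _
    have hid : ‖iteratedFDeriv ℝ r (fun _ : E => ContinuousLinearMap.id ℝ E) x‖ ≤ 1 :=
      CB.const (s := univ) ContinuousLinearMap.norm_id_le r le_rfl x (mem_univ _)
    have hsub : iteratedFDeriv ℝ r (fderiv ℝ G) x =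
        iteratedFDeriv ℝ r (fun _ : E => ContinuousLinearMap.id ℝ E) x -
        iteratedFDeriv ℝ r (fun y => (P y).comp (fderiv ℝ G y)) x := by
      conv_lhs => rw [hQ]
      exact iteratedFDeriv_sub_apply contDiff_const.contDiffAt hcomp.contDiffAt
    have h4 := norm_sub_le (iteratedFDeriv ℝ r (fun _ : E => ContinuousLinearMap.id ℝ E) x)
      (iteratedFDeriv ℝ r (fun y => (P y).comp (fderiv ℝ G y)) x)
    rw [← hsub] at h4
    rw [← norm_iteratedFDeriv_fderiv]
    linarith

/-- Composing a map with the inverse of a small perturbation of the identity enlarges its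
`C^r` size by at most a constant factor. -/
theorem comp_inverse_bound (r : ℕ) {F : Type} [NormedAddCommGroup F] [NormedSpace ℝ F] :
    ∃ C : ℝ, 1 ≤ C ∧ ∀ (Δ G : E → E) (B : E → F) (M : ℝ),
    ContDiff ℝ r Δ → ContDiff ℝ r G → ContDiff ℝ r B →
    (∀ y, G y + Δ (G y) = y) → CB univ r 1 Δ → (∀ x, ‖fderiv ℝ Δ x‖ ≤ 1 / 2) →
    CB univ r M B → CB univ r (C * M) (B ∘ G) := by
  obtain ⟨K, hK, h⟩ := inverse_bound (E := E) r
  refine ⟨r.factorial * K ^ r, ?_, ?_⟩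
  · have h1 : (1:ℝ) ≤ r.factorial := by exact_mod_cast Nat.factorial_pos r
    exact one_le_mul_of_one_le_of_one_le h1 (one_le_pow₀ hK)
  · intro Δ G B M hΔ hG hB hinv hCB hhalf hBM
    have hM : 0 ≤ M := (norm_nonneg _).trans (hBM 0 (Nat.zero_le _) 0 (mem_univ _))
    have := CB.comp (t := univ) (s := univ) hBM hB hG (mapsTo_univ _ _) hK hM
      (fun i h1 h2 x _ => h Δ G hΔ hG hinv hCB hhalf i h1 h2 x)
    exact this.mono subset_rfl le_rfl (by nlinarith)

end Inverse

/-! ### Symplectic maps from generating functions -/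

theorem det_P2 (L : P2 →L[ℝ] P2) :
    L.det = (L (1, 0)).1 * (L (0, 1)).2 - (L (0, 1)).1 * (L (1, 0)).2 := by
  rw [ContinuousLinearMap.det, ← LinearMap.det_toMatrix (Module.Basis.finTwoProd ℝ),
    Matrix.det_fin_two]
  simp [LinearMap.toMatrix_apply]

theorem det_comp_P2 (L L' : P2 →L[ℝ] P2) : (L.comp L').det = L.det * L'.det := by
  simp only [ContinuousLinearMap.det, ContinuousLinearMap.toLinearMap_comp, LinearMap.det_comp]

theorem clm_P2_apply {F : Type} [NormedAddCommGroup F] [NormedSpace ℝ F] (L : P2 →L[ℝ] F)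
    (z : P2) : L z = z.1 • L (1, 0) + z.2 • L (0, 1) := by
  rw [← map_smul, ← map_smul, ← map_add]
  congr 1
  ext <;> simp

/-- The linear map `A ↦ (0, A e₁)`. -/
noncomputable def L1 : (P2 →L[ℝ] ℝ) →L[ℝ] P2 :=
  (0 : (P2 →L[ℝ] ℝ) →L[ℝ] ℝ).prod (ContinuousLinearMap.apply ℝ ℝ ((1, 0) : P2))

/-- The linear map `A ↦ (A e₂, 0)`. -/
noncomputable def L2 : (P2 →L[ℝ] ℝ) →L[ℝ] P2 :=
  (ContinuousLinearMap.apply ℝ ℝ ((0, 1) : P2)).prod (0 : (P2 →L[ℝ] ℝ) →L[ℝ] ℝ)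

@[simp] theorem L1_apply (A : P2 →L[ℝ] ℝ) : L1 A = (0, A (1, 0)) := rfl
@[simp] theorem L2_apply (A : P2 →L[ℝ] ℝ) : L2 A = (A (0, 1), 0) := rfl

theorem abs_clm_le (A : P2 →L[ℝ] ℝ) {v : P2} (hv : ‖v‖ ≤ 1) : |A v| ≤ ‖A‖ := by
  have := A.le_opNorm v
  rw [Real.norm_eq_abs] at this
  nlinarith [norm_nonneg A]

theorem norm_e1 : ‖((1, 0) : P2)‖ ≤ 1 := by simp [Prod.norm_def]
theorem norm_e2 : ‖((0, 1) : P2)‖ ≤ 1 := by simp [Prod.norm_def]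

theorem norm_L1_le : ‖L1‖ ≤ 1 := by
  refine ContinuousLinearMap.opNorm_le_bound _ zero_le_one fun A => ?_
  have := abs_clm_le A norm_e1
  simpa [Prod.norm_def] using this

theorem norm_L2_le : ‖L2‖ ≤ 1 := by
  refine ContinuousLinearMap.opNorm_le_bound _ zero_le_one fun A => ?_
  have := abs_clm_le A norm_e2
  simpa [Prod.norm_def] using this

theorem norm_L21_le : ‖L2 - L1‖ ≤ 1 := by
  refine ContinuousLinearMap.opNorm_le_bound _ zero_le_one fun A => ?_
  have h1 := abs_clm_le A norm_e1
  have h2 := abs_clm_le A norm_e2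
  simp only [ContinuousLinearMap.sub_apply, L1_apply, L2_apply, Prod.norm_def, Prod.mk_sub_mk,
    sub_zero, zero_sub, norm_neg, Real.norm_eq_abs, one_mul]
  exact max_le h2 h1

theorem norm_comp_clm_le {G : Type} [NormedAddCommGroup G] [NormedSpace ℝ G]
    {L : (P2 →L[ℝ] ℝ) →L[ℝ] P2} (hL : ‖L‖ ≤ 1) (A : G →L[ℝ] (P2 →L[ℝ] ℝ)) :
    ‖L.comp A‖ ≤ ‖A‖ :=
  (L.opNorm_comp_le A).trans (mul_le_of_le_one_left (norm_nonneg _) hL)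

/-- A small function `w` generates a symplectic diffeomorphism `Φ` through
`Φ (x, y + ∂ₓw) = (x + ∂_y w, y)`, which is close to the identity when `w` is small. -/
theorem gen_diffeo (r : ℕ) (hr : 1 ≤ r) : ∃ C : ℝ, 1 ≤ C ∧ ∀ (n : ℕ∞), (r : ℕ∞) ≤ n →
    ∀ (w : P2 → ℝ) (M : ℝ), ContDiff ℝ (n + 1) w → CB univ (r + 1) M w → M ≤ 1 / 2 →
    ∃ Φ : PlaneDiffeo n, Φ.Symplectic ∧ CB univ r (C * M) (fun z => Φ.toFun z - z) ∧
      ∀ z : P2, Φ.toFun (z.1, z.2 + fderiv ℝ w z (1, 0)) = (z.1 + fderiv ℝ w z (0, 1), z.2) := by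
  obtain ⟨C, hC1, hC⟩ := comp_inverse_bound (E := P2) (F := P2) r
  refine ⟨C, hC1, ?_⟩
  intro n hrn w M hw hwM hM
  have hn0 : (n : ℕ∞ω) ≠ 0 := by
    have : (1 : ℕ∞) ≤ n := le_trans (by exact_mod_cast hr) hrn
    intro h
    have h' : n = 0 := by exact_mod_cast h
    rw [h'] at this
    simp at this
  have hrn' : (r : ℕ∞ω) ≤ n := by exact_mod_cast hrn
  have hdw : ContDiff ℝ n (fderiv ℝ w) := hw.fderiv_right le_rfl
  have hD : Differentiable ℝ (fderiv ℝ w) := hdw.differentiable hn0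
  have hdB : CB univ r M (fderiv ℝ w) := hwM.fderiv
  have hM0 : 0 ≤ M := (norm_nonneg _).trans (hdB 0 (Nat.zero_le _) 0 (mem_univ _))
  have hdd : ∀ z, ‖fderiv ℝ (fderiv ℝ w) z‖ ≤ 1 / 2 := fun z =>
    (hdB.norm_fderiv_le hr (mem_univ z)).trans hM
  have hfd : ∀ (L : (P2 →L[ℝ] ℝ) →L[ℝ] P2) (z : P2),
      HasFDerivAt (fun z => L (fderiv ℝ w z)) (L.comp (fderiv ℝ (fderiv ℝ w) z)) z :=
    fun L z => L.hasFDerivAt.comp z (hD z).hasFDerivAt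
  have hhalf : ∀ (L : (P2 →L[ℝ] ℝ) →L[ℝ] P2), ‖L‖ ≤ 1 →
      ∀ z, ‖fderiv ℝ (fun z => L (fderiv ℝ w z)) z‖ ≤ 1 / 2 := fun L hL z => by
    rw [(hfd L z).fderiv]
    exact (norm_comp_clm_le hL _).trans (hdd z)
  have hcd : ∀ (L : (P2 →L[ℝ] ℝ) →L[ℝ] P2), ContDiff ℝ n (fun z => L (fderiv ℝ w z)) :=
    fun L => L.contDiff.comp hdw
  have hcb : ∀ (L : (P2 →L[ℝ] ℝ) →L[ℝ] P2), ‖L‖ ≤ 1 → CB univ r M (fun z => L (fderiv ℝ w z)) :=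
    fun L hL => (hdB.comp_left L (hdw.of_le hrn')).mono subset_rfl le_rfl
      (mul_le_of_le_one_left hM0 hL)
  obtain ⟨G, hG, hG1, hG2⟩ := exists_inverse hn0 (hcd L1) (hhalf L1 norm_L1_le)
  obtain ⟨H, hH, hH1, hH2⟩ := exists_inverse hn0 (hcd L2) (hhalf L2 norm_L2_le)
  let Φ : PlaneDiffeo n :=
    { toFun := fun z => G z + L2 (fderiv ℝ w (G z))
      invFun := fun z => H z + L1 (fderiv ℝ w (H z))
      left_inv := fun z => by simp only [hH1, hG2]
      right_inv := fun z => by simp only [hG1, hH2]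
      contDiff := hG.add ((hcd L2).comp hG)
      contDiff_inv := hH.add ((hcd L1).comp hH) }
  have hΦ : ∀ z, Φ.toFun (z + L1 (fderiv ℝ w z)) = z + L2 (fderiv ℝ w z) := fun z => by
    change G _ + L2 (fderiv ℝ w (G _)) = _
    rw [hG1]
  refine ⟨Φ, ?_, ?_, ?_⟩
  · intro y
    obtain ⟨z, rfl⟩ : ∃ z, z + L1 (fderiv ℝ w z) = y := ⟨G y, hG2 y⟩
    have h1 : HasFDerivAt (fun z => z + L1 (fderiv ℝ w z)) _ z := (hasFDerivAt_id z).add (hfd L1 z)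
    have h2 : HasFDerivAt (fun z => z + L2 (fderiv ℝ w z)) _ z := (hasFDerivAt_id z).add (hfd L2 z)
    have h3 := (Φ.contDiff.differentiable hn0 (z + L1 (fderiv ℝ w z))).hasFDerivAt.comp z h1
    have h4 : Φ.toFun ∘ (fun z => z + L1 (fderiv ℝ w z)) = fun z => z + L2 (fderiv ℝ w z) :=
      funext hΦ
    rw [h4] at h3
    have h5 := congrArg ContinuousLinearMap.det (h3.unique h2)
    rw [det_comp_P2] at h5
    set A := fderiv ℝ (fderiv ℝ w) z with hA
    have hsym : A (1, 0) (0, 1) = A (0, 1) (1, 0) := by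
      have hws : IsSymmSndFDerivAt ℝ w z :=
        (hw.contDiffAt).isSymmSndFDerivAt (by
          simp only [minSmoothness_of_isRCLikeNormedField]
          have : (1 : ℕ∞) ≤ n := le_trans (by exact_mod_cast hr) hrn
          have h1 : (1 : ℕ∞ω) ≤ n := by exact_mod_cast this
          calc (2 : ℕ∞ω) = 1 + 1 := by norm_num
            _ ≤ _ := by gcongr)
      exact hws (1, 0) (0, 1)
    have e1 : (ContinuousLinearMap.id ℝ P2 + L1.comp A).det = 1 + A (0, 1) (1, 0) := by
      rw [det_P2]; simp
    have e2 : (ContinuousLinearMap.id ℝ P2 + L2.comp A).det = 1 + A (0, 1) (1, 0) := by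
      rw [det_P2]; simp [hsym]
    rw [e1, e2] at h5
    have hpos : 0 < 1 + A (0, 1) (1, 0) := by
      have h6 : |A (0, 1) (1, 0)| ≤ 1 / 2 := by
        refine (abs_clm_le _ norm_e1).trans ?_
        refine (A.le_opNorm _).trans ?_
        have := hdd z
        have := norm_e2
        nlinarith [norm_nonneg A]
      linarith [neg_abs_le (A (0, 1) (1, 0))]
    exact mul_right_cancel₀ hpos.ne' (by rw [one_mul]; exact h5)
  · have hmain := hC (fun z => L1 (fderiv ℝ w z)) G (fun z => (L2 - L1) (fderiv ℝ w z)) M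
      ((hcd L1).of_le hrn') (hG.of_le hrn') ((hcd (L2 - L1)).of_le hrn') hG2
      ((hcb L1 norm_L1_le).mono subset_rfl le_rfl (hM.trans (by norm_num)))
      (hhalf L1 norm_L1_le) (hcb (L2 - L1) norm_L21_le)
    have : (fun z => Φ.toFun z - z) = (fun z => (L2 - L1) (fderiv ℝ w z)) ∘ G := by
      funext z
      have hz := hG2 z
      change G z + L2 (fderiv ℝ w (G z)) - z = L2 (fderiv ℝ w (G z)) - L1 (fderiv ℝ w (G z))
      nth_rewrite 3 [← hz]
      abel
    rw [this]
    exact hmain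
  · intro z
    have h := hΦ z
    simp only [L1_apply, L2_apply] at h
    have e1 : z + (0, fderiv ℝ w z (1, 0)) = (z.1, z.2 + fderiv ℝ w z (1, 0)) := by
      ext <;> simp
    have e2 : z + (fderiv ℝ w z (0, 1), 0) = (z.1 + fderiv ℝ w z (0, 1), z.2) := by
      ext <;> simp
    rw [e1, e2] at h
    exact h

/-! ### Extension of local symplectic maps -/

/-- A version of the Poincaré lemma: a `1`-form with symmetric derivative on a ball has a
potential there. -/
theorem exists_potential {N : P2 → P2 →L[ℝ] ℝ} (hN : ContDiff ℝ ∞ N) :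
    ∃ w : P2 → ℝ, ContDiff ℝ ∞ w ∧
      (∀ z M, (∀ z, ‖N z‖ ≤ M) → |w z| ≤ M * ‖z‖) ∧
      ∀ R > 0, (∀ z ∈ Metric.ball (0 : P2) R, ∀ h k, fderiv ℝ N z h k = fderiv ℝ N z k h) →
        ∀ z ∈ Metric.ball (0 : P2) R, HasFDerivAt w (N z) z := by
  have hf : ContDiff ℝ ∞ (fun p : ℝ × P2 => N (p.1 • p.2) p.2) := by fun_prop
  refine ⟨fun z => ∫ t in (0:ℝ)..1, N (t • z) z, ?_, ?_, ?_⟩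
  · exact contDiff_integral_param (n := ⊤) (f := fun t (z : P2) => N (t • z) z) hf
  · intro z M hM
    have := intervalIntegral.norm_integral_le_of_norm_le_const (a := 0) (b := 1)
      (f := fun t : ℝ => N (t • z) z) (C := M * ‖z‖) (fun t _ => by
        refine ((N (t • z)).le_opNorm z).trans ?_
        gcongr
        exact hM _)
    simpa using this
  · intro R hR hsym z hz
    have h1 := hasFDerivAt_integral_param (f := fun t (z : P2) => N (t • z) z)
      (hf.of_le (by simp)) z
    have hdiff : Differentiable ℝ N := hN.differentiable (by simp)
    have hdc : Continuous (fderiv ℝ N) := hN.continuous_fderiv (by simp)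
    have hfd : ∀ t : ℝ, ∀ h : P2, fderiv ℝ (fun z : P2 => N (t • z) z) z h =
        t * fderiv ℝ N (t • z) h z + N (t • z) h := by
      intro t h
      have e1 : HasFDerivAt (fun z : P2 => N (t • z))
          ((fderiv ℝ N (t • z)).comp (t • ContinuousLinearMap.id ℝ P2)) z :=
        (hdiff (t • z)).hasFDerivAt.comp z ((hasFDerivAt_id z).const_smul t)
      have e2 : HasFDerivAt (fun z : P2 => N (t • z) z) _ z := e1.clm_apply (hasFDerivAt_id z)
      rw [e2.fderiv]
      simp [add_comm]
    have hint : Continuous fun t : ℝ => fderiv ℝ (fun z : P2 => N (t • z) z) z := by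
      have h0 : ContDiff ℝ 1 (Function.uncurry fun (t : ℝ) (z : P2) => N (t • z) z) :=
        hf.of_le (by simp)
      have := ContDiff.fderiv (n := 0) (g := fun _ : ℝ => z) h0 contDiff_const (by norm_num)
      exact this.continuous
    refine h1.congr_fderiv (ContinuousLinearMap.ext fun h => ?_)
    rw [ContinuousLinearMap.intervalIntegral_apply (hint.intervalIntegrable _ _)]
    have hder : ∀ t ∈ uIcc (0:ℝ) 1, HasDerivAt (fun t : ℝ => t * N (t • z) h)
        (fderiv ℝ (fun z : P2 => N (t • z) z) z h) t := by
      intro t ht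
      rw [uIcc_of_le zero_le_one] at ht
      have hmem : t • z ∈ Metric.ball (0 : P2) R := by
        rw [mem_ball_zero_iff] at hz ⊢
        rw [norm_smul, Real.norm_eq_abs, abs_of_nonneg ht.1]
        nlinarith [ht.1, ht.2, norm_nonneg z]
      have e0 : HasDerivAt (fun t : ℝ => t • z) z t := by
        simpa using (hasDerivAt_id t).smul_const z
      have e1 : HasDerivAt (fun t : ℝ => N (t • z)) (fderiv ℝ N (t • z) z) t :=
        (hdiff (t • z)).hasFDerivAt.comp_hasDerivAt t e0
      have e2 : HasDerivAt (fun t : ℝ => N (t • z) h) (fderiv ℝ N (t • z) z h) t := by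
        simpa using e1.clm_apply (hasDerivAt_const t h)
      have e3 : HasDerivAt (fun t : ℝ => t * N (t • z) h) _ t := (hasDerivAt_id t).mul e2
      refine e3.congr_deriv ?_
      rw [hfd, hsym _ hmem h z]
      simp [add_comm]
    rw [intervalIntegral.integral_eq_sub_of_hasDerivAt hder
      ((hint.clm_apply continuous_const).intervalIntegrable _ _)]
    simp

/-- Multiplying by a fixed bump function turns local `C^r` bounds into global ones. -/
theorem CB.cutoff {E F : Type} [NormedAddCommGroup E] [NormedSpace ℝ E] [FiniteDimensional ℝ E]
    [NormedAddCommGroup F] [NormedSpace ℝ F] {c : E} (χ : ContDiffBump c) (r : ℕ) :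
    ∃ C : ℝ, 1 ≤ C ∧ ∀ (f : E → F) (M : ℝ), ContDiff ℝ r f →
      CB (Metric.closedBall c χ.rOut) r M f → CB univ r (C * M) (fun z => χ z • f z) := by
  obtain ⟨K, hK1, hK⟩ := CB.of_compact (isCompact_closedBall c χ.rOut)
    (χ.contDiff (n := r))
  refine ⟨2 ^ r * K, one_le_mul_of_one_le_of_one_le (one_le_pow₀ (by norm_num)) hK1, ?_⟩
  intro f M hf hM i hi x _
  have hM0 : 0 ≤ M := (norm_nonneg _).trans (hM 0 (Nat.zero_le _) c
    (Metric.mem_closedBall_self χ.rOut_pos.le))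
  by_cases hx : x ∈ Metric.closedBall c χ.rOut
  · refine CB.bilin (ContinuousLinearMap.lsmul ℝ ℝ) ?_ hK hM (by linarith) χ.contDiff hf i hi x hx
    exact ContinuousLinearMap.opNorm_lsmul_le
  · have h0 : (fun z => χ z • f z) =ᶠ[𝓝 x] fun _ => (0 : F) := by
      filter_upwards [Metric.isClosed_closedBall.isOpen_compl.mem_nhds hx] with z hz
      rw [χ.zero_of_le_dist, zero_smul]
      rw [mem_compl_iff, Metric.mem_closedBall, not_le] at hz
      exact hz.le
    exact CB.congr (s := {x}) (r := i) (CB.const (c := (0:F)) (by simp; positivity))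
      (by simpa using h0) i le_rfl x rfl

/-- The linear map `v ↦ (0, v₂)`. -/
noncomputable def Lv : P2 →L[ℝ] P2 :=
  (0 : P2 →L[ℝ] ℝ).prod (ContinuousLinearMap.snd ℝ ℝ ℝ)

@[simp] theorem Lv_apply (v : P2) : Lv v = (0, v.2) := rfl

theorem norm_Lv_le : ‖Lv‖ ≤ 1 := by
  refine ContinuousLinearMap.opNorm_le_bound _ zero_le_one fun v => ?_
  simp [Prod.norm_def]

/-- The contraction of the area form, `v ↦ (h ↦ v₁ h₂ - v₂ h₁)`. -/
noncomputable def LJ : P2 →L[ℝ] (P2 →L[ℝ] ℝ) :=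
  (ContinuousLinearMap.fst ℝ ℝ ℝ).smulRight (ContinuousLinearMap.snd ℝ ℝ ℝ) -
    (ContinuousLinearMap.snd ℝ ℝ ℝ).smulRight (ContinuousLinearMap.fst ℝ ℝ ℝ)

@[simp] theorem LJ_apply (v h : P2) : LJ v h = v.1 * h.2 - v.2 * h.1 := by
  simp [LJ]

/-- A symplectic map which is close to the identity on a large ball coincides on a smaller ball with
a global symplectic diffeomorphism close to the identity: the local generating function is cut off
by a bump function. -/
theorem exists_extension (r : ℕ) (hr : 1 ≤ r) (R : ℝ) (hR : 0 < R) :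
    ∃ C : ℝ, 1 ≤ C ∧ ∃ ε₀ > 0, ∀ φ : P2 → P2, ContDiff ℝ ∞ φ → (∀ z, (fderiv ℝ φ z).det = 1) →
      ∀ M ≤ ε₀, CB (Metric.closedBall 0 (R + 4)) r M (fun z => φ z - z) →
      ∃ Φ : PlaneDiffeo ⊤, Φ.Symplectic ∧ CB univ r (C * M) (fun z => Φ.toFun z - z) ∧
        ∀ z ∈ Metric.ball (0 : P2) R, Φ.toFun z = φ z := by
  let χ : ContDiffBump (0 : P2) := ⟨R + 3, R + 4, by linarith, by linarith⟩
  let χ' : ContDiffBump (0 : P2) := ⟨R + 1, R + 3 / 2, by linarith, by linarith⟩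
  obtain ⟨C1, hC1, hχ⟩ := CB.cutoff (F := P2) χ r
  obtain ⟨C2, hC2, hinvb⟩ := comp_inverse_bound (E := P2) (F := P2 →L[ℝ] ℝ) r
  obtain ⟨C3, hC3, hχ'⟩ := CB.cutoff (F := ℝ) χ' (r + 1)
  obtain ⟨C4, hC4, hgen⟩ := gen_diffeo r hr
  set Λ : ℝ := ‖LJ‖ + 1
  have hΛ : 1 ≤ Λ := by have := norm_nonneg LJ; simp only [Λ]; linarith
  -- the size of the form `N` below is `K * M`, that of its potential `(R + 2) * (K * M)`
  set K : ℝ := C2 * (Λ * C1)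
  have hK : 1 ≤ K := one_le_mul_of_one_le_of_one_le hC2 (one_le_mul_of_one_le_of_one_le hΛ hC1)
  set K' : ℝ := C3 * ((R + 2) * K)
  have hK' : 1 ≤ K' := one_le_mul_of_one_le_of_one_le hC3
    (one_le_mul_of_one_le_of_one_le (by linarith) hK)
  refine ⟨C4 * K', one_le_mul_of_one_le_of_one_le hC4 hK', min (1 / (2 * C1)) (1 / (2 * K')),
    by positivity, ?_⟩
  intro φ hφ hdet M hM hCB
  have hM0 : 0 ≤ M := (norm_nonneg _).trans (hCB 0 (Nat.zero_le _) 0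
    (Metric.mem_closedBall_self (by linarith)))
  have hM1 : C1 * M ≤ 1 / 2 := by
    have := hM.trans (min_le_left _ _)
    rw [le_div_iff₀ (by positivity)] at this
    linarith
  have hM2 : K' * M ≤ 1 / 2 := by
    have := hM.trans (min_le_right _ _)
    rw [le_div_iff₀ (by positivity)] at this
    linarith
  have hsub : ContDiff ℝ ∞ (fun z => φ z - z) := hφ.sub contDiff_id
  set Δ : P2 → P2 := fun z => χ z • (φ z - z) with hΔdef
  have hΔ : ContDiff ℝ ∞ Δ := χ.contDiff.smul hsub
  have hΔB : CB univ r (C1 * M) Δ := hχ _ _ (hsub.of_le (by exact_mod_cast le_top)) hCB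
  have hrtop : (r : ℕ∞ω) ≤ (∞ : ℕ∞ω) := by exact_mod_cast le_top
  have hΔeq : ∀ z ∈ Metric.closedBall (0 : P2) (R + 3), Δ z = φ z - z := fun z hz => by
    simp only [hΔdef]
    rw [χ.one_of_mem_closedBall hz, one_smul]
  have hΔdiff : Differentiable ℝ Δ := hΔ.differentiable (by simp)
  have hvcd : ContDiff ℝ ∞ (fun z => Lv (Δ z)) := Lv.contDiff.comp hΔ
  have hvB : CB univ r (C1 * M) (fun z => Lv (Δ z)) :=
    (hΔB.comp_left Lv (hΔ.of_le hrtop)).mono subset_rfl le_rfl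
      (mul_le_of_le_one_left (by positivity) norm_Lv_le)
  have hvhalf : ∀ z, ‖fderiv ℝ (fun z => Lv (Δ z)) z‖ ≤ 1 / 2 := fun z =>
    (hvB.norm_fderiv_le hr (mem_univ z)).trans hM1
  obtain ⟨G, hG, hG1, hG2⟩ := exists_inverse (by simp) hvcd hvhalf
  set N : P2 → P2 →L[ℝ] ℝ := (fun z => LJ (Δ z)) ∘ G with hNdef
  have hLJ : ContDiff ℝ ∞ (fun z => LJ (Δ z)) := LJ.contDiff.comp hΔ
  have hN : ContDiff ℝ ∞ N := hLJ.comp hG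
  have hNB : CB univ r (K * M) N := by
    have h1 : CB univ r (Λ * (C1 * M)) (fun z => LJ (Δ z)) :=
      (hΔB.comp_left LJ (hΔ.of_le hrtop)).mono subset_rfl le_rfl (by
        gcongr; simp only [Λ]; linarith)
    have h2 := hinvb _ G _ _ (hvcd.of_le hrtop) (hG.of_le hrtop) (hLJ.of_le hrtop) hG2
      (hvB.mono subset_rfl le_rfl (hM1.trans (by norm_num))) hvhalf h1
    exact h2.mono subset_rfl le_rfl (by simp only [K]; linarith)
  obtain ⟨w, hw, hwM, hwD⟩ := exists_potential hN
  have hsymm : ∀ y ∈ Metric.ball (0 : P2) (R + 2), ∀ h k,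
      fderiv ℝ N y h k = fderiv ℝ N y k h := by
    intro y hy
    obtain ⟨z, rfl⟩ : ∃ z, z + Lv (Δ z) = y := ⟨G y, hG2 y⟩
    have hz : z ∈ Metric.ball (0 : P2) (R + 3) := by
      rw [mem_ball_zero_iff] at hy ⊢
      have h1 := hvB.norm_le (mem_univ z)
      have h2 : ‖z‖ ≤ ‖z + Lv (Δ z)‖ + ‖Lv (Δ z)‖ := by
        simpa using norm_sub_le (z + Lv (Δ z)) (Lv (Δ z))
      linarith
    have hloc : Δ =ᶠ[𝓝 z] fun z => φ z - z := by
      filter_upwards [Metric.isOpen_ball.mem_nhds hz] with z hz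
      exact hΔeq z (Metric.ball_subset_closedBall hz)
    have hφd : HasFDerivAt φ (fderiv ℝ φ z) z := (hφ.differentiable (by simp) z).hasFDerivAt
    have hDΔ : fderiv ℝ Δ z = fderiv ℝ φ z - ContinuousLinearMap.id ℝ P2 := by
      rw [hloc.fderiv_eq]
      exact (hφd.sub (hasFDerivAt_id z)).fderiv
    have hΔd := (hΔdiff z).hasFDerivAt
    have h1 : HasFDerivAt (fun z => z + Lv (Δ z))
        (ContinuousLinearMap.id ℝ P2 + Lv.comp (fderiv ℝ Δ z)) z :=
      (hasFDerivAt_id z).add (Lv.hasFDerivAt.comp z hΔd)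
    have h2 := (hN.differentiable (by simp) (z + Lv (Δ z))).hasFDerivAt.comp z h1
    have h3 : N ∘ (fun z => z + Lv (Δ z)) = fun z => LJ (Δ z) := by
      funext z
      simp only [hNdef, Function.comp_apply, hG1]
    rw [h3] at h2
    have h4 := h2.unique (LJ.hasFDerivAt.comp z hΔd)
    set A := fderiv ℝ N (z + Lv (Δ z))
    have hdz := hdet z
    rw [det_P2] at hdz
    have hb : |(fderiv ℝ Δ z (0, 1)).2| ≤ 1 / 2 := by
      have e1 := (fderiv ℝ Δ z).le_opNorm (0, 1)
      have e2 := (hΔB.norm_fderiv_le hr (mem_univ z)).trans hM1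
      have e3 : |(fderiv ℝ Δ z (0, 1)).2| ≤ ‖fderiv ℝ Δ z (0, 1)‖ := by
        rw [← Real.norm_eq_abs]; exact norm_snd_le _
      have e4 := norm_e2
      nlinarith [norm_nonneg (fderiv ℝ Δ z)]
    rw [hDΔ] at h4 hb
    set a := (fderiv ℝ φ z (1, 0)).1
    set b := (fderiv ℝ φ z (0, 1)).1
    set c := (fderiv ℝ φ z (1, 0)).2
    set d := (fderiv ℝ φ z (0, 1)).2
    have hb' : |d - 1| ≤ 1 / 2 := by simpa using hb
    have hd : 0 < d := by have := abs_le.1 hb'; linarith [this.1]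
    have hA : ∀ p q : ℝ, ∀ k, A (p, q) k = p * A (1, 0) k + q * A (0, 1) k := fun p q k => by
      rw [clm_P2_apply A (p, q)]; simp
    have g1 : c * A (0, 1) (0, 1) + A (1, 0) (0, 1) = a - 1 := by
      have := congrArg (fun L => L (1, 0) (0, 1)) h4
      simp only [ContinuousLinearMap.comp_apply, add_apply,
        sub_apply, ContinuousLinearMap.id_apply, Lv_apply, LJ_apply,
        Prod.mk_add_mk, Prod.fst_sub, Prod.snd_sub] at this
      rw [hA] at this
      simp only [a, c]
      linarith
    have g2 : d * A (0, 1) (0, 1) = b := by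
      have := congrArg (fun L => L (0, 1) (0, 1)) h4
      simp only [ContinuousLinearMap.comp_apply, add_apply,
        sub_apply, ContinuousLinearMap.id_apply, Lv_apply, LJ_apply,
        Prod.mk_add_mk, Prod.fst_sub, Prod.snd_sub] at this
      rw [hA] at this
      simp only [b, d]
      linarith
    have g3 : d * A (0, 1) (1, 0) = -(d - 1) := by
      have := congrArg (fun L => L (0, 1) (1, 0)) h4
      simp only [ContinuousLinearMap.comp_apply, add_apply,
        sub_apply, ContinuousLinearMap.id_apply, Lv_apply, LJ_apply,
        Prod.mk_add_mk, Prod.fst_sub, Prod.snd_sub] at this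
      rw [hA] at this
      simp only [d]
      linarith
    have g4 : A (1, 0) (0, 1) = A (0, 1) (1, 0) := by
      apply mul_left_cancel₀ hd.ne'
      have : A (1, 0) (0, 1) = a - 1 - c * A (0, 1) (0, 1) := by linarith
      rw [this, g3]
      have : d * (a - 1 - c * A (0, 1) (0, 1)) = d * a - d - c * (d * A (0, 1) (0, 1)) := by ring
      rw [this, g2]
      linarith
    intro h k
    obtain ⟨h1, h2⟩ := h
    obtain ⟨k1, k2⟩ := k
    rw [hA h1 h2, hA k1 k2, clm_P2_apply (A (1, 0)) (k1, k2), clm_P2_apply (A (0, 1)) (k1, k2),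
      clm_P2_apply (A (1, 0)) (h1, h2), clm_P2_apply (A (0, 1)) (h1, h2), g4]
    simp only [smul_eq_mul]
    ring
  have hwD' := hwD (R + 2) (by linarith) hsymm
  have hwf : ∀ z ∈ Metric.ball (0 : P2) (R + 2), fderiv ℝ w z = N z := fun z hz =>
    (hwD' z hz).fderiv
  have hsub32 : Metric.closedBall (0 : P2) (R + 3 / 2) ⊆ Metric.ball 0 (R + 2) :=
    Metric.closedBall_subset_ball (by linarith)
  have hKM : K * M ≤ (R + 2) * (K * M) := le_mul_of_one_le_left (by positivity) (by linarith)
  have hwB : CB (Metric.closedBall 0 (R + 3 / 2)) (r + 1) ((R + 2) * (K * M)) w := by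
    refine CB.of_fderiv (fun z hz => ?_) ?_
    · have h1 := hwM z (K * M) fun z => hNB.norm_le (mem_univ z)
      rw [mem_closedBall_zero_iff] at hz
      rw [Real.norm_eq_abs]
      nlinarith [norm_nonneg z, (by positivity : 0 ≤ K * M)]
    · refine ((hNB.mono (subset_univ _) le_rfl hKM).congr fun z hz => ?_)
      filter_upwards [Metric.isOpen_ball.mem_nhds (hsub32 hz)] with z hz
      exact hwf z hz
  have hwt := hχ' w _ (hw.of_le (by exact_mod_cast le_top)) hwB
  obtain ⟨Φ, hΦs, hΦB, hΦ⟩ := hgen ⊤ le_top (fun z => χ' z • w z) (K' * M)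
    (χ'.contDiff.smul hw) (hwt.mono subset_rfl le_rfl (by simp only [K']; linarith)) hM2
  refine ⟨Φ, hΦs, hΦB.mono subset_rfl le_rfl (by linarith), ?_⟩
  intro z hz
  rw [mem_ball_zero_iff] at hz
  have h1 : z + Lv (Δ z) ∈ Metric.ball (0 : P2) (R + 1) := by
    rw [mem_ball_zero_iff]
    have h1 := hvB.norm_le (mem_univ z)
    have := norm_add_le z (Lv (Δ z))
    linarith
  have h2 : fderiv ℝ (fun z => χ' z • w z) (z + Lv (Δ z)) = LJ (φ z - z) := by
    have e1 : (fun z => χ' z • w z) =ᶠ[𝓝 (z + Lv (Δ z))] w := by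
      filter_upwards [Metric.isOpen_ball.mem_nhds h1] with y hy
      rw [χ'.one_of_mem_closedBall (Metric.ball_subset_closedBall hy), one_smul]
    rw [e1.fderiv_eq, hwf _ (Metric.ball_subset_ball (by linarith) h1)]
    simp only [hNdef, Function.comp_apply, hG1]
    rw [hΔeq z]
    rw [mem_closedBall_zero_iff]; linarith
  have h3 := hΦ (z + Lv (Δ z))
  rw [h2, hΔeq z (by rw [mem_closedBall_zero_iff]; linarith)] at h3
  have e1 : (((z + Lv (φ z - z)).1, (z + Lv (φ z - z)).2 + LJ (φ z - z) (1, 0)) : P2) = z := by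
    ext <;> simp
  have e2 : (((z + Lv (φ z - z)).1 + LJ (φ z - z) (0, 1), (z + Lv (φ z - z)).2) : P2) = φ z := by
    ext <;> simp
  rw [e1, e2] at h3
  exact h3

/-- Precomposition by a `C^r`-small perturbation of the identity supported in a fixed compact set
is a `C^r`-small perturbation. -/
theorem comp_sub_bound {E F : Type} [NormedAddCommGroup E] [NormedSpace ℝ E]
    [FiniteDimensional ℝ E] [NormedAddCommGroup F] [NormedSpace ℝ F] [CompleteSpace F]
    {f : E → F} (hf : ContDiff ℝ ∞ f) {K : Set E} (hK : IsCompact K) (r : ℕ) :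
    ∃ C : ℝ, 1 ≤ C ∧ ∀ (κ : E → E) (M : ℝ), ContDiff ℝ r κ → M ≤ 1 → CB univ r M κ →
      (∀ x ∉ K, κ x = 0) → CB univ r (C * M) (fun x => f (x + κ x) - f x) := by
  obtain ⟨e, he, hef, -⟩ := exists_hadamard (n := r) (f := f)
    (hf.of_le (by exact_mod_cast le_top))
  obtain ⟨C1, hC1, h1⟩ := CB.of_compact (hK.prod (isCompact_closedBall (0 : E) 1)) he
  obtain ⟨C2, hC2, h2⟩ := CB.of_compact (r := r) hK (contDiff_id (𝕜 := ℝ) (E := E))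
  refine ⟨2 ^ r * (r.factorial * C1 * (C2 + 1) ^ r), ?_, ?_⟩
  · refine one_le_mul_of_one_le_of_one_le (one_le_pow₀ (by norm_num)) ?_
    refine one_le_mul_of_one_le_of_one_le (one_le_mul_of_one_le_of_one_le ?_ hC1)
      (one_le_pow₀ (by linarith))
    exact_mod_cast Nat.one_le_iff_ne_zero.2 r.factorial_ne_zero
  intro κ M hκ hM hB hoff i hi x _
  have hM0 : 0 ≤ M := (norm_nonneg _).trans (hB 0 (Nat.zero_le _) 0 (mem_univ _))
  by_cases hx : x ∈ K
  · have hid : ContDiff ℝ r (fun x : E => x) := contDiff_id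
    have hp : CB K r (C2 + 1) (fun x => (x, κ x)) :=
      (CB.prodMk (f := fun x => x) h2 (hB.mono (subset_univ K) le_rfl hM) hid hκ)
    have hc : CB K r (r.factorial * C1 * (C2 + 1) ^ r) (e ∘ fun x => (x, κ x)) := by
      refine h1.comp he (hid.prodMk hκ) ?_ (by linarith) (by linarith) fun i _ hi x hx => hp i hi x hx
      intro y hy
      refine ⟨hy, ?_⟩
      rw [mem_closedBall_zero_iff]
      exact (hB.norm_le (mem_univ y)).trans hM
    have := hc.clm_apply (hB.mono (subset_univ K) le_rfl le_rfl) (by positivity)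
      (he.comp (hid.prodMk hκ)) hκ
    refine this.congr (fun x _ => ?_) i hi x hx
    exact Eventually.of_forall fun y => hef y (κ y)
  · have h0 : (fun x => f (x + κ x) - f x) =ᶠ[𝓝 x] fun _ => (0 : F) := by
      filter_upwards [hK.isClosed.isOpen_compl.mem_nhds hx] with z hz
      rw [hoff z hz, add_zero, sub_self]
    exact CB.congr (s := {x}) (r := i) (CB.const (c := (0:F)) (by simp; positivity))
      (by simpa using h0) i le_rfl x rfl

/-- The compositions `(id + h (k-1)) ∘ ⋯ ∘ (id + h 0)`. -/
def compAdd {E : Type} [NormedAddCommGroup E] (h : ℕ → E → E) : ℕ → E → E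
  | 0 => id
  | k + 1 => fun x => compAdd h k x + h k (compAdd h k x)

theorem compAdd_contDiff {E : Type} [NormedAddCommGroup E] [NormedSpace ℝ E] {r : ℕ∞ω}
    {h : ℕ → E → E} (hh : ∀ j, ContDiff ℝ r (h j)) (k : ℕ) : ContDiff ℝ r (compAdd h k) := by
  induction k with
  | zero => exact contDiff_id
  | succ k ih => exact ih.add ((hh k).comp ih)

/-- A long composition of near-identity maps, the sum of whose distances to the identity is small,
is close to the identity. -/
theorem compAdd_bound {E : Type} [NormedAddCommGroup E] [NormedSpace ℝ E] {r : ℕ}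
    {h : ℕ → E → E} (hh : ∀ j, ContDiff ℝ r (h j)) {w : ℕ → ℝ} (k : ℕ)
    (hB : ∀ j < k, CB (Metric.ball 0 2) r (w j) (h j))
    (hw : r.factorial * 2 ^ r * ∑ j ∈ Finset.range k, w j ≤ 1) :
    CB (Metric.ball 0 1) r (r.factorial * 2 ^ r * ∑ j ∈ Finset.range k, w j)
      (fun x => compAdd h k x - x) := by
  induction k with
  | zero =>
    have : (fun x : E => compAdd h 0 x - x) = fun _ => 0 := by ext1 x; simp [compAdd]
    rw [this]
    exact CB.const (by simp)
  | succ k ih =>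
    have hw0 : 0 ≤ w k := (norm_nonneg _).trans (hB k (by omega) 0 (Nat.zero_le _) 0 (by simp))
    rw [Finset.sum_range_succ] at hw ⊢
    have hle : r.factorial * 2 ^ r * ∑ j ∈ Finset.range k, w j ≤ 1 := by
      refine le_trans ?_ hw
      gcongr
      linarith
    have ih' := ih (fun j hj => hB j (by omega)) hle
    have hG := compAdd_contDiff hh k
    have hid : ContDiff ℝ r (fun x : E => x) := contDiff_id
    have hmaps : MapsTo (compAdd h k) (Metric.ball 0 1) (Metric.ball 0 2) := by
      intro x hx
      have h1 := ih'.norm_le hx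
      rw [mem_ball_zero_iff] at hx ⊢
      have h2 : ‖compAdd h k x‖ ≤ ‖compAdd h k x - x‖ + ‖x‖ := by
        simpa using norm_add_le (compAdd h k x - x) x
      linarith
    have hD : ∀ i, 1 ≤ i → i ≤ r → ∀ x ∈ Metric.ball (0 : E) 1,
        ‖iteratedFDeriv ℝ i (compAdd h k) x‖ ≤ 2 := by
      intro i hi1 hi x hx
      have hi' : (i : ℕ∞ω) ≤ r := by exact_mod_cast hi
      have e : compAdd h k = fun x => (compAdd h k x - x) + x := by ext1 x; simp
      have e2 : iteratedFDeriv ℝ i (compAdd h k) x =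
          iteratedFDeriv ℝ i (fun x => compAdd h k x - x) x +
            iteratedFDeriv ℝ i (fun x : E => x) x := by
        conv_lhs => rw [e]
        exact iteratedFDeriv_add_apply ((hG.sub hid).contDiffAt.of_le hi')
          (hid.contDiffAt.of_le hi')
      rw [e2]
      refine (norm_add_le _ _).trans ?_
      have h3 := ih' i hi x hx
      have h4 := (CB.iteratedFDeriv_clm (ContinuousLinearMap.id ℝ E) i hi1 x).trans
        ContinuousLinearMap.norm_id_le
      simp only [ContinuousLinearMap.id_apply] at h4
      linarith
    have h5 := (hB k (by omega)).comp (hh k) hG hmaps (by norm_num) hw0 hD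
    have h6 := ih'.add h5 (hG.sub hid) ((hh k).comp hG)
    have e3 : (fun x => compAdd h (k + 1) x - x) =
        fun x => (compAdd h k x - x) + (h k ∘ compAdd h k) x := by
      ext1 x; simp only [compAdd, Function.comp_apply]; abel
    rw [e3]
    exact h6.mono subset_rfl le_rfl (by linarith)

/-! ### Superposition operators on bounded sequences -/

section Nem

set_option linter.unusedSectionVars false

variable {E G : Type} [NormedAddCommGroup E] [NormedSpace ℝ E]
  [NormedAddCommGroup G] [NormedSpace ℝ G]

theorem exists_bound_comp [FiniteDimensional ℝ E] {g : E → G} (hg : Continuous g) (z : ℕ →ᵇ E) :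
    ∃ C, ∀ i, ‖g (z i)‖ ≤ C := by
  have : ProperSpace E := FiniteDimensional.proper ℝ E
  obtain ⟨C, hC⟩ := (isCompact_closedBall (0 : E) ‖z‖).exists_bound_of_continuousOn hg.continuousOn
  exact ⟨C, fun i => hC _ (by simpa using z.norm_coe_le_norm i)⟩

/-- The superposition operator `z ↦ g ∘ z` on bounded sequences. -/
noncomputable def nem [FiniteDimensional ℝ E] {g : E → G} (hg : Continuous g) (z : ℕ →ᵇ E) :
    ℕ →ᵇ G :=
  BoundedContinuousFunction.ofNormedAddCommGroupDiscrete (fun i => g (z i)) _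
    (exists_bound_comp hg z).choose_spec

@[simp] theorem nem_apply [FiniteDimensional ℝ E] {g : E → G} (hg : Continuous g) (z : ℕ →ᵇ E)
    (i : ℕ) : nem hg z i = g (z i) := rfl

/-- Termwise application of a bounded sequence of linear maps to a bounded sequence, as a plain
function. -/
noncomputable def seqApplyFun (A : ℕ →ᵇ (E →L[ℝ] G)) (v : ℕ →ᵇ E) : ℕ →ᵇ G :=
  BoundedContinuousFunction.ofNormedAddCommGroupDiscrete (fun i => A i (v i)) (‖A‖ * ‖v‖)
    fun i => ((A i).le_opNorm _).trans (by
      gcongr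
      exacts [A.norm_coe_le_norm i, v.norm_coe_le_norm i])

@[simp] theorem seqApplyFun_apply (A : ℕ →ᵇ (E →L[ℝ] G)) (v : ℕ →ᵇ E) (i : ℕ) :
    seqApplyFun A v i = A i (v i) := rfl

/-- Termwise application of a bounded sequence of linear maps to a bounded sequence, as a
continuous bilinear map. -/
noncomputable def seqApply : (ℕ →ᵇ (E →L[ℝ] G)) →L[ℝ] (ℕ →ᵇ E) →L[ℝ] (ℕ →ᵇ G) :=
  LinearMap.mkContinuous₂
    (LinearMap.mk₂ ℝ (seqApplyFun (E := E) (G := G))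
      (fun A B v => by ext i; simp) (fun c A v => by ext i; simp)
      (fun A v w => by ext i; simp) (fun c A v => by ext i; simp)) 1 (fun A v => by
        simp only [one_mul]
        refine (BoundedContinuousFunction.norm_le (by positivity)).2 fun i => ?_
        refine ((A i).le_opNorm _).trans ?_
        gcongr
        exacts [A.norm_coe_le_norm i, v.norm_coe_le_norm i])

@[simp] theorem seqApply_apply (A : ℕ →ᵇ (E →L[ℝ] G)) (v : ℕ →ᵇ E) (i : ℕ) :
    seqApply A v i = A i (v i) := rfl

variable [FiniteDimensional ℝ E]

theorem nem_continuous {g : E → G} (hg : Continuous g) : Continuous (nem hg) := by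
  have : ProperSpace E := FiniteDimensional.proper ℝ E
  rw [Metric.continuous_iff]
  intro z ε hε
  have huc := (isCompact_closedBall (0 : E) (‖z‖ + 1)).uniformContinuousOn_of_continuous
    hg.continuousOn
  rw [Metric.uniformContinuousOn_iff] at huc
  obtain ⟨δ, hδ, h⟩ := huc (ε / 2) (by positivity)
  refine ⟨min δ 1, by positivity, fun a ha => ?_⟩
  refine lt_of_le_of_lt ((BoundedContinuousFunction.dist_le (by positivity)).2 fun i => ?_)
    (half_lt_self hε)
  have h1 : dist (a i) (z i) < min δ 1 :=
    (BoundedContinuousFunction.dist_coe_le_dist i).trans_lt ha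
  have h2 := z.norm_coe_le_norm i
  refine (h (a i) ?_ (z i) ?_ (h1.trans_le (min_le_left _ _))).le
  · rw [mem_closedBall_zero_iff]
    have h3 := h1.trans_le (min_le_right _ _)
    rw [dist_eq_norm] at h3
    have := norm_sub_norm_le (a i) (z i)
    linarith
  · rw [mem_closedBall_zero_iff]; linarith

/-- Superposition operators are differentiable because bounded sequences stay in a compact set, where
the derivative is uniformly continuous. -/
theorem nem_hasFDerivAt {g : E → G} (hg : ContDiff ℝ 1 g) (z : ℕ →ᵇ E) :
    HasFDerivAt (nem hg.continuous)
      (seqApply (nem (hg.continuous_fderiv one_ne_zero) z)) z := by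
  have : ProperSpace E := FiniteDimensional.proper ℝ E
  rw [hasFDerivAt_iff_isLittleO_nhds_zero, Asymptotics.isLittleO_iff]
  intro c hc
  have huc := (isCompact_closedBall (0 : E) (‖z‖ + 1)).uniformContinuousOn_of_continuous
    (hg.continuous_fderiv one_ne_zero).continuousOn
  rw [Metric.uniformContinuousOn_iff] at huc
  obtain ⟨δ, hδ, h⟩ := huc c hc
  filter_upwards [Metric.ball_mem_nhds (0 : ℕ →ᵇ E) (show 0 < min δ 1 by positivity)] with v hv
  rw [mem_ball_zero_iff] at hv
  have hv1 := hv.trans_le (min_le_left _ _)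
  have hv2 := hv.trans_le (min_le_right _ _)
  refine (BoundedContinuousFunction.norm_le (by positivity)).2 fun i => ?_
  have hz := z.norm_coe_le_norm i
  have hvi := v.norm_coe_le_norm i
  have key := Convex.norm_image_sub_le_of_norm_fderiv_le' (𝕜 := ℝ) (f := g) (C := c)
    (s := Metric.closedBall (z i) ‖v‖) (x := z i) (y := z i + v i) (φ := fderiv ℝ g (z i))
    (fun x _ => hg.differentiable one_ne_zero x) (fun x hx => ?_) (convex_closedBall _ _)
    (Metric.mem_closedBall_self (norm_nonneg _)) (by simpa using hvi)
  · simp only [add_sub_cancel_left] at key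
    refine le_trans (by simpa using key) (by gcongr)
  · rw [← dist_eq_norm]
    rw [Metric.mem_closedBall] at hx
    refine (h x ?_ (z i) ?_ (hx.trans_lt hv1)).le
    · rw [mem_closedBall_zero_iff]
      rw [dist_eq_norm] at hx
      have := norm_sub_norm_le x (z i)
      linarith
    · rw [mem_closedBall_zero_iff]; linarith

/-- Superposition by a `C^n` map is `C^n` on bounded sequences; by induction, its derivative being
the superposition by the derivative. -/
theorem nem_contDiff (n : ℕ) : ∀ {G : Type} [NormedAddCommGroup G] [NormedSpace ℝ G] {g : E → G}
    (hg : ContDiff ℝ n g), ContDiff ℝ n (nem hg.continuous) := by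
  induction n with
  | zero =>
    intro G _ _ g hg
    exact contDiff_zero.2 (nem_continuous _)
  | succ n ih =>
    intro G _ _ g hg
    push_cast
    rw [contDiff_succ_iff_hasFDerivAt]
    have h1 : ContDiff ℝ 1 g := hg.of_le (by exact_mod_cast Nat.succ_le_succ (Nat.zero_le n))
    have h2 : ContDiff ℝ n (fderiv ℝ g) := hg.fderiv_right (by norm_cast)
    have h3 : ContDiff ℝ n (nem h2.continuous) := ih h2
    have h4 : ContDiff ℝ n (fun z => seqApply (nem h2.continuous z)) :=
      ContDiff.clm_apply contDiff_const h3
    exact ⟨_, h4, fun z => nem_hasFDerivAt h1 z⟩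

end Nem

/-! ### The local stable manifold -/

/-- A germ of a `C^n` function has a globally `C^n` representative. -/
theorem exists_contDiff_eventuallyEq {n : ℕ} {g : ℝ → ℝ} (hg : ContDiffAt ℝ n g 0) :
    ∃ φ : ℝ → ℝ, ContDiff ℝ n φ ∧ φ =ᶠ[𝓝 0] g := by
  have h1 : ∀ᶠ x in 𝓝 (0 : ℝ), ContDiffAt ℝ n g x := hg.eventually (by simp)
  obtain ⟨ε, hε, h2⟩ := Metric.eventually_nhds_iff_ball.1 h1
  let χ : ContDiffBump (0 : ℝ) := ⟨ε / 4, ε / 2, by positivity, by linarith⟩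
  refine ⟨fun x => χ x • g x, ?_, ?_⟩
  · rw [contDiff_iff_contDiffAt]
    intro x
    by_cases hx : x ∈ Metric.ball (0 : ℝ) ε
    · exact χ.contDiff.contDiffAt.smul (h2 x hx)
    · have h0 : (fun z => χ z • g z) =ᶠ[𝓝 x] fun _ => (0 : ℝ) := by
        have hx' : x ∈ (Metric.closedBall (0 : ℝ) (ε / 2))ᶜ := fun h =>
          hx (Metric.closedBall_subset_ball (by linarith) h)
        filter_upwards [Metric.isClosed_closedBall.isOpen_compl.mem_nhds hx'] with z hz
        rw [χ.zero_of_le_dist, zero_smul]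
        rw [mem_compl_iff, Metric.mem_closedBall, not_le] at hz
        exact hz.le
      exact contDiffAt_const.congr_of_eventuallyEq h0
  · filter_upwards [Metric.closedBall_mem_nhds (0 : ℝ) (by positivity : 0 < ε / 4)] with x hx
    rw [χ.one_of_mem_closedBall hx, one_smul]

/-- The left shift on bounded sequences. -/
noncomputable def shiftL : (ℕ →ᵇ P2) →L[ℝ] (ℕ →ᵇ P2) :=
  LinearMap.mkContinuous
    { toFun := fun z => BoundedContinuousFunction.ofNormedAddCommGroupDiscrete
        (fun i => z (i + 1)) ‖z‖ fun i => z.norm_coe_le_norm _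
      map_add' := fun z w => by ext i <;> simp
      map_smul' := fun c z => by ext i <;> simp } 1 (fun z => by
        simp only [one_mul]
        exact (BoundedContinuousFunction.norm_le (by positivity)).2 fun i => z.norm_coe_le_norm _)

@[simp] theorem shiftL_apply (z : ℕ →ᵇ P2) (i : ℕ) : shiftL z i = z (i + 1) := rfl

/-- The right shift on bounded sequences. -/
noncomputable def shiftR : (ℕ →ᵇ P2) →L[ℝ] (ℕ →ᵇ P2) :=
  LinearMap.mkContinuous
    { toFun := fun z => BoundedContinuousFunction.ofNormedAddCommGroupDiscrete
        (fun i => Nat.casesOn i 0 fun i => z i) ‖z‖ fun i => by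
          cases i with
          | zero => simp
          | succ i => exact z.norm_coe_le_norm i
      map_add' := fun z w => by ext i <;> cases i <;> simp
      map_smul' := fun c z => by ext i <;> cases i <;> simp } 1 (fun z => by
        simp only [one_mul]
        refine (BoundedContinuousFunction.norm_le (by positivity)).2 fun i => ?_
        cases i with
          | zero => simp
          | succ i => exact z.norm_coe_le_norm i)

@[simp] theorem shiftR_zero (z : ℕ →ᵇ P2) : shiftR z 0 = 0 := rfl
@[simp] theorem shiftR_succ (z : ℕ →ᵇ P2) (i : ℕ) : shiftR z (i + 1) = z i := rfl

/-- The sequence `((a, 0), 0, 0, …)`. -/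
noncomputable def seqSingle : ℝ →L[ℝ] (ℕ →ᵇ P2) :=
  LinearMap.mkContinuous
    { toFun := fun a => BoundedContinuousFunction.ofNormedAddCommGroupDiscrete
        (fun i => Nat.casesOn i (a, 0) fun _ => 0) ‖a‖ fun i => by
          cases i with
          | zero => simp
          | succ i => simp
      map_add' := fun z w => by ext i <;> cases i <;> simp
      map_smul' := fun c z => by ext i <;> cases i <;> simp } 1 (fun z => by
        simp only [one_mul]
        refine (BoundedContinuousFunction.norm_le (by positivity)).2 fun i => ?_
        cases i with
          | zero => simp
          | succ i => simp)

@[simp] theorem seqSingle_zero (a : ℝ) : seqSingle a 0 = (a, 0) := rfl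
@[simp] theorem seqSingle_succ (a : ℝ) (i : ℕ) : seqSingle a (i + 1) = 0 := rfl

/-- The local stable manifold theorem for a planar saddle, after Irwin: forward orbits near the
fixed point are the solutions of a smooth equation in the space of bounded sequences, to which the
inverse function theorem applies. -/
theorem exists_stable_graph {n : ℕ} (hn : 1 ≤ n) {F : P2 → P2} (hF : ContDiff ℝ n F)
    (h0 : F 0 = 0) {l : ℝ} (hl0 : l ≠ 0) (hl : |l| < 1)
    (hd : ∀ v, fderiv ℝ F 0 v = (l * v.1, l⁻¹ * v.2)) :
    ∃ φ : ℝ → ℝ, ContDiff ℝ n φ ∧ φ 0 = 0 ∧ HasDerivAt φ 0 0 ∧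
      (∃ ε > 0, ∀ z, (∀ i, ‖F^[i] z‖ ≤ ε) → z.2 = φ z.1) ∧
      ∀ ε > 0, ∃ ε' > 0, ∀ x, |x| < ε' → ∀ i, ‖F^[i] (x, φ x)‖ ≤ ε := by
  have hn1 : (1 : ℕ∞ω) ≤ n := by exact_mod_cast hn
  have hF1 : ContDiff ℝ n (fun z => (F z).1) := contDiff_fst.comp hF
  have hF2 : ContDiff ℝ n (fun z => (F z).2) := contDiff_snd.comp hF
  have hA : ContDiff ℝ n (fun z : P2 => (((F z).1, 0) : P2)) := hF1.prodMk contDiff_const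
  have hB : ContDiff ℝ n (fun z : P2 => ((0, l * z.2) : P2)) :=
    contDiff_const.prodMk (contDiff_const.mul contDiff_snd)
  have hC : ContDiff ℝ n (fun z : P2 => ((z.1, l * (F z).2) : P2)) :=
    contDiff_fst.prodMk (contDiff_const.mul hF2)
  have hFd : HasFDerivAt F (fderiv ℝ F 0) 0 := (hF.differentiable (by
    intro h; rw [h] at hn1; simp at hn1) 0).hasFDerivAt
  have dA : ∀ v, fderiv ℝ (fun z : P2 => (((F z).1, 0) : P2)) 0 v = (l * v.1, 0) := fun v => by
    have : HasFDerivAt (fun z : P2 => (((F z).1, 0) : P2)) _ 0 :=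
      hFd.fst.prodMk (hasFDerivAt_const (0:ℝ) (0:P2))
    rw [this.fderiv]
    simp [hd]
  have dB : ∀ v, fderiv ℝ (fun z : P2 => ((0, l * z.2) : P2)) 0 v = (0, l * v.2) := fun v => by
    have : HasFDerivAt (fun z : P2 => ((0, l * z.2) : P2)) _ 0 :=
      (hasFDerivAt_const (0:ℝ) (0:P2)).prodMk
        ((hasFDerivAt_snd (𝕜 := ℝ) (E := ℝ) (F := ℝ) (p := 0)).const_mul l)
    rw [this.fderiv]
    simp
  have dC : ∀ v, fderiv ℝ (fun z : P2 => ((z.1, l * (F z).2) : P2)) 0 v = v := fun v => by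
    have : HasFDerivAt (fun z : P2 => ((z.1, l * (F z).2) : P2)) _ 0 :=
      (hasFDerivAt_fst (𝕜 := ℝ) (E := ℝ) (F := ℝ) (p := 0)).prodMk (hFd.snd.const_mul l)
    rw [this.fderiv]
    simp [hd, hl0]
  set NA := nem hA.continuous with hNA
  set NB := nem hB.continuous with hNB
  set NC := nem hC.continuous with hNC
  set Θ : (ℕ →ᵇ P2) → (ℕ →ᵇ P2) := fun z => NC z - (shiftR (NA z) + shiftL (NB z)) with hΘdef
  have cN : ∀ (L : (ℕ →ᵇ P2) →L[ℝ] (ℕ →ᵇ P2)) (g : (ℕ →ᵇ P2) → (ℕ →ᵇ P2)), ContDiff ℝ n g →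
      ContDiff ℝ n (fun z => L (g z)) := fun L g hg => L.contDiff.comp hg
  have hΘ : ContDiff ℝ n Θ :=
    (nem_contDiff n hC).sub ((cN _ _ (nem_contDiff n hA)).add (cN _ _ (nem_contDiff n hB)))
  have hA1 := hA.of_le hn1
  have hB1 := hB.of_le hn1
  have hC1 := hC.of_le hn1
  set DA := seqApply (nem (hA1.continuous_fderiv one_ne_zero) 0)
  set DB := seqApply (nem (hB1.continuous_fderiv one_ne_zero) 0)
  set DC := seqApply (nem (hC1.continuous_fderiv one_ne_zero) 0)
  set T : (ℕ →ᵇ P2) →L[ℝ] (ℕ →ᵇ P2) := shiftR.comp DA + shiftL.comp DB with hT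
  have hTn : ‖T‖ < 1 := by
    refine lt_of_le_of_lt (T.opNorm_le_bound (abs_nonneg l) fun v => ?_) hl
    refine (BoundedContinuousFunction.norm_le (by positivity)).2 fun i => ?_
    cases i with
    | zero =>
      have e : T v 0 = (0, l * (v 1).2) := by
        have : T v 0 = 0 + fderiv ℝ (fun z : P2 => ((0, l * z.2) : P2)) 0 (v 1) := rfl
        rw [this, dB, zero_add]
      rw [e, Prod.norm_mk, norm_zero, norm_mul, Real.norm_eq_abs l]
      refine max_le (by positivity) ?_
      gcongr
      exact (norm_snd_le _).trans (v.norm_coe_le_norm 1)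
    | succ i =>
      have e : T v (i + 1) = (l * (v i).1, l * (v (i + 2)).2) := by
        have : T v (i + 1) = fderiv ℝ (fun z : P2 => (((F z).1, 0) : P2)) 0 (v i) +
          fderiv ℝ (fun z : P2 => ((0, l * z.2) : P2)) 0 (v (i + 2)) := rfl
        rw [this, dB, dA]; simp
      rw [e, Prod.norm_mk, norm_mul, norm_mul, Real.norm_eq_abs l]
      refine max_le ?_ ?_
      · gcongr
        exact (norm_fst_le _).trans (v.norm_coe_le_norm _)
      · gcongr
        exact (norm_snd_le _).trans (v.norm_coe_le_norm _)
  have hDC : DC = 1 := by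
    refine ContinuousLinearMap.ext fun v => ?_
    refine BoundedContinuousFunction.ext fun i => ?_
    exact dC (v i)
  let u := Units.oneSub T hTn
  let e : (ℕ →ᵇ P2) ≃L[ℝ] (ℕ →ᵇ P2) := ContinuousLinearEquiv.unitsEquiv ℝ _ u
  have hΘd : HasFDerivAt Θ (e : (ℕ →ᵇ P2) →L[ℝ] (ℕ →ᵇ P2)) 0 := by
    have h1 : HasFDerivAt NA DA 0 := nem_hasFDerivAt hA1 0
    have h2 : HasFDerivAt NB DB 0 := nem_hasFDerivAt hB1 0
    have h3 : HasFDerivAt NC DC 0 := nem_hasFDerivAt hC1 0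
    have h4 : HasFDerivAt Θ (DC - T) 0 :=
      h3.sub ((shiftR.hasFDerivAt.comp 0 h1).add (shiftL.hasFDerivAt.comp 0 h2))
    rw [hDC] at h4
    exact h4
  have hΘ0 : Θ 0 = 0 := by
    refine BoundedContinuousFunction.ext fun i => ?_
    cases i with
    | zero => simp [hΘdef, hNA, hNB, hNC, h0]
    | succ i => simp [hΘdef, hNA, hNB, hNC, h0]
  have hn0 : (n : ℕ∞ω) ≠ 0 := by
    intro h; rw [h] at hn1; simp at hn1
  have hΘs : HasStrictFDerivAt Θ (e : (ℕ →ᵇ P2) →L[ℝ] (ℕ →ᵇ P2)) 0 :=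
    hΘ.contDiffAt.hasStrictFDerivAt' hΘd hn0
  set Z := HasStrictFDerivAt.localInverse Θ e 0 hΘs with hZ
  have hZc : ContDiffAt ℝ n Z 0 := by
    have := (hΘ.contDiffAt (x := 0)).to_localInverse hΘd hn0
    rw [hΘ0] at this
    exact this
  have hZr : ∀ᶠ w in 𝓝 0, Θ (Z w) = w := by
    have := hΘs.eventually_right_inverse
    rwa [hΘ0] at this
  have hZl : ∀ᶠ z in 𝓝 0, Z (Θ z) = z := hΘs.eventually_left_inverse
  have hZ0 : Z 0 = 0 := by
    have := hZl.self_of_nhds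
    rwa [hΘ0] at this
  have hs0 : seqSingle 0 = 0 := map_zero _
  set φ₀ : ℝ → ℝ := fun x => (Z (seqSingle x) 0).2 with hφ₀
  have hφ₀c : ContDiffAt ℝ n φ₀ 0 := by
    have h1 : ContDiffAt ℝ n (fun x => Z (seqSingle x)) 0 :=
      ContDiffAt.comp (g := Z) 0 (by rw [hs0]; exact hZc) seqSingle.contDiff.contDiffAt
    have h2 : ContDiffAt ℝ n (fun x => BoundedContinuousFunction.evalCLM ℝ (0 : ℕ)
      (Z (seqSingle x))) 0 := contDiffAt_const.clm_apply h1
    exact h2.snd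
  obtain ⟨φ, hφ, hφe⟩ := exists_contDiff_eventuallyEq hφ₀c
  have hφ0 : φ 0 = 0 := by
    rw [hφe.self_of_nhds]
    simp only [hφ₀, hs0, hZ0]; rfl
  -- solutions of `Θ z = seqSingle x` are orbits
  have horb : ∀ (z : ℕ →ᵇ P2) x, Θ z = seqSingle x → (z 0).1 = x ∧ ∀ i, F^[i] (z 0) = z i := by
    intro z x h
    have c0 : ((z 0).1, l * (F (z 0)).2) - (0 + (0, l * (z 1).2)) = ((x, 0) : P2) :=
      congrArg (fun w : ℕ →ᵇ P2 => w 0) h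
    have cs : ∀ i, ((z (i + 1)).1, l * (F (z (i + 1))).2) -
        (((F (z i)).1, 0) + (0, l * (z (i + 2)).2)) = (0 : P2) :=
      fun i => congrArg (fun w : ℕ →ᵇ P2 => w (i + 1)) h
    simp only [Prod.ext_iff, Prod.fst_sub, Prod.snd_sub, Prod.fst_add, Prod.snd_add,
      Prod.fst_zero, Prod.snd_zero] at c0 cs
    have cy : ∀ i, (z (i + 1)).2 = (F (z i)).2 := by
      intro i
      apply mul_left_cancel₀ hl0
      cases i with
      | zero => linarith [c0.2]
      | succ i => linarith [(cs i).2]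
    refine ⟨by linarith [c0.1], fun i => ?_⟩
    induction i with
    | zero => rfl
    | succ i ih =>
      rw [Function.iterate_succ_apply', ih]
      exact Prod.ext (by linarith [(cs i).1]) (cy i).symm
  have hsc : Tendsto (fun x => seqSingle x) (𝓝 0) (𝓝 0) := by
    have := seqSingle.continuous.tendsto 0
    rwa [hs0] at this
  have hi : ∃ ε > 0, ∀ z, (∀ i, ‖F^[i] z‖ ≤ ε) → z.2 = φ z.1 := by
    obtain ⟨ε₁, hε₁, h1⟩ := Metric.eventually_nhds_iff_ball.1 hZl
    obtain ⟨ε₂, hε₂, h2⟩ := Metric.eventually_nhds_iff_ball.1 hφe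
    refine ⟨min ε₁ ε₂ / 2, by positivity, fun z hz => ?_⟩
    have hε1 : min ε₁ ε₂ / 2 < ε₁ := by
      have := min_le_left ε₁ ε₂; linarith
    have hε2 : min ε₁ ε₂ / 2 < ε₂ := by
      have := min_le_right ε₁ ε₂; linarith
    let ζ : ℕ →ᵇ P2 := BoundedContinuousFunction.ofNormedAddCommGroupDiscrete
      (fun i => F^[i] z) _ hz
    have hζ : ζ ∈ Metric.ball 0 ε₁ := by
      rw [mem_ball_zero_iff]
      exact lt_of_le_of_lt ((BoundedContinuousFunction.norm_le (by positivity)).2 hz) hε1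
    have hΘζ : Θ ζ = seqSingle z.1 := by
      refine BoundedContinuousFunction.ext fun i => ?_
      cases i with
      | zero =>
        change (z.1, l * (F z).2) - (0 + (0, l * (F z).2)) = ((z.1, 0) : P2)
        simp
      | succ i =>
        change ((F^[i+1] z).1, l * (F (F^[i+1] z)).2) -
          (((F (F^[i] z)).1, 0) + (0, l * (F^[i+2] z).2)) = (0 : P2)
        rw [Function.iterate_succ_apply' F (i + 1), Function.iterate_succ_apply' F i]
        simp
    have h3 := h1 ζ hζ
    rw [hΘζ] at h3
    have h4 : z.1 ∈ Metric.ball (0 : ℝ) ε₂ := by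
      rw [mem_ball_zero_iff]
      exact ((norm_fst_le z).trans (hz 0)).trans_lt hε2
    rw [h2 _ h4]
    simp only [hφ₀, h3]
    rfl
  have hii : ∀ ε > 0, ∃ ε' > 0, ∀ x, |x| < ε' → ∀ i, ‖F^[i] (x, φ x)‖ ≤ ε := by
    intro ε hε
    have hcont : Tendsto (fun x => Z (seqSingle x)) (𝓝 0) (𝓝 0) := by
      have h1 := hZc.continuousAt.tendsto
      rw [hZ0] at h1
      exact h1.comp hsc
    have h1 := (hφe.and (hsc.eventually hZr)).and (hcont.eventually (Metric.ball_mem_nhds 0 hε))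
    obtain ⟨ε', hε', h2⟩ := Metric.eventually_nhds_iff_ball.1 h1
    refine ⟨ε', hε', fun x hx i => ?_⟩
    obtain ⟨⟨h3, h4⟩, h5⟩ := h2 x (by simpa using hx)
    obtain ⟨h6, h7⟩ := horb _ _ h4
    have h8 : ((x, φ x) : P2) = Z (seqSingle x) 0 := by
      rw [h3]
      exact Prod.ext h6.symm rfl
    rw [h8, h7]
    have h5 := mem_ball_zero_iff.1 h5
    exact ((Z (seqSingle x)).norm_coe_le_norm i).trans h5.le
  refine ⟨φ, hφ, hφ0, ?_, hi, hii⟩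
  -- the graph is invariant, so its slope at the fixed point is an invariant direction
  obtain ⟨ε, hε, hi⟩ := hi
  obtain ⟨ε', hε', hii⟩ := hii ε hε
  have hφd := (hφ.differentiable hn0 0).hasDerivAt
  set d := deriv φ 0
  have hinv : ∀ᶠ x in 𝓝 (0 : ℝ), (F (x, φ x)).2 = φ (F (x, φ x)).1 := by
    filter_upwards [Metric.ball_mem_nhds (0 : ℝ) hε'] with x hx
    refine hi _ fun i => ?_
    rw [← Function.iterate_succ_apply]
    exact hii x (by simpa using hx) (i + 1)
  have hγ : HasDerivAt (fun x => ((x, φ x) : P2)) (1, d) 0 := (hasDerivAt_id (0:ℝ)).prodMk hφd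
  have hγ0 : (((0:ℝ), φ 0) : P2) = 0 := by rw [hφ0]; rfl
  have hFγ : HasDerivAt (fun x => F (x, φ x)) (fderiv ℝ F 0 (1, d)) 0 :=
    HasFDerivAt.comp_hasDerivAt (x := (0:ℝ)) (l := F) (f := fun x => ((x, φ x) : P2))
      (by rw [hγ0]; exact hFd) hγ
  rw [hd] at hFγ
  have e1 : HasDerivAt (fun x => (F (x, φ x)).2) (l⁻¹ * d) 0 := hFγ.snd
  have e2 : HasDerivAt (fun x => (F (x, φ x)).1) (l * 1) 0 := hFγ.fst
  have e3 : HasDerivAt (fun x => φ (F (x, φ x)).1) (d * (l * 1)) 0 :=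
    HasDerivAt.comp (h₂ := φ) (0:ℝ) (by rw [hγ0, h0]; exact hφd) e2
  have e4 := (e1.congr_of_eventuallyEq (hinv.mono fun x hx => hx.symm)).unique e3
  have : d = 0 := by
    by_contra hd0
    have h5 : l⁻¹ = l := mul_right_cancel₀ hd0 (by linarith)
    have h6 : l * l = 1 := by
      nth_rewrite 1 [← h5]
      exact inv_mul_cancel₀ hl0
    have := abs_lt.1 hl
    nlinarith
  rwa [this] at hφd

/-! ### Straightening the invariant manifolds -/

/-- Composition of diffeomorphisms of the plane. -/
def dcomp {r : ℕ∞} (g f : PlaneDiffeo r) : PlaneDiffeo r where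
  toFun := g.toFun ∘ f.toFun
  invFun := f.invFun ∘ g.invFun
  left_inv := g.left_inv.comp f.left_inv
  right_inv := g.right_inv.comp f.right_inv
  contDiff := g.contDiff.comp f.contDiff
  contDiff_inv := f.contDiff_inv.comp g.contDiff_inv

/-- The inverse diffeomorphism. -/
def dsymm {r : ℕ∞} (f : PlaneDiffeo r) : PlaneDiffeo r :=
  ⟨f.invFun, f.toFun, f.right_inv, f.left_inv, f.contDiff_inv, f.contDiff⟩

theorem contDiff_iterate {r : ℕ∞ω} {f : P2 → P2} (hf : ContDiff ℝ r f) (k : ℕ) :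
    ContDiff ℝ r f^[k] := by
  induction k with
  | zero => exact contDiff_id
  | succ k ih => exact ih.comp hf

/-- Iterates of a diffeomorphism. -/
def dpow {r : ℕ∞} (f : PlaneDiffeo r) (k : ℕ) : PlaneDiffeo r where
  toFun := f.toFun^[k]
  invFun := f.invFun^[k]
  left_inv := f.left_inv.iterate k
  right_inv := f.right_inv.iterate k
  contDiff := contDiff_iterate f.contDiff k
  contDiff_inv := contDiff_iterate f.contDiff_inv k

/-- A diffeomorphism seen in a lower smoothness class. -/
def dofLe {r s : ℕ∞} (h : r ≤ s) (f : PlaneDiffeo s) : PlaneDiffeo r :=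
  ⟨f.toFun, f.invFun, f.left_inv, f.right_inv, f.contDiff.of_le (by exact_mod_cast h),
    f.contDiff_inv.of_le (by exact_mod_cast h)⟩

/-- `conj S F = S ∘ F ∘ S⁻¹`. -/
def conj {r : ℕ∞} (S F : PlaneDiffeo r) : PlaneDiffeo r := dcomp S (dcomp F (dsymm S))

/-- The exchange of the two coordinates. -/
def dswap (r : ℕ∞) : PlaneDiffeo r where
  toFun := Prod.swap
  invFun := Prod.swap
  left_inv := Prod.swap_swap
  right_inv := Prod.swap_swap
  contDiff := contDiff_snd.prodMk contDiff_fst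
  contDiff_inv := contDiff_snd.prodMk contDiff_fst

/-- The shear `(x, y) ↦ (x, y - φ x)`. -/
def dshear {r : ℕ∞} {φ : ℝ → ℝ} (hφ : ContDiff ℝ r φ) : PlaneDiffeo r where
  toFun z := (z.1, z.2 - φ z.1)
  invFun z := (z.1, z.2 + φ z.1)
  left_inv z := by simp
  right_inv z := by simp
  contDiff := contDiff_fst.prodMk (contDiff_snd.sub (hφ.comp contDiff_fst))
  contDiff_inv := contDiff_fst.prodMk (contDiff_snd.add (hφ.comp contDiff_fst))

theorem conj_iterate {r : ℕ∞} (S F : PlaneDiffeo r) (i : ℕ) (z : P2) :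
    (conj S F).toFun^[i] z = S.toFun (F.toFun^[i] (S.invFun z)) := by
  have h : Function.Semiconj S.toFun F.toFun (conj S F).toFun := fun z => by
    change _ = S.toFun (F.toFun (S.invFun (S.toFun z)))
    rw [S.left_inv]
  have := (h.iterate_right i).eq (S.invFun z)
  rw [S.right_inv] at this
  exact this.symm

/-- The diagonal linear map with entries `l, l⁻¹`. -/
noncomputable def diagL (l : ℝ) : P2 →L[ℝ] P2 :=
  (l • ContinuousLinearMap.fst ℝ ℝ ℝ).prod (l⁻¹ • ContinuousLinearMap.snd ℝ ℝ ℝ)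

@[simp] theorem diagL_apply (l : ℝ) (v : P2) : diagL l v = (l * v.1, l⁻¹ * v.2) := by
  simp [diagL]

/-- The origin is a fixed point with linear part `diag(l, l⁻¹)`. -/
def Saddle {r : ℕ∞} (F : PlaneDiffeo r) (l : ℝ) : Prop :=
  F.toFun 0 = 0 ∧ HasFDerivAt F.toFun (diagL l) 0

/-- A diffeomorphism tangent to the identity at the origin, together with its inverse. -/
def Flat {r : ℕ∞} (S : PlaneDiffeo r) : Prop :=
  S.toFun 0 = 0 ∧ HasFDerivAt S.toFun (ContinuousLinearMap.id ℝ P2) 0 ∧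
    HasFDerivAt S.invFun (ContinuousLinearMap.id ℝ P2) 0

theorem inv_zero {r : ℕ∞} {S : PlaneDiffeo r} (h : S.toFun 0 = 0) : S.invFun 0 = 0 := by
  have := S.left_inv 0
  rwa [h] at this

theorem Saddle.conj {r : ℕ∞} {S F : PlaneDiffeo r} {l : ℝ} (hS : Flat S) (hF : Saddle F l) :
    Saddle (conj S F) l := by
  have hi := inv_zero hS.1
  constructor
  · change S.toFun (F.toFun (S.invFun 0)) = 0
    rw [hi, hF.1, hS.1]
  · have h1 : HasFDerivAt (F.toFun ∘ S.invFun) ((diagL l).comp (ContinuousLinearMap.id ℝ P2)) 0 :=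
      HasFDerivAt.comp 0 (by rw [hi]; exact hF.2) hS.2.2
    have h2 : HasFDerivAt (S.toFun ∘ (F.toFun ∘ S.invFun)) _ 0 :=
      HasFDerivAt.comp 0 (by
        change HasFDerivAt S.toFun _ (F.toFun (S.invFun 0))
        rw [hi, hF.1]
        exact hS.2.1) h1
    exact h2

theorem Saddle.symm {r : ℕ∞} {F : PlaneDiffeo r} {l : ℝ} (hr : (r : ℕ∞ω) ≠ 0) (hl : l ≠ 0)
    (hF : Saddle F l) : HasFDerivAt F.invFun (diagL l⁻¹) 0 := by
  have hi := inv_zero hF.1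
  have h1 : HasFDerivAt F.invFun (fderiv ℝ F.invFun 0) 0 :=
    (F.contDiff_inv.differentiable hr 0).hasFDerivAt
  have h2 : HasFDerivAt (F.toFun ∘ F.invFun) ((diagL l).comp (fderiv ℝ F.invFun 0)) 0 :=
    HasFDerivAt.comp 0 (by rw [hi]; exact hF.2) h1
  have h3 : F.toFun ∘ F.invFun = id := funext F.right_inv
  rw [h3] at h2
  have h4 := h2.unique (hasFDerivAt_id 0)
  have : fderiv ℝ F.invFun 0 = diagL l⁻¹ := by
    refine ContinuousLinearMap.ext fun v => ?_
    have h5 := congrArg (fun L : P2 →L[ℝ] P2 => L v) h4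
    simp only [ContinuousLinearMap.comp_apply, diagL_apply, ContinuousLinearMap.id_apply] at h5
    obtain ⟨h6, h7⟩ := Prod.ext_iff.1 h5
    simp only at h6 h7
    refine Prod.ext ?_ ?_
    · simp only [diagL_apply]
      rw [← h6, inv_mul_cancel_left₀ hl]
    · simp only [diagL_apply, inv_inv]
      rw [← h7, mul_inv_cancel_left₀ hl]
  rwa [this] at h1

/-- Continuity at the origin in the form needed to compare orbits in two charts. -/
theorem exists_small {S : P2 → P2} (h : ContinuousAt S 0) (h0 : S 0 = 0) {ε : ℝ} (hε : 0 < ε) :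
    ∃ ε' > 0, ∀ z, ‖z‖ ≤ ε' → ‖S z‖ ≤ ε := by
  have h1 := h.tendsto
  rw [h0] at h1
  obtain ⟨d, hd, h2⟩ := Metric.eventually_nhds_iff_ball.1 (h1.eventually (Metric.ball_mem_nhds 0 hε))
  refine ⟨d / 2, by positivity, fun z hz => ?_⟩
  have := h2 z (by rw [mem_ball_zero_iff]; linarith)
  exact (mem_ball_zero_iff.1 this).le

/-- A global shear turning the local stable manifold of a saddle into the horizontal axis. -/
theorem exists_flat_shear {n : ℕ} (hn : 1 ≤ n) (F : PlaneDiffeo n) {l : ℝ} (hl0 : l ≠ 0)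
    (hl : |l| < 1) (hF : Saddle F l) :
    ∃ φ : ℝ → ℝ, ∃ hφ : ContDiff ℝ (n : ℕ∞) φ, φ 0 = 0 ∧ Flat (dshear hφ) ∧
      (∃ ε > 0, ∀ z, (∀ i, ‖(conj (dshear hφ) F).toFun^[i] z‖ ≤ ε) → z.2 = 0) ∧
      ∀ ε > 0, ∃ ε' > 0, ∀ x, |x| < ε' → ∀ i, ‖(conj (dshear hφ) F).toFun^[i] (x, 0)‖ ≤ ε := by
  obtain ⟨φ, hφ, hφ0, hφd, ⟨ε, hε, hi⟩, hii⟩ := exists_stable_graph hn F.contDiff hF.1 hl0 hl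
    (fun v => by rw [hF.2.fderiv, diagL_apply])
  have hflat : Flat (dshear (r := n) hφ) := by
    have hφf : HasFDerivAt (fun z : P2 => φ z.1) (0 : P2 →L[ℝ] ℝ) 0 := by
      have : HasDerivAt φ 0 (0 : P2).1 := hφd
      have h2 : HasFDerivAt (fun z : P2 => φ z.1) _ 0 :=
        this.comp_hasFDerivAt (0 : P2) (hasFDerivAt_fst (𝕜 := ℝ))
      exact h2.congr_fderiv (zero_smul _ _)
    refine ⟨by simp [dshear, hφ0], ?_, ?_⟩
    · have := (hasFDerivAt_fst (𝕜 := ℝ) (E := ℝ) (F := ℝ) (p := 0)).prodMk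
        ((hasFDerivAt_snd (𝕜 := ℝ) (E := ℝ) (F := ℝ) (p := 0)).sub hφf)
      rw [sub_zero] at this
      exact this
    · have := (hasFDerivAt_fst (𝕜 := ℝ) (E := ℝ) (F := ℝ) (p := 0)).prodMk
        ((hasFDerivAt_snd (𝕜 := ℝ) (E := ℝ) (F := ℝ) (p := 0)).add hφf)
      rw [add_zero] at this
      exact this
  refine ⟨φ, hφ, hφ0, hflat, ?_, ?_⟩
  · obtain ⟨ε', hε', h1⟩ := exists_small (dshear (r := n) hφ).contDiff_inv.continuous.continuousAt
      (inv_zero hflat.1) hε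
    refine ⟨ε', hε', fun z hz => ?_⟩
    have h2 := hi ((dshear (r := n) hφ).invFun z) fun i => by
      have := h1 _ (hz i)
      rwa [conj_iterate, PlaneDiffeo.left_inv] at this
    simpa [dshear] using h2
  · intro ε hε
    obtain ⟨ε', hε', h1⟩ := exists_small (dshear (r := n) hφ).contDiff.continuous.continuousAt
      hflat.1 hε
    obtain ⟨ε'', hε'', h2⟩ := hii ε' hε'
    refine ⟨ε'', hε'', fun x hx i => ?_⟩
    rw [conj_iterate]
    refine h1 _ ?_
    have := h2 x hx i
    simpa [dshear] using this

/-- Coordinates in which the local stable and unstable manifolds of a saddle are the axes. -/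
theorem exists_axes_chart {n : ℕ} (hn : 1 ≤ n) (F : PlaneDiffeo n) {l : ℝ} (hl0 : l ≠ 0)
    (hl : |l| < 1) (hF : Saddle F l) :
    ∃ S : PlaneDiffeo n, S.toFun 0 = 0 ∧ Saddle (conj S F) l ∧ ∃ ε > 0,
      (∀ z, (∀ i, ‖(conj S F).toFun^[i] z‖ ≤ ε) → z.2 = 0) ∧
      (∀ z, (∀ i, ‖(conj S F).invFun^[i] z‖ ≤ ε) → z.1 = 0) ∧
      (∀ x, |x| < ε → ((conj S F).toFun (x, 0)).2 = 0) ∧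
      (∀ y, |y| < ε → ((conj S F).toFun (0, y)).1 = 0) := by
  have hr : (((n : ℕ∞)) : ℕ∞ω) ≠ 0 := by
    intro h
    have : n = 0 := by exact_mod_cast h
    omega
  obtain ⟨φ, hφ, hφ0, hflat, ⟨ε₁, hε₁, hi⟩, hii⟩ := exists_flat_shear hn F hl0 hl hF
  set F1 := conj (dshear hφ) F with hF1
  have hF1s : Saddle F1 l := hF.conj hflat
  set G := conj (dswap n) (dsymm F1) with hG
  have hGs : Saddle G l := by
    constructor
    · change Prod.swap (F1.invFun (Prod.swap 0)) = 0
      have : Prod.swap (0 : P2) = 0 := rfl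
      rw [this, inv_zero hF1s.1, this]
    · have h1 := hF1s.symm hr hl0
      have hsw : HasFDerivAt (Prod.swap : P2 → P2) ((ContinuousLinearMap.snd ℝ ℝ ℝ).prod
        (ContinuousLinearMap.fst ℝ ℝ ℝ)) 0 := (hasFDerivAt_snd (𝕜 := ℝ)).prodMk
          (hasFDerivAt_fst (𝕜 := ℝ))
      have hsw' : HasFDerivAt (Prod.swap : P2 → P2) ((ContinuousLinearMap.snd ℝ ℝ ℝ).prod
        (ContinuousLinearMap.fst ℝ ℝ ℝ)) ((F1.invFun ∘ Prod.swap) 0) := by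
          have : (F1.invFun ∘ Prod.swap) 0 = 0 := inv_zero hF1s.1
          rw [this]; exact hsw
      have h2 : HasFDerivAt (F1.invFun ∘ Prod.swap) _ 0 := HasFDerivAt.comp (0 : P2) (g := F1.invFun)
        (f := Prod.swap) h1 hsw
      have h3 := hsw'.comp 0 h2
      refine h3.congr_fderiv (ContinuousLinearMap.ext fun v => ?_)
      simp
  obtain ⟨φ', hφ', hφ0', hflat', ⟨ε₂, hε₂, hi'⟩, hii'⟩ := exists_flat_shear hn G hl0 hl hGs
  set S' := dshear hφ' with hS'
  set S2 := conj (dswap n) S' with hS2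
  have hS2f : ∀ z, S2.toFun z = (z.1 - φ' z.2, z.2) := fun z => rfl
  have hS2i : ∀ z, S2.invFun z = (z.1 + φ' z.2, z.2) := fun z => rfl
  have hS20 : S2.toFun 0 = 0 := by rw [hS2f]; simp [hφ0']
  have hsw : HasFDerivAt (Prod.swap : P2 → P2) ((ContinuousLinearMap.snd ℝ ℝ ℝ).prod
      (ContinuousLinearMap.fst ℝ ℝ ℝ)) 0 := (hasFDerivAt_snd (𝕜 := ℝ)).prodMk
        (hasFDerivAt_fst (𝕜 := ℝ))
  have hswc : ∀ {g : P2 → P2}, g 0 = 0 → HasFDerivAt g (ContinuousLinearMap.id ℝ P2) 0 →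
      HasFDerivAt (Prod.swap ∘ g ∘ Prod.swap) (ContinuousLinearMap.id ℝ P2) 0 := by
    intro g h0 h1
    have h2 : HasFDerivAt (g ∘ Prod.swap) _ 0 := HasFDerivAt.comp (0 : P2) (g := g)
        (f := Prod.swap) h1 hsw
    have hsw' : HasFDerivAt (Prod.swap : P2 → P2) ((ContinuousLinearMap.snd ℝ ℝ ℝ).prod
        (ContinuousLinearMap.fst ℝ ℝ ℝ)) ((g ∘ Prod.swap) 0) := by
          have : (g ∘ Prod.swap) 0 = 0 := h0
          rw [this]; exact hsw
    have h3 := hsw'.comp 0 h2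
    refine h3.congr_fderiv (ContinuousLinearMap.ext fun v => ?_)
    simp
  have hS2flat : Flat S2 := ⟨hS20, hswc hflat'.1 hflat'.2.1, hswc (inv_zero hflat'.1) hflat'.2.2⟩
  have hconj : conj (dcomp S2 (dshear hφ)) F = conj S2 F1 := rfl
  -- the inverse of the straightened map is, up to exchange of coordinates, the second conjugate
  have hinv : ∀ i z, (conj S2 F1).invFun^[i] z =
      Prod.swap ((conj S' G).toFun^[i] (Prod.swap z)) := by
    intro i z
    exact conj_iterate (dswap n) (conj S' G) i z
  refine ⟨dcomp S2 (dshear hφ), ?_, ?_⟩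
  · change S2.toFun ((dshear hφ).toFun 0) = 0
    rw [hflat.1, hS20]
  rw [hconj]
  refine ⟨hF1s.conj hS2flat, ?_⟩
  obtain ⟨ε₃, hε₃, h3⟩ := exists_small S2.contDiff_inv.continuous.continuousAt (inv_zero hS20) hε₁
  have hfw : ∀ z, (∀ i, ‖(conj S2 F1).toFun^[i] z‖ ≤ ε₃) → z.2 = 0 := by
    intro z hz
    have h2 := hi (S2.invFun z) fun i => by
      have := h3 _ (hz i)
      rwa [conj_iterate, PlaneDiffeo.left_inv] at this
    rwa [hS2i] at h2
  have hnsw : ∀ z : P2, ‖Prod.swap z‖ = ‖z‖ := fun z => by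
    simp [Prod.norm_def, max_comm]
  have hbw : ∀ z, (∀ i, ‖(conj S2 F1).invFun^[i] z‖ ≤ ε₂) → z.1 = 0 := by
    intro z hz
    refine hi' (Prod.swap z) fun i => ?_
    have := hz i
    rwa [hinv, hnsw] at this
  obtain ⟨ε₄, hε₄, h4⟩ := exists_small S2.contDiff.continuous.continuousAt hS20 hε₃
  obtain ⟨ε₅, hε₅, h5⟩ := hii ε₄ hε₄
  have hax : ∀ x, |x| < ε₅ → ∀ i, ‖(conj S2 F1).toFun^[i] (x, 0)‖ ≤ ε₃ := by
    intro x hx i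
    rw [conj_iterate, hS2i]
    refine h4 _ ?_
    simpa [hφ0'] using h5 x hx i
  obtain ⟨ε₆, hε₆, h6⟩ := hii' ε₂ hε₂
  have hay : ∀ y, |y| < ε₆ → ∀ i, ‖(conj S2 F1).invFun^[i] (0, y)‖ ≤ ε₂ := by
    intro y hy i
    rw [hinv, hnsw]
    exact h6 y hy i
  have hF2s := hF1s.conj hS2flat
  obtain ⟨ε₇, hε₇, h7⟩ := exists_small (conj S2 F1).contDiff.continuous.continuousAt hF2s.1 hε₂
  refine ⟨min (min ε₃ ε₂) (min ε₅ (min ε₆ ε₇)), by positivity, fun z hz => hfw z fun i =>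
    (hz i).trans (by simp), fun z hz => hbw z fun i =>
    (hz i).trans (by simp), fun x hx => ?_, fun y hy => ?_⟩
  · refine hfw _ fun i => ?_
    rw [← Function.iterate_succ_apply]
    exact hax x (hx.trans_le (by simp)) (i + 1)
  · refine hbw _ fun i => ?_
    cases i with
    | zero =>
      refine h7 _ ?_
      have h8 : |y| ≤ ε₇ := (hy.trans_le (by simp)).le
      simpa [Prod.norm_def] using h8
    | succ i =>
      rw [Function.iterate_succ_apply, PlaneDiffeo.left_inv]
      exact hay y (hy.trans_le (by simp)) i

/-- The linear change of coordinates sending the basis `v, w` to the standard basis. -/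
theorem exists_linear_chart {n : ℕ} (hn : 1 ≤ n) (F : PlaneDiffeo n) (h0 : F.toFun 0 = 0)
    {c : ℝ} {v w : P2} (hvw : LinearIndependent ℝ ![v, w])
    (hv : fderiv ℝ F.toFun 0 v = c • v) (hw : fderiv ℝ F.toFun 0 w = c⁻¹ • w) :
    ∃ E : PlaneDiffeo n, E.toFun 0 = 0 ∧ Saddle (conj E F) c := by
  have hΔ : v.1 * w.2 - v.2 * w.1 ≠ 0 := by
    intro h
    rw [LinearIndependent.pair_iff] at hvw
    have h1 := hvw w.2 (-v.2) (by ext <;> simp <;> linarith)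
    have h2 := hvw w.1 (-v.1) (by ext <;> simp <;> linarith)
    have hv0 : v = 0 := Prod.ext (by simpa using h2.2) (by simpa using h1.2)
    have := hvw 1 0 (by simp [hv0])
    simp at this
  set Δ := v.1 * w.2 - v.2 * w.1 with hΔd
  let Ei : P2 →L[ℝ] P2 := (ContinuousLinearMap.fst ℝ ℝ ℝ).smulRight v +
    (ContinuousLinearMap.snd ℝ ℝ ℝ).smulRight w
  let fs := ContinuousLinearMap.fst ℝ ℝ ℝ
  let sn := ContinuousLinearMap.snd ℝ ℝ ℝ
  let Ec : P2 →L[ℝ] P2 := ((w.2 / Δ) • fs - (w.1 / Δ) • sn).prod ((v.1 / Δ) • sn - (v.2 / Δ) • fs)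
  have hEi : ∀ z, Ei z = z.1 • v + z.2 • w := fun z => by simp [Ei]
  have hEc : ∀ z, Ec z = (w.2 / Δ * z.1 - w.1 / Δ * z.2, v.1 / Δ * z.2 - v.2 / Δ * z.1) :=
    fun z => by simp [Ec, fs, sn]
  have hl : ∀ z, Ei (Ec z) = z := fun z => by
    rw [hEi, hEc]
    refine Prod.ext ?_ ?_
    · simp only [Prod.fst_add, Prod.smul_fst, smul_eq_mul]
      field_simp
      rw [hΔd]; ring
    · simp only [Prod.snd_add, Prod.smul_snd, smul_eq_mul]
      field_simp
      rw [hΔd]; ring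
  have hr : ∀ z, Ec (Ei z) = z := fun z => by
    rw [hEi, hEc]
    refine Prod.ext ?_ ?_
    · simp only [Prod.fst_add, Prod.smul_fst, Prod.snd_add, Prod.smul_snd, smul_eq_mul]
      field_simp
      rw [hΔd]; ring
    · simp only [Prod.fst_add, Prod.smul_fst, Prod.snd_add, Prod.smul_snd, smul_eq_mul]
      field_simp
      rw [hΔd]; ring
  refine ⟨⟨Ec, Ei, hl, hr, Ec.contDiff, Ei.contDiff⟩, map_zero _, ?_, ?_⟩
  · change Ec (F.toFun (Ei 0)) = 0
    rw [map_zero, h0, map_zero]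
  · have hd : HasFDerivAt F.toFun (fderiv ℝ F.toFun 0) (Ei 0) := by
      rw [map_zero]
      exact (F.contDiff.differentiable (by exact_mod_cast (by omega : n ≠ 0)) 0).hasFDerivAt
    have h1 := (Ec.hasFDerivAt (x := F.toFun (Ei 0))).comp 0 (hd.comp 0 Ei.hasFDerivAt)
    refine h1.congr_fderiv ?_
    refine ContinuousLinearMap.ext fun z => ?_
    have h2 : fderiv ℝ F.toFun 0 (Ei z) = Ei (c * z.1, c⁻¹ * z.2) := by
      rw [hEi, hEi, map_add, map_smul, map_smul, hv, hw, smul_smul, smul_smul, mul_comm c,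
        mul_comm c⁻¹]
    rw [ContinuousLinearMap.comp_apply, ContinuousLinearMap.comp_apply, h2, hr, diagL_apply]

/-- Near a hyperbolic fixed point there are coordinates in which the two axes are locally
invariant, and a point whose forward (backward) orbit stays near the origin is on the
horizontal (vertical) axis. -/
theorem exists_chart {n : ℕ} (hn : 1 ≤ n) (f : PlaneDiffeo ⊤) {τ : ℕ}
    (h : IsHypPerPtPlane f.toFun τ 0) :
    ∃ l : ℝ, l ≠ 0 ∧ |l| < 1 ∧ ∃ Ψ F : PlaneDiffeo n, Ψ.toFun 0 = 0 ∧ Saddle F l ∧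
      (∀ i z, F.toFun^[i] (Ψ.toFun z) = Ψ.toFun (f.toFun^[τ * i] z)) ∧
      (∀ i z, F.invFun^[i] (Ψ.toFun z) = Ψ.toFun (f.invFun^[τ * i] z)) ∧
      ∃ ε > 0, (∀ z, (∀ i, ‖F.toFun^[i] z‖ ≤ ε) → z.2 = 0) ∧
        (∀ z, (∀ i, ‖F.invFun^[i] z‖ ≤ ε) → z.1 = 0) ∧
        (∀ x, |x| < ε → (F.toFun (x, 0)).2 = 0) ∧ (∀ y, |y| < ε → (F.toFun (0, y)).1 = 0) := by
  obtain ⟨-, hfix, c, v, w, hc0, hc1, hvw, hv, hw⟩ := h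
  set F : PlaneDiffeo n := dofLe le_top (dpow f τ) with hF
  have key : ∃ (c : ℝ) (v w : P2), c ≠ 0 ∧ |c| < 1 ∧ LinearIndependent ℝ ![v, w] ∧
      fderiv ℝ f.toFun^[τ] 0 v = c • v ∧ fderiv ℝ f.toFun^[τ] 0 w = c⁻¹ • w := by
    rcases lt_or_gt_of_ne hc1 with hlt | hgt
    · exact ⟨c, v, w, hc0, hlt, hvw, hv, hw⟩
    · refine ⟨c⁻¹, w, v, inv_ne_zero hc0, ?_, ?_, hw, by rwa [inv_inv]⟩
      · rw [abs_inv]; exact inv_lt_one_of_one_lt₀ hgt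
      · rw [LinearIndependent.pair_iff] at hvw ⊢
        intro s t hst
        exact (hvw t s (by rw [add_comm]; exact hst)).symm
  clear hvw hv hw hc0 hc1
  clear v w c
  obtain ⟨c, v, w, hc0, hc1, hvw, hv, hw⟩ := key
  obtain ⟨E, hE0, hES⟩ := exists_linear_chart hn F hfix hvw hv hw
  obtain ⟨S, hS0, hSS, ε, hε, h1, h2, h3, h4⟩ := exists_axes_chart hn (conj E F) hc0 hc1 hES
  have hcomm : ∀ i z, (conj S (conj E F)).toFun^[i] ((dcomp S E).toFun z)
      = (dcomp S E).toFun (f.toFun^[τ * i] z) := fun i z => by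
    rw [conj_iterate, conj_iterate]
    change S.toFun (E.toFun (F.toFun^[i] (E.invFun (S.invFun (S.toFun (E.toFun z)))))) =
      S.toFun (E.toFun _)
    rw [S.left_inv, E.left_inv, Function.iterate_mul]
    rfl
  have hcomm' : ∀ i z, (conj S (conj E F)).invFun^[i] ((dcomp S E).toFun z)
      = (dcomp S E).toFun (f.invFun^[τ * i] z) := fun i z => by
    have e1 := conj_iterate S (dsymm (conj E F)) i ((dcomp S E).toFun z)
    have e2 := conj_iterate E (dsymm F) i (E.toFun z)
    change (conj S (conj E F)).invFun^[i] _ = S.toFun ((conj E F).invFun^[i]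
      (S.invFun (S.toFun (E.toFun z)))) at e1
    change (conj E F).invFun^[i] (E.toFun z) =
      E.toFun (F.invFun^[i] (E.invFun (E.toFun z))) at e2
    rw [e1, S.left_inv, e2, E.left_inv, Function.iterate_mul]
    rfl
  exact ⟨c, hc0, hc1, dcomp S E, conj S (conj E F), (congrArg S.toFun hE0).trans hS0, hSS,
    hcomm, hcomm', ε, hε, h1, h2, h3, h4⟩

/-! ### A good point of the band -/

theorem iterate_inv_iterate {r : ℕ∞} (f : PlaneDiffeo r) (i : ℕ) (z : P2) :
    f.invFun^[i] (f.toFun^[i] z) = z := (dpow f i).left_inv z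

theorem iterate_iterate_inv {r : ℕ∞} (f : PlaneDiffeo r) (i : ℕ) (z : P2) :
    f.toFun^[i] (f.invFun^[i] z) = z := (dpow f i).right_inv z

theorem iterate_fix {g : P2 → P2} {τ : ℕ} (h : g^[τ] 0 = 0) (k : ℕ) : g^[τ * k] 0 = 0 := by
  rw [Function.iterate_mul]
  exact Function.iterate_fixed h k

theorem inv_iterate_fix {r : ℕ∞} (f : PlaneDiffeo r) {τ : ℕ} (h : f.toFun^[τ] 0 = 0) :
    f.invFun^[τ] 0 = 0 := by
  have := iterate_inv_iterate f τ 0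
  rwa [h] at this

/-- Points of the stable manifold of `f^j 0` converge to the origin along the times
`τ k + (τ - j)`. -/
theorem tendsto_stable {g : P2 → P2} {τ j : ℕ} (hj : j < τ) (h0 : g^[τ] 0 = 0) {x : P2}
    (hx : x ∈ stableSetPlane g (g^[j] 0)) :
    Tendsto (fun k => g^[τ * k + (τ - j)] x) atTop (𝓝 0) := by
  have h1 : Tendsto (fun k : ℕ => τ * k + (τ - j)) atTop atTop := by
    refine tendsto_atTop_mono (fun k => ?_) tendsto_id
    change k ≤ _
    nlinarith [Nat.zero_le (τ - j)]
  have h2 := (show Tendsto _ _ _ from hx).comp h1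
  rw [tendsto_iff_dist_tendsto_zero]
  refine h2.congr fun k => ?_
  change dist _ (g^[τ * k + (τ - j)] (g^[j] 0)) = _
  rw [← Function.iterate_add_apply, show τ * k + (τ - j) + j = τ * (k + 1) by
    rw [add_assoc, Nat.sub_add_cancel hj.le]; ring, iterate_fix h0]

theorem tendsto_unstable {g : P2 → P2} {τ : ℕ} (hτ : 0 < τ) (h0 : g^[τ] 0 = 0) {x : P2}
    (hx : x ∈ stableSetPlane g 0) :
    Tendsto (fun k => g^[τ * k] x) atTop (𝓝 0) := by
  have h1 : Tendsto (fun k : ℕ => τ * k) atTop atTop := by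
    refine tendsto_atTop_mono (fun k => ?_) tendsto_id
    change k ≤ _
    nlinarith
  have h2 := (show Tendsto _ _ _ from hx).comp h1
  rw [tendsto_iff_dist_tendsto_zero]
  refine h2.congr fun k => ?_
  change dist _ (g^[τ * k] 0) = _
  rw [iterate_fix h0]

/-- Baire's theorem: on some subinterval of the band, the entrance times into a given
neighbourhood of the origin, in the future and in the past, are uniform. Hence a uniform
iterate of the subinterval lies on each of the two axes of the chart. -/
theorem exists_band_point (f : PlaneDiffeo ⊤) {τ : ℕ} (hτ : 0 < τ) (hfix : f.toFun^[τ] 0 = 0)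
    {n : ℕ} (Ψ F : PlaneDiffeo n) (hΨ0 : Ψ.toFun 0 = 0)
    (hF : ∀ i z, F.toFun^[i] (Ψ.toFun z) = Ψ.toFun (f.toFun^[τ * i] z))
    (hF' : ∀ i z, F.invFun^[i] (Ψ.toFun z) = Ψ.toFun (f.invFun^[τ * i] z))
    {ε : ℝ} (hε : 0 < ε) (hs : ∀ z, (∀ i, ‖F.toFun^[i] z‖ ≤ ε) → z.2 = 0)
    (hu : ∀ z, (∀ i, ‖F.invFun^[i] z‖ ≤ ε) → z.1 = 0)
    {a c d : ℝ} (hcd : c < d) {j : ℕ} (hj : j < τ)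
    (hIu : ({a} ×ˢ Icc c d : Set P2) ⊆ stableSetPlane f.invFun 0)
    (hIs : ({a} ×ˢ Icc c d : Set P2) ⊆ stableSetPlane f.toFun (f.toFun^[j] 0)) :
    ∃ yp ∈ Ioo c d, ∃ η > 0, ∃ M : ℕ,
      (∀ y, |y - yp| < η → y ∈ Icc c d ∧ ∀ k, M ≤ k →
        (Ψ.toFun (f.toFun^[τ * k + (τ - j)] (a, y))).2 = 0 ∧
        (Ψ.toFun (f.invFun^[τ * k] (a, y))).1 = 0) ∧
      (∀ l, 1 ≤ l → f.toFun^[l] (a, yp) ≠ (a, yp)) ∧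
      (∀ i, f.toFun^[i] 0 ≠ (a, yp)) ∧
      Tendsto (fun k => Ψ.toFun (f.toFun^[τ * k + (τ - j)] (a, yp))) atTop (𝓝 0) ∧
      Tendsto (fun k => Ψ.toFun (f.invFun^[τ * k] (a, yp))) atTop (𝓝 0) := by
  have hΨc := Ψ.contDiff.continuous
  have hfix' := inv_iterate_fix f hfix
  have hmem : ∀ y ∈ Icc c d, ((a, y) : P2) ∈ ({a} ×ˢ Icc c d : Set P2) := fun y hy => ⟨rfl, hy⟩
  have hT : Tendsto Ψ.toFun (𝓝 0) (𝓝 0) := by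
    have := hΨc.tendsto 0
    rwa [hΨ0] at this
  have ht1 : ∀ y ∈ Icc c d,
      Tendsto (fun k => Ψ.toFun (f.toFun^[τ * k + (τ - j)] (a, y))) atTop (𝓝 0) := fun y hy =>
    hT.comp (tendsto_stable hj hfix (hIs (hmem y hy)))
  have ht2' : ∀ y ∈ Icc c d, Tendsto (fun k => f.invFun^[τ * k] (a, y)) atTop (𝓝 0) :=
    fun y hy => tendsto_unstable hτ hfix' (hIu (hmem y hy))
  have ht2 : ∀ y ∈ Icc c d,
      Tendsto (fun k => Ψ.toFun (f.invFun^[τ * k] (a, y))) atTop (𝓝 0) := fun y hy =>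
    hT.comp (ht2' y hy)
  let B : ℕ → Set ℝ := fun M => (⋂ k : ℕ, ⋂ _ : M ≤ k,
    {y : ℝ | ‖Ψ.toFun (f.toFun^[τ * k + (τ - j)] (a, y))‖ ≤ ε ∧
      ‖Ψ.toFun (f.invFun^[τ * k] (a, y))‖ ≤ ε}) ∪ Iic c ∪ Ici d
  have hBc : ∀ M, IsClosed (B M) := by
    intro M
    refine IsClosed.union (IsClosed.union ?_ isClosed_Iic) isClosed_Ici
    refine isClosed_iInter fun k => isClosed_iInter fun _ => ?_
    have c0 : Continuous fun y : ℝ => ((a, y) : P2) := by fun_prop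
    have c1 : Continuous fun y : ℝ => Ψ.toFun (f.toFun^[τ * k + (τ - j)] (a, y)) :=
      hΨc.comp ((f.contDiff.continuous.iterate _).comp c0)
    have c2 : Continuous fun y : ℝ => Ψ.toFun (f.invFun^[τ * k] (a, y)) :=
      hΨc.comp ((f.contDiff_inv.continuous.iterate _).comp c0)
    exact (isClosed_le c1.norm continuous_const).inter (isClosed_le c2.norm continuous_const)
  have hBu : ⋃ M, B M = univ := by
    refine eq_univ_of_forall fun y => ?_
    rw [mem_iUnion]
    by_cases hy : y ∈ Icc c d
    · have e1 := (ht1 y hy).eventually (Metric.closedBall_mem_nhds 0 hε)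
      have e2 := (ht2 y hy).eventually (Metric.closedBall_mem_nhds 0 hε)
      obtain ⟨M, hM⟩ := eventually_atTop.1 (e1.and e2)
      refine ⟨M, Or.inl (Or.inl ?_)⟩
      simp only [mem_iInter]
      intro k hk
      obtain ⟨h1, h2⟩ := hM k hk
      exact ⟨mem_closedBall_zero_iff.1 h1, mem_closedBall_zero_iff.1 h2⟩
    · rcases le_total y c with h | h
      · exact ⟨0, Or.inl (Or.inr h)⟩
      · refine ⟨0, Or.inr ?_⟩
        by_contra h'
        exact hy ⟨h, (not_le.1 h').le⟩
  have hdense := dense_iUnion_interior_of_closed hBc hBu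
  obtain ⟨y₀, hy₀, hyB⟩ := hdense.inter_open_nonempty (Ioo c d) isOpen_Ioo (nonempty_Ioo.2 hcd)
  obtain ⟨M, hyM⟩ := mem_iUnion.1 hyB
  have hopen : IsOpen (interior (B M) ∩ Ioo c d) := isOpen_interior.inter isOpen_Ioo
  -- the open set is infinite, so that it contains a point at a nonzero height
  obtain ⟨yp, ⟨hyp, hypcd⟩, hyp0⟩ : ∃ yp ∈ interior (B M) ∩ Ioo c d, yp ≠ 0 := by
    obtain ⟨y, hy⟩ := (dense_compl_singleton (0 : ℝ)).inter_open_nonempty _ hopen ⟨y₀, hyM, hy₀⟩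
    exact ⟨y, hy.1, hy.2⟩
  obtain ⟨η, hη, hball⟩ := Metric.isOpen_iff.1 hopen yp ⟨hyp, hypcd⟩
  have hyI : yp ∈ Icc c d := Ioo_subset_Icc_self hypcd
  have hp0 : ((a, yp) : P2) ≠ 0 := fun h => hyp0 (congrArg Prod.snd h)
  refine ⟨yp, hypcd, η, hη, M, fun y hy => ?_, fun l hl h => hp0 ?_, fun i h => hp0 ?_,
    ht1 yp hyI, ht2 yp hyI⟩
  · obtain ⟨hyB, hycd⟩ := hball (by rwa [Metric.mem_ball, Real.dist_eq])
    refine ⟨Ioo_subset_Icc_self hycd, fun k hk => ?_⟩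
    have hA : ∀ k, M ≤ k → ‖Ψ.toFun (f.toFun^[τ * k + (τ - j)] (a, y))‖ ≤ ε ∧
        ‖Ψ.toFun (f.invFun^[τ * k] (a, y))‖ ≤ ε := by
      rcases interior_subset hyB with (h | h) | h
      · simp only [mem_iInter] at h
        exact h
      · exact absurd h (not_le.2 hycd.1)
      · exact absurd h (not_le.2 hycd.2)
    constructor
    · refine hs _ fun i => ?_
      rw [hF, ← Function.iterate_add_apply,
        show τ * i + (τ * k + (τ - j)) = τ * (k + i) + (τ - j) by ring]
      exact (hA (k + i) (by omega)).1
    · refine hu _ fun i => ?_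
      rw [hF', ← Function.iterate_add_apply, ← mul_add]
      exact (hA (i + k) (by omega)).2
  · -- a periodic point cannot converge to the origin in the past
    have h1 : f.invFun^[l] (a, yp) = (a, yp) := by
      conv_lhs => rw [← h]
      exact iterate_inv_iterate f l _
    have h2 : Tendsto (fun k : ℕ => l * k) atTop atTop := by
      refine tendsto_atTop_mono (fun k => ?_) tendsto_id
      change k ≤ _
      nlinarith
    have h3 := (ht2' yp hyI).comp h2
    refine tendsto_nhds_unique (tendsto_const_nhds.congr fun k => ?_) h3
    change _ = f.invFun^[τ * (l * k)] (a, yp)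
    rw [mul_left_comm, Function.iterate_mul, Function.iterate_fixed h1]
  · refine tendsto_nhds_unique (tendsto_const_nhds.congr fun k => ?_) (ht2' yp hyI)
    change _ = f.invFun^[τ * k] (a, yp)
    rw [← h]
    have hk := iterate_fix hfix k
    conv_rhs => rw [← hk]
    rw [← Function.iterate_add_apply, add_comm, Function.iterate_add_apply, iterate_inv_iterate]

/-! ### Long transits near a saddle -/

/-- A map preserving both axes near its saddle point is a componentwise product `z * A z`. -/
theorem exists_axes_form {r : ℕ} {F : P2 → P2} (hF : ContDiff ℝ (r + 1 : ℕ) F) {l : ℝ}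
    (hd : HasFDerivAt F (diagL l) 0) {ε : ℝ}
    (h1 : ∀ x, |x| < ε → (F (x, 0)).2 = 0) (h2 : ∀ y, |y| < ε → (F (0, y)).1 = 0) :
    ∃ A : P2 → P2, ContDiff ℝ r A ∧ A 0 = (l, l⁻¹) ∧ ∀ z, ‖z‖ < ε → F z = z * A z := by
  obtain ⟨e, he, hee, he0⟩ := exists_hadamard hF
  refine ⟨fun z => ((e ((0, z.2), (z.1, 0)) (1, 0)).1, (e ((z.1, 0), (0, z.2)) (0, 1)).2),
    ?_, ?_, fun z hz => ?_⟩
  · refine ContDiff.prodMk (contDiff_fst.comp (ContDiff.clm_apply (he.comp ?_) contDiff_const))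
      (contDiff_snd.comp (ContDiff.clm_apply (he.comp ?_) contDiff_const)) <;> fun_prop
  · have h0 : e (((0 : ℝ), (0 : ℝ)), ((0 : ℝ), (0 : ℝ))) = diagL l := by
      have := he0 0
      rw [hd.fderiv] at this
      exact this
    simp [h0]
  · have hz1 : |z.1| < ε := (norm_fst_le z).trans_lt hz
    have hz2 : |z.2| < ε := (norm_snd_le z).trans_lt hz
    have e1 := hee (0, z.2) (z.1, 0)
    have e2 := hee (z.1, 0) (0, z.2)
    have s1 : ((z.1, 0) : P2) = z.1 • (1, 0) := by simp
    have s2 : ((0, z.2) : P2) = z.2 • (0, 1) := by simp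
    have e1' : (F z).1 - (F (0, z.2)).1 = z.1 * (e ((0, z.2), (z.1, 0)) (1, 0)).1 := by
      have := congrArg Prod.fst e1
      rw [Prod.fst_sub] at this
      conv_rhs at this => rw [show (e ((0, z.2), (z.1, 0))) (z.1, 0) =
        z.1 • e ((0, z.2), (z.1, 0)) (1, 0) by rw [← map_smul, ← s1]]
      simpa using this
    have e2' : (F z).2 - (F (z.1, 0)).2 = z.2 * (e ((z.1, 0), (0, z.2)) (0, 1)).2 := by
      have := congrArg Prod.snd e2
      rw [Prod.snd_sub] at this
      conv_rhs at this => rw [show (e ((z.1, 0), (0, z.2))) (0, z.2) =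
        z.2 • e ((z.1, 0), (0, z.2)) (0, 1) by rw [← map_smul, ← s2]]
      simpa using this
    rw [h2 _ hz2, sub_zero] at e1'
    rw [h1 _ hz1, sub_zero] at e2'
    exact Prod.ext e1' e2'

/-- If `γ` vanishes at `0` then `z ↦ z * γ (d * z)` is `O(‖d‖)` in the `C^r` sense on a fixed ball. -/
theorem mul_small_bound {r : ℕ} {γ : P2 → P2} (hγ : ContDiff ℝ (r + 1 : ℕ) γ) (h0 : γ 0 = 0) :
    ∃ C : ℝ, 1 ≤ C ∧ ∀ d : P2, ‖d‖ ≤ 1 →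
      CB (Metric.ball 0 2) r (C * ‖d‖) (fun z => z * γ (d * z)) := by
  obtain ⟨e, he, hee, -⟩ := exists_hadamard hγ
  have hB : ContDiff ℝ r (fun z => e (0, z)) := he.comp (contDiff_const.prodMk contDiff_id)
  have hγe : ∀ z, γ z = e (0, z) z := fun z => by
    have := hee 0 z
    rwa [zero_add, h0, sub_zero] at this
  obtain ⟨C₀, hC₀, hCB⟩ := CB.of_compact (isCompact_closedBall (0 : P2) 2) hB
  refine ⟨2 ^ r * 2 * (2 ^ r * (r.factorial * C₀ * 1 ^ r) * 2), ?_, fun d hd => ?_⟩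
  · have h1 : (1 : ℝ) ≤ 2 ^ r := one_le_pow₀ (by norm_num)
    have h2 : (1 : ℝ) ≤ r.factorial := by exact_mod_cast r.factorial_pos
    have h3 : 1 ≤ r.factorial * C₀ := one_le_mul_of_one_le_of_one_le h2 hC₀
    have h4 : 1 ≤ 2 ^ r * (r.factorial * C₀) := one_le_mul_of_one_le_of_one_le h1 h3
    rw [one_pow, mul_one]
    nlinarith
  let D : P2 →L[ℝ] P2 := ContinuousLinearMap.mul ℝ P2 d
  have hDn : ‖D‖ ≤ ‖d‖ := ContinuousLinearMap.opNorm_mul_apply_le ℝ P2 d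
  have hD : ∀ z, D z = d * z := fun z => rfl
  have hDz : ∀ z ∈ Metric.ball (0 : P2) 2, ‖D z‖ ≤ ‖d‖ * 2 := fun z hz => by
    rw [mem_ball_zero_iff] at hz
    exact (norm_mul_le d z).trans (by gcongr)
  have c1 : CB (Metric.ball 0 2) r (r.factorial * C₀ * 1 ^ r) ((fun z => e (0, z)) ∘ fun z => D z) :=
    hCB.comp hB D.contDiff (fun z hz => mem_closedBall_zero_iff.2 ((hDz z hz).trans (by linarith)))
      le_rfl (by linarith)
      fun i hi _ x _ => (CB.iteratedFDeriv_clm D i hi x).trans (hDn.trans hd)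
  have c2 : CB (Metric.ball 0 2) r (‖d‖ * 2) (fun z => D z) :=
    CB.of_clm D hDz (hDn.trans (by linarith [norm_nonneg d]))
  have hf1 : ContDiff ℝ r ((fun z => e (0, z)) ∘ fun z => D z) := hB.comp D.contDiff
  have c3 := c1.clm_apply c2 (by positivity) hf1 D.contDiff
  have c4 : CB (Metric.ball (0 : P2) 2) r 2 (fun z : P2 => ContinuousLinearMap.id ℝ P2 z) :=
    CB.of_clm _ (fun z hz => (mem_ball_zero_iff.1 hz).le)
      (ContinuousLinearMap.norm_id_le.trans (by norm_num))
  have c5 := CB.bilin (ContinuousLinearMap.mul ℝ P2) (ContinuousLinearMap.opNorm_mul_le ℝ P2)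
    c4 c3 (by norm_num) contDiff_id (hf1.clm_apply D.contDiff)
  have : (fun z : P2 => z * γ (d * z)) = fun z => ContinuousLinearMap.mul ℝ P2
      (ContinuousLinearMap.id ℝ P2 z) (((fun z => e (0, z)) ∘ fun z => D z) z (D z)) := by
    ext1 z
    rw [hγe]
    rfl
  rw [this]
  exact c5.mono Subset.rfl le_rfl (le_of_eq (by ring))

theorem sum_pow_le {q : ℝ} (h0 : 0 ≤ q) (h1 : q < 1) (k : ℕ) :
    ∑ j ∈ Finset.range k, (q ^ j + q ^ (k - j)) ≤ 2 / (1 - q) := by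
  have hg : ∀ k, ∑ j ∈ Finset.range k, q ^ j ≤ (1 - q)⁻¹ := fun k => by
    rw [← tsum_geometric_of_lt_one h0 h1]
    exact (summable_geometric_of_lt_one h0 h1).sum_le_tsum _ fun i _ => pow_nonneg h0 i
  rw [Finset.sum_add_distrib]
  have h2 : ∑ j ∈ Finset.range k, q ^ (k - j) ≤ ∑ j ∈ Finset.range (k + 1), q ^ (k - j) := by
    rw [Finset.sum_range_succ]
    linarith [pow_nonneg h0 (k - k)]
  rw [Finset.sum_flip (fun j => q ^ j)] at h2
  have h3 := hg k
  have h4 := hg (k + 1)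
  rw [div_eq_mul_inv]
  linarith

/-- Passage near a saddle: in coordinates rescaled by `(ρ, ρ l ^ k)` at the entrance and
`(ρ l ^ k, ρ)` at the exit, `k` iterations are `O(ρ)`-close to the identity, uniformly
in `k`. -/
theorem transit {r : ℕ} {F : P2 → P2} (hF : ContDiff ℝ (r + 2 : ℕ) F) {l : ℝ} (hl0 : l ≠ 0)
    (hl : |l| < 1) (hd : HasFDerivAt F (diagL l) 0) {ε : ℝ} (hε : 0 < ε)
    (h1 : ∀ x, |x| < ε → (F (x, 0)).2 = 0) (h2 : ∀ y, |y| < ε → (F (0, y)).1 = 0) :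
    ∃ C : ℝ, 1 ≤ C ∧ ∃ ρ₀ > 0, ∀ ρ, 0 < ρ → ρ ≤ ρ₀ → ∀ k : ℕ, ∃ G : P2 → P2,
      ContDiff ℝ r G ∧ CB (Metric.ball 0 1) r (C * ρ) (fun z => G z - z) ∧
      ∀ z ∈ Metric.ball (0 : P2) 1,
        (∀ j ≤ k, ‖F^[j] (ρ * z.1, ρ * l ^ k * z.2)‖ ≤ 2 * ρ) ∧
        F^[k] (ρ * z.1, ρ * l ^ k * z.2) = (ρ * l ^ k * (G z).1, ρ * (G z).2) := by
  obtain ⟨A, hA, hA0, hFA⟩ := exists_axes_form (r := r + 1) hF hd h1 h2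
  let γ : P2 → P2 := fun z => ((l⁻¹, l) : P2) * A z - 1
  have hγ : ContDiff ℝ (r + 1 : ℕ) γ := (contDiff_const.mul hA).sub contDiff_const
  have hγ0 : γ 0 = 0 := by
    simp only [γ, hA0]
    exact Prod.ext (by simp [hl0]) (by simp [hl0])
  have hFγ : ∀ z, ‖z‖ < ε → F z = ((l, l⁻¹) : P2) * (z + z * γ z) := fun z hz => by
    have hu : ((l, l⁻¹) : P2) * (l⁻¹, l) = 1 := Prod.ext (by simp [hl0]) (by simp [hl0])
    rw [hFA z hz]
    calc z * A z = z * A z * (((l, l⁻¹) : P2) * (l⁻¹, l)) := by rw [hu, mul_one]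
      _ = _ := by simp only [γ]; ring
  obtain ⟨C₁, hC₁, hb⟩ := mul_small_bound hγ hγ0
  have h1l : 0 < 1 - |l| := by linarith
  set Cw := r.factorial * 2 ^ r * (C₁ * (2 / (1 - |l|))) with hCw
  have hCw0 : 0 < Cw := by positivity
  refine ⟨Cw + 1, by linarith, min 1 (min (ε / 3) (1 / Cw)), by positivity, ?_⟩
  intro ρ hρ hρ₀ k
  have hρ1 : ρ ≤ 1 := hρ₀.trans (min_le_left _ _)
  have hρε : ρ ≤ ε / 3 := hρ₀.trans ((min_le_right _ _).trans (min_le_left _ _))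
  have hρC : Cw * ρ ≤ 1 := by
    have := hρ₀.trans ((min_le_right _ _).trans (min_le_right _ _))
    rw [le_div_iff₀ hCw0] at this
    linarith
  let dd : ℕ → P2 := fun j => (ρ * l ^ j, ρ * l ^ (k - j))
  have hq : ∀ j : ℕ, |l| ^ j ≤ 1 := fun j => pow_le_one₀ (abs_nonneg _) hl.le
  have hdd : ∀ j, ‖dd j‖ ≤ ρ := fun j => by
    rw [Prod.norm_def]
    refine max_le ?_ ?_ <;> simp only [dd, Real.norm_eq_abs, abs_mul, abs_pow, abs_of_pos hρ]
    · exact mul_le_of_le_one_right hρ.le (hq j)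
    · exact mul_le_of_le_one_right hρ.le (hq _)
  have hdd' : ∀ j, ‖dd j‖ ≤ ρ * (|l| ^ j + |l| ^ (k - j)) := fun j => by
    have p1 := pow_nonneg (abs_nonneg l) j
    have p2 := pow_nonneg (abs_nonneg l) (k - j)
    rw [Prod.norm_def]
    refine max_le ?_ ?_ <;> simp only [dd, Real.norm_eq_abs, abs_mul, abs_pow, abs_of_pos hρ] <;>
      gcongr <;> linarith
  let h : ℕ → P2 → P2 := fun j z => z * γ (dd j * z)
  have hh : ∀ j, ContDiff ℝ r (h j) := fun j =>
    contDiff_id.mul ((hγ.of_le (by exact_mod_cast Nat.le_succ r)).comp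
      (contDiff_const.mul contDiff_id))
  set w : ℕ → ℝ := fun j => C₁ * (ρ * (|l| ^ j + |l| ^ (k - j))) with hw
  have hB : ∀ j, CB (Metric.ball 0 2) r (w j) (h j) := fun j =>
    (hb (dd j) ((hdd j).trans hρ1)).mono Subset.rfl le_rfl (by
      have := hdd' j
      simp only [hw]
      gcongr)
  have hwp : ∀ j, 0 ≤ w j := fun j => by positivity
  have hsum : r.factorial * 2 ^ r * ∑ j ∈ Finset.range k, w j ≤ Cw * ρ := by
    have := sum_pow_le (abs_nonneg l) hl k
    simp only [hw, ← Finset.mul_sum, hCw]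
    have e : r.factorial * 2 ^ r * (C₁ * (2 / (1 - |l|))) * ρ =
      r.factorial * 2 ^ r * (C₁ * (ρ * (2 / (1 - |l|)))) := by ring
    rw [e]
    gcongr
  have hpart : ∀ j ≤ k, r.factorial * 2 ^ r * ∑ i ∈ Finset.range j, w i ≤ 1 := fun j hj => by
    refine le_trans ?_ (hsum.trans hρC)
    gcongr
  refine ⟨compAdd h k, compAdd_contDiff hh k, ?_, fun z hz => ?_⟩
  · exact (compAdd_bound hh k (fun j _ => hB j) (hpart k le_rfl)).mono Subset.rfl le_rfl
      (hsum.trans (by nlinarith))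
  · have hz2 : ∀ j ≤ k, ‖compAdd h j z‖ ≤ 2 := fun j hj => by
      have c := (compAdd_bound hh j (fun j _ => hB j) (hpart j hj)).norm_le hz
      have hz1 := mem_ball_zero_iff.1 hz
      have : compAdd h j z = (compAdd h j z - z) + z := by abel
      rw [this]
      exact (norm_add_le _ _).trans (by linarith [hpart j hj])
    have hn : ∀ j ≤ k, ‖dd j * compAdd h j z‖ ≤ 2 * ρ := fun j hj => by
      refine (norm_mul_le _ _).trans ?_
      have := mul_le_mul (hdd j) (hz2 j hj) (norm_nonneg _) hρ.le
      linarith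
    have hit : ∀ j ≤ k, F^[j] (ρ * z.1, ρ * l ^ k * z.2) = dd j * compAdd h j z := by
      intro j
      induction j with
      | zero =>
        intro _
        simp only [dd, compAdd, Function.iterate_zero, id, pow_zero, mul_one, Nat.sub_zero]
        rfl
      | succ j ih =>
        intro hj
        rw [Function.iterate_succ_apply', ih (by omega),
          hFγ _ ((hn j (by omega)).trans_lt (by linarith))]
        have hdj : dd (j + 1) = ((l, l⁻¹) : P2) * dd j := by
          refine Prod.ext ?_ ?_
          · simp only [dd, Prod.fst_mul]; ring
          · simp only [dd, Prod.snd_mul]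
            obtain ⟨i, rfl⟩ : ∃ i, k = j + 1 + i := ⟨k - (j + 1), by omega⟩
            rw [show j + 1 + i - (j + 1) = i by omega, show j + 1 + i - j = i + 1 by omega]
            field_simp
            ring
        rw [hdj]
        simp only [compAdd, h]
        ring
    refine ⟨fun j hj => by rw [hit j hj]; exact hn j hj, ?_⟩
    rw [hit k le_rfl]
    refine Prod.ext ?_ ?_ <;> simp [dd]

/-- If a diffeomorphism `E` sends a vertical segment into the horizontal axis, then `E⁻¹` sends the
axis back into the vertical line, and both `E` and `E⁻¹` map the horizontal direction to a
non-horizontal one. -/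
theorem line_chart {n : ℕ} (hn : 1 ≤ n) (E : PlaneDiffeo n) {a y₀ η : ℝ} (hη : 0 < η)
    (hE : ∀ y, |y - y₀| < η → (E.toFun (a, y)).2 = 0) :
    (fderiv ℝ E.toFun (a, y₀) (1, 0)).2 ≠ 0 ∧
    (∃ η' > 0, ∀ Y, |Y - (E.toFun (a, y₀)).1| < η' → (E.invFun (Y, 0)).1 = a) ∧
    (fderiv ℝ E.invFun (E.toFun (a, y₀)) (1, 0)).2 ≠ 0 := by
  have hn0 : ((n : ℕ∞) : ℕ∞ω) ≠ 0 := by exact_mod_cast (by omega : n ≠ 0)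
  have hd : HasFDerivAt E.toFun (fderiv ℝ E.toFun (a, y₀)) (a, y₀) :=
    (E.contDiff.differentiable hn0 _).hasFDerivAt
  have hdi : HasFDerivAt E.invFun (fderiv ℝ E.invFun (E.toFun (a, y₀))) (E.toFun (a, y₀)) :=
    (E.contDiff_inv.differentiable hn0 _).hasFDerivAt
  set T := fderiv ℝ E.toFun (a, y₀)
  set S := fderiv ℝ E.invFun (E.toFun (a, y₀))
  have hST : ∀ v, S (T v) = v := fun v => by
    have h1 := hdi.comp (a, y₀) hd
    have h2 : E.invFun ∘ E.toFun = id := funext E.left_inv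
    rw [h2] at h1
    have := h1.unique (hasFDerivAt_id _)
    exact congrArg (fun L : P2 →L[ℝ] P2 => L v) this
  have hTS : ∀ v, T (S v) = v := fun v => by
    have hd' : HasFDerivAt E.toFun T (E.invFun (E.toFun (a, y₀))) := by rwa [E.left_inv]
    have h1 := hd'.comp _ hdi
    have h2 : E.toFun ∘ E.invFun = id := funext E.right_inv
    rw [h2] at h1
    have := h1.unique (hasFDerivAt_id _)
    exact congrArg (fun L : P2 →L[ℝ] P2 => L v) this
  have hv : HasDerivAt (fun y : ℝ => ((a, y) : P2)) (0, 1) y₀ :=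
    (hasDerivAt_const y₀ a).prodMk (hasDerivAt_id y₀)
  have hcurve : HasDerivAt (fun y : ℝ => E.toFun (a, y)) (T (0, 1)) y₀ :=
    hd.comp_hasDerivAt y₀ hv
  have hnear : ∀ᶠ y in 𝓝 y₀, |y - y₀| < η := by
    filter_upwards [Metric.ball_mem_nhds y₀ hη] with y hy
    rwa [Metric.mem_ball, Real.dist_eq] at hy
  have hT2 : (T (0, 1)).2 = 0 := by
    have h1 := (hasFDerivAt_snd (𝕜 := ℝ) (E := ℝ) (F := ℝ) (p := E.toFun (a, y₀))).comp_hasDerivAt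
      y₀ hcurve
    have h2 : (Prod.snd ∘ fun y : ℝ => E.toFun (a, y)) =ᶠ[𝓝 y₀] fun _ => 0 := by
      filter_upwards [hnear] with y hy using hE y hy
    exact (h1.congr_of_eventuallyEq h2.symm).unique (hasDerivAt_const y₀ (0 : ℝ))
  have hT1 : (T (0, 1)).1 ≠ 0 := fun h => by
    have h1 : T (0, 1) = 0 := Prod.ext h hT2
    have h2 := hST (0, 1)
    rw [h1, map_zero] at h2
    simpa using congrArg Prod.snd h2
  have hdec : ∀ v : P2, (T v).2 = v.1 * (T (1, 0)).2 := fun v => by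
    have : v = v.1 • ((1, 0) : P2) + v.2 • ((0, 1) : P2) := by simp
    conv_lhs => rw [this]
    rw [map_add, map_smul, map_smul]
    simp [hT2]
  refine ⟨fun h => ?_, ?_, ?_⟩
  · have h1 := hdec (S (0, 1))
    rw [hTS, h] at h1
    simp at h1
  · have hst : HasStrictDerivAt (fun y : ℝ => (E.toFun (a, y)).1) (T (0, 1)).1 y₀ := by
      have hc : ContDiff ℝ n (fun y : ℝ => (E.toFun (a, y)).1) :=
        contDiff_fst.comp (E.contDiff.comp (contDiff_const.prodMk contDiff_id))
      have h1 : HasDerivAt (Prod.fst ∘ fun y : ℝ => E.toFun (a, y)) (T (0, 1)).1 y₀ :=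
        (hasFDerivAt_fst (𝕜 := ℝ) (E := ℝ) (F := ℝ) (p := E.toFun (a, y₀))).comp_hasDerivAt
          y₀ hcurve
      exact hc.contDiffAt.hasStrictDerivAt' h1 hn0
    have hmap := hst.map_nhds_eq hT1
    have h1 : (fun y : ℝ => (E.toFun (a, y)).1) '' {y | |y - y₀| < η} ∈
        𝓝 (E.toFun (a, y₀)).1 := by
      rw [← hmap]
      exact image_mem_map hnear
    obtain ⟨η', hη', hb⟩ := Metric.mem_nhds_iff.1 h1
    refine ⟨η', hη', fun Y hY => ?_⟩
    obtain ⟨y, hy, rfl⟩ := hb (by rwa [Metric.mem_ball, Real.dist_eq])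
    have h2 : (((E.toFun (a, y)).1, 0) : P2) = E.toFun (a, y) := Prod.ext rfl (hE y hy).symm
    change (E.invFun ((E.toFun (a, y)).1, 0)).1 = a
    rw [h2, E.left_inv]
  · intro h
    have h1 := hST (0, 1)
    have h2 : T (0, 1) = (T (0, 1)).1 • ((1, 0) : P2) := Prod.ext (by simp) (by simp [hT2])
    rw [h2, map_smul] at h1
    have := congrArg Prod.snd h1
    simp [h] at this

/-! ### The rescaled return map -/

theorem iteratedFDeriv_slice (ϵ : ℝ) (i : ℕ) (hi : 1 ≤ i) (x : P2) :
    ‖iteratedFDeriv ℝ i (fun z : P2 => (ϵ, z)) x‖ ≤ 1 := by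
  obtain ⟨i, rfl⟩ : ∃ k, i = k + 1 := ⟨i - 1, by omega⟩
  rw [← norm_iteratedFDeriv_fderiv]
  have : fderiv ℝ (fun z : P2 => (ϵ, z)) = fun _ => ContinuousLinearMap.inr ℝ ℝ P2 := by
    ext1 x
    exact (hasFDerivAt_prodMk_right ϵ x).fderiv
  rw [this]
  exact CB.const (ContinuousLinearMap.norm_inr_le_one ℝ ℝ P2) (s := univ) i le_rfl x (mem_univ _)

/-- The slices of a family have uniformly bounded derivatives on a compact set. -/
theorem CB.slice {r : ℕ} {P : ℝ × P2 → P2} (hP : ContDiff ℝ r P) {K : Set (ℝ × P2)} {C : ℝ}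
    (hC : 0 ≤ C) (h : CB K r C P) (ϵ : ℝ) {s : Set P2} (hs : ∀ z ∈ s, (ϵ, z) ∈ K) :
    CB s r (r.factorial * C) (fun z => P (ϵ, z)) := by
  have := h.comp hP (contDiff_prodMk_right ϵ) (s := s) hs le_rfl hC
    fun i hi _ x _ => iteratedFDeriv_slice ϵ i hi x
  rw [one_pow, mul_one] at this
  exact this

theorem near_id_lipschitz {r : ℕ} (hr : 1 ≤ r) {G : P2 → P2} (hG : ContDiff ℝ r G)
    (h : CB (Metric.ball 0 1) r (1 / 8) (fun z => G z - z)) {x y : P2}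
    (hx : x ∈ Metric.ball (0 : P2) 1) (hy : y ∈ Metric.ball (0 : P2) 1) :
    ‖G x - G y‖ ≤ 2 * ‖x - y‖ := by
  have hd : ∀ z ∈ Metric.ball (0 : P2) 1, DifferentiableAt ℝ (fun z => G z - z) z := fun z _ =>
    ((hG.sub contDiff_id).differentiable (by exact_mod_cast (by omega : r ≠ 0))) z
  have h1 := (convex_ball (0 : P2) 1).norm_image_sub_le_of_norm_fderiv_le (𝕜 := ℝ) hd
    (fun z hz => h.norm_fderiv_le hr hz) hy hx
  have h2 : G x - G y = (G x - x - (G y - y)) + (x - y) := by abel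
  rw [h2]
  exact (norm_add_le _ _).trans (by linarith [norm_nonneg (x - y)])

/-- A map close to the identity attains every small height on each vertical segment near `0`. -/
theorem near_id_ivt {G : P2 → P2} (hG : Continuous G)
    (h : ∀ z ∈ Metric.ball (0 : P2) 1, ‖G z - z‖ ≤ 1 / 8) {X Y₀ : ℝ} (hX : |X| < 1 / 4)
    (hY : |Y₀| < 1 / 4) : ∃ Y, |Y| < 1 / 2 ∧ (G (X, Y)).2 = Y₀ := by
  rw [abs_lt] at hX hY
  have key : ∀ Y ∈ Icc (Y₀ - 1 / 4) (Y₀ + 1 / 4), |(G (X, Y)).2 - Y| ≤ 1 / 8 := fun Y hY' => by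
    have := h (X, Y) (by
      rw [mem_ball_zero_iff, Prod.norm_def, max_lt_iff]
      simp only [Real.norm_eq_abs, abs_lt]
      exact ⟨⟨by linarith, by linarith⟩, by linarith [hY'.1], by linarith [hY'.2]⟩)
    exact (norm_snd_le (G (X, Y) - (X, Y))).trans this
  have hc : ContinuousOn (fun Y => (G (X, Y)).2) (Icc (Y₀ - 1 / 4) (Y₀ + 1 / 4)) :=
    (continuous_snd.comp (hG.comp (by fun_prop))).continuousOn
  have k1 := abs_le.1 (key (Y₀ - 1 / 4) ⟨le_rfl, by linarith⟩)
  have k2 := abs_le.1 (key (Y₀ + 1 / 4) ⟨by linarith, le_rfl⟩)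
  obtain ⟨Y, hYm, hYe⟩ := intermediate_value_Icc (by linarith) hc
    (show Y₀ ∈ Icc _ _ from ⟨by linarith, by linarith⟩)
  exact ⟨Y, abs_lt.2 ⟨by linarith [hYm.1], by linarith [hYm.2]⟩, hYe⟩

/-- The composition `R_ϵ ∘ G ∘ P_ϵ` of an entrance family `P`, a near-identity transit `G`
and an exit family `R`, is a map with bounded derivatives which twists the direction
`∂/∂U`, uniformly in `G` and in small `ϵ`. The point `Uc` is chosen so that the image of
`(Uc, yp)` has height almost `yp`. -/
theorem renorm_core {r : ℕ} (hr : 1 ≤ r) {P R : ℝ × P2 → P2} (hP : ContDiff ℝ r P)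
    (hR : ContDiff ℝ r R) {κ β : ℝ → ℝ} {yp Y₀ : ℝ}
    (hP1 : ∀ U y, (P (0, (U, y))).1 = (P (0, (0, y))).1)
    (hP2 : ∀ U y, (P (0, (U, y))).2 = U * κ y)
    (hR2 : ∀ z, (R (0, z)).2 = β z.2) (hXp : |(P (0, (0, yp))).1| < 1 / 4) (hY₀ : |Y₀| < 1 / 4)
    (hκ : κ yp ≠ 0) (hβ : deriv β Y₀ ≠ 0) (hβY : β Y₀ = yp) {t : ℝ} (ht : 0 < t) :
    ∃ η > 0, η ≤ t ∧ ∃ u₀ > 0, ∃ C : ℝ, 1 ≤ C ∧ ∃ c₀ > 0, ∃ s : ℝ, (s = 1 ∨ s = -1) ∧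
      ∀ θ > 0, ∃ ϵ₀ > 0, ∀ ϵ, |ϵ| < ϵ₀ → ∀ G : P2 → P2, ContDiff ℝ r G →
        CB (Metric.ball 0 1) r (1 / 8) (fun z => G z - z) → ∃ Uc, |Uc| ≤ C ∧
          (∀ z : P2, |z.1 - Uc| < u₀ → |z.2 - yp| < η →
            P (ϵ, z) ∈ Metric.ball (0 : P2) 1 ∧ ‖G (P (ϵ, z))‖ ≤ 2 ∧
            |(G (P (ϵ, z))).2 - Y₀| < t) ∧
          CB {z | |z.1 - Uc| < u₀ ∧ |z.2 - yp| < η} r C (fun z => R (ϵ, G (P (ϵ, z)))) ∧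
          (∀ z : P2, |z.1 - Uc| < u₀ → |z.2 - yp| < η →
            c₀ ≤ s * (fderiv ℝ (fun z => R (ϵ, G (P (ϵ, z)))) z (1, 0)).2) ∧
          |(R (ϵ, G (P (ϵ, (Uc, yp))))).2 - yp| < θ := by
  have hr0 : ((r : ℕ) : ℕ∞ω) ≠ 0 := by exact_mod_cast (by omega : r ≠ 0)
  have hr1 : (1 : ℕ∞ω) ≤ r := by exact_mod_cast hr
  have hPc := hP.continuous
  have hRc := hR.continuous
  have hdP := hP.differentiable hr0
  have hdR := hR.differentiable hr0
  have hκe : κ = fun y => (P (0, (1, y))).2 := by ext1 y; rw [hP2, one_mul]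
  have hκc : Continuous κ := by rw [hκe]; fun_prop
  have hβe : β = fun Y => (R (0, (0, Y))).2 := by ext1 y; rw [hR2]
  have hβs : ContDiff ℝ 1 β := by
    rw [hβe]
    refine contDiff_snd.comp ((hR.of_le hr1).comp ?_)
    fun_prop
  have hβ'c : Continuous (deriv β) := hβs.continuous_deriv le_rfl
  set B : ℝ := 1 / |κ yp| with hB
  have hκp : 0 < |κ yp| := abs_pos.2 hκ
  have hB0 : 0 < B := by positivity
  -- the sign of the twist
  let k : ℝ × ℝ → ℝ := fun q => deriv β q.2 * κ q.1
  have hkc : Continuous k := (hβ'c.comp continuous_snd).mul (hκc.comp continuous_fst)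
  set k₀ : ℝ := deriv β Y₀ * κ yp with hk₀
  have hk₀0 : k₀ ≠ 0 := mul_ne_zero hβ hκ
  obtain ⟨s, hs, hsk⟩ : ∃ s : ℝ, (s = 1 ∨ s = -1) ∧ s * k₀ = |k₀| := by
    rcases le_total 0 k₀ with h | h
    · exact ⟨1, Or.inl rfl, by rw [abs_of_nonneg h, one_mul]⟩
    · exact ⟨-1, Or.inr rfl, by rw [abs_of_nonpos h]; ring⟩
  have hk₀p : 0 < |k₀| := abs_pos.2 hk₀0
  obtain ⟨η₅, hη₅, hk5⟩ : ∃ η₅ > 0, ∀ y Y, |y - yp| < η₅ → |Y - Y₀| < η₅ →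
      |k₀| / 2 < s * deriv β Y * κ y := by
    have h1 : ∀ᶠ q in 𝓝 (yp, Y₀), |k₀| / 2 < s * k q := by
      refine (continuous_const.mul hkc).continuousAt.eventually_const_lt ?_
      change |k₀| / 2 < s * k₀
      rw [hsk]; linarith
    obtain ⟨η₅, hη₅, h2⟩ := Metric.eventually_nhds_iff_ball.1 h1
    refine ⟨η₅, hη₅, fun y Y hy hY => ?_⟩
    have := h2 (y, Y) (by
      rw [← ball_prod_same]
      exact ⟨by rwa [Metric.mem_ball, Real.dist_eq], by rwa [Metric.mem_ball, Real.dist_eq]⟩)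
    simp only [k] at this
    linarith
  -- the tolerance for the image point
  set t' : ℝ := min t (min (η₅ / 2) (1 / 4)) with ht'
  have ht'0 : 0 < t' := by positivity
  have ht't : t' ≤ t := min_le_left _ _
  have ht'5 : t' ≤ η₅ / 2 := (min_le_right _ _).trans (min_le_left _ _)
  have ht'4 : t' ≤ 1 / 4 := (min_le_right _ _).trans (min_le_right _ _)
  let KP : Set (ℝ × P2) := Icc (-1) 1 ×ˢ (Icc (-(B + 1)) (B + 1) ×ˢ Icc (yp - 1) (yp + 1))
  have hKP : IsCompact KP := isCompact_Icc.prod (isCompact_Icc.prod isCompact_Icc)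
  let KR : Set (ℝ × P2) := Icc (-1) 1 ×ˢ Metric.closedBall 0 2
  have hKR : IsCompact KR := isCompact_Icc.prod (isCompact_closedBall _ _)
  have hUP := Metric.uniformContinuousOn_iff.1 (hKP.uniformContinuousOn_of_continuous hPc.continuousOn)
  have hUR := Metric.uniformContinuousOn_iff.1 (hKR.uniformContinuousOn_of_continuous hRc.continuousOn)
  obtain ⟨δ₁, hδ₁, hP₁⟩ := hUP (t' / 2) (by positivity)
  obtain ⟨CP, hCP, hCPb⟩ := CB.of_compact hKP hP
  obtain ⟨CR, hCR, hCRb⟩ := CB.of_compact hKR hR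
  set η : ℝ := min t (min (δ₁ / 2) (min (η₅ / 2) (1 / 2))) with hη
  have hη0 : 0 < η := by positivity
  have hηδ : η ≤ δ₁ / 2 := (min_le_right _ _).trans (min_le_left _ _)
  have hη5 : η ≤ η₅ / 2 := (min_le_right _ _).trans ((min_le_right _ _).trans (min_le_left _ _))
  have hη1 : η ≤ 1 / 2 := (min_le_right _ _).trans ((min_le_right _ _).trans (min_le_right _ _))
  set u₀ : ℝ := min (δ₁ / 2) (1 / 2) with hu₀
  have hu₀0 : 0 < u₀ := by positivity
  have hu₀δ : u₀ ≤ δ₁ / 2 := min_le_left _ _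
  have hu₀1 : u₀ ≤ 1 / 2 := min_le_right _ _
  have hrf : (1 : ℝ) ≤ r.factorial := by exact_mod_cast r.factorial_pos
  have hrf0 : (0 : ℝ) ≤ r.factorial := by linarith
  set D₁ : ℝ := r.factorial * CP with hD₁
  have hD₁1 : 1 ≤ D₁ := one_le_mul_of_one_le_of_one_le hrf hCP
  set D₂ : ℝ := r.factorial * (1 / 8 + 2) * D₁ ^ r with hD₂
  have hD₂1 : 1 ≤ D₂ := one_le_mul_of_one_le_of_one_le (by nlinarith) (one_le_pow₀ hD₁1)
  set D₃ : ℝ := r.factorial * (r.factorial * CR) * D₂ ^ r with hD₃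
  have hD₃0 : 0 ≤ D₃ := by positivity
  -- the twist at small parameters
  let q : ℝ → P2 × P2 × (P2 →L[ℝ] P2) → ℝ := fun ϵ w =>
    (fderiv ℝ R (ϵ, w.2.1) (0, w.2.2 (fderiv ℝ P (ϵ, w.1) (0, (1, 0))))).2
  have hqc : Continuous fun p : ℝ × (P2 × P2 × (P2 →L[ℝ] P2)) => q p.1 p.2 := by
    have hR' := hR.continuous_fderiv hr0
    have hP' := hP.continuous_fderiv hr0
    simp only [q]
    fun_prop
  have hq0 : ∀ w : P2 × P2 × (P2 →L[ℝ] P2),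
      q 0 w = deriv β w.2.1.2 * (κ w.1.2 * (w.2.2 (0, 1)).2) := by
    rintro ⟨⟨U, y⟩, z, T⟩
    have e1 : fderiv ℝ P (0, (U, y)) (0, (1, 0)) = (0, κ y) := by
      have hv : HasDerivAt (fun u : ℝ => ((0, (u, y)) : ℝ × P2)) (0, (1, 0)) U :=
        (hasDerivAt_const U (0 : ℝ)).prodMk ((hasDerivAt_id U).prodMk (hasDerivAt_const U y))
      have h1 := (hdP (0, (U, y))).hasFDerivAt.comp_hasDerivAt U hv
      have h2 : (P ∘ fun u : ℝ => ((0, (u, y)) : ℝ × P2)) =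
          fun u => ((P (0, (0, y))).1, u * κ y) := by
        ext1 u
        exact Prod.ext (hP1 u y) (hP2 u y)
      rw [h2] at h1
      have h3 : HasDerivAt (fun u : ℝ => (((P (0, (0, y))).1, u * κ y) : P2)) (0, κ y) U := by
        have := (hasDerivAt_const U (P (0, (0, y))).1).prodMk ((hasDerivAt_id U).mul_const (κ y))
        simpa using this
      exact h1.unique h3
    have e2 : ∀ v : P2, (fderiv ℝ R (0, z) (0, v)).2 = deriv β z.2 * v.2 := fun v => by
      have hv : HasFDerivAt (fun w : P2 => ((0, w) : ℝ × P2)) (ContinuousLinearMap.inr ℝ ℝ P2) z :=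
        hasFDerivAt_prodMk_right 0 z
      have h1 := (hasFDerivAt_snd (𝕜 := ℝ) (E := ℝ) (F := ℝ) (p := R (0, z))).comp z
        ((hdR (0, z)).hasFDerivAt.comp z hv)
      have h2 : (Prod.snd ∘ R ∘ fun w : P2 => ((0, w) : ℝ × P2)) = β ∘ Prod.snd := by
        ext1 w
        exact hR2 w
      rw [h2] at h1
      have h3 : HasFDerivAt (β ∘ Prod.snd) _ z :=
        ((hβs.differentiable one_ne_zero) z.2).hasDerivAt.hasFDerivAt.comp z
          (hasFDerivAt_snd (𝕜 := ℝ) (E := ℝ) (F := ℝ))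
      have h4 := congrArg (fun L : P2 →L[ℝ] ℝ => L v) (h1.unique h3)
      simp only [ContinuousLinearMap.comp_apply] at h4
      rw [mul_comm]
      simpa using h4
    simp only [q]
    rw [e1, e2]
    have h5 : ((0, κ y) : P2) = κ y • ((0, 1) : P2) := by simp
    rw [h5, map_smul]
    rfl
  let Kq : Set (P2 × P2 × (P2 →L[ℝ] P2)) :=
    (Icc (-(B + 1)) (B + 1) ×ˢ Icc (yp - η) (yp + η)) ×ˢ
      ((Icc (-2) 2 ×ˢ Icc (Y₀ - t') (Y₀ + t')) ×ˢ
        Metric.closedBall (ContinuousLinearMap.id ℝ P2) (1 / 2))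
  have : ProperSpace (P2 →L[ℝ] P2) := FiniteDimensional.proper ℝ _
  have hKq : IsCompact Kq := (isCompact_Icc.prod isCompact_Icc).prod
    ((isCompact_Icc.prod isCompact_Icc).prod (isCompact_closedBall _ _))
  have hev : ∀ᶠ ϵ in 𝓝 (0 : ℝ), ∀ w ∈ Kq, |k₀| / 8 < s * q ϵ w := by
    refine hKq.eventually_forall_of_forall_eventually fun w hw => ?_
    refine (continuous_const.mul hqc).continuousAt.eventually_const_lt ?_
    obtain ⟨⟨-, hy⟩, ⟨-, hY⟩, hT⟩ := hw
    change |k₀| / 8 < s * q 0 w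
    rw [hq0]
    have h1 := hk5 w.1.2 w.2.1.2 (abs_lt.2 ⟨by linarith [hy.1], by linarith [hy.2]⟩)
      (abs_lt.2 ⟨by linarith [hY.1], by linarith [hY.2]⟩)
    have h2 : 1 / 2 ≤ (w.2.2 (0, 1)).2 := by
      rw [mem_closedBall_iff_norm] at hT
      have h3 := (w.2.2 - ContinuousLinearMap.id ℝ P2).le_of_opNorm_le hT (0, 1)
      rw [sub_apply, ContinuousLinearMap.id_apply] at h3
      have h4 := (norm_snd_le _).trans h3
      have h5 : ‖((0, 1) : P2)‖ = 1 := by simp [Prod.norm_def]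
      rw [h5, Real.norm_eq_abs, Prod.snd_sub] at h4
      have := (abs_le.1 h4).1
      simp only at this
      linarith
    calc |k₀| / 8 < |k₀| / 2 * (1 / 2) := by linarith
      _ ≤ (s * deriv β w.2.1.2 * κ w.1.2) * (w.2.2 (0, 1)).2 :=
          mul_le_mul h1.le h2 (by norm_num) (by linarith)
      _ = _ := by ring
  obtain ⟨ϵ₁, hϵ₁, hq1⟩ := Metric.eventually_nhds_iff_ball.1 hev
  refine ⟨η, hη0, min_le_left _ _, u₀, hu₀0, max 1 (max B D₃), le_max_left _ _, |k₀| / 8,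
    by positivity, s, hs, fun θ hθ => ?_⟩
  obtain ⟨δ₂, hδ₂, hR₂⟩ := hUR θ hθ
  obtain ⟨δ₃, hδ₃, hP₃⟩ := hUP (δ₂ / 2) (by positivity)
  refine ⟨min 1 (min δ₁ (min δ₂ (min δ₃ ϵ₁))), by positivity, fun ϵ hϵ G hG hGb => ?_⟩
  simp only [lt_min_iff] at hϵ
  obtain ⟨hϵ1, hϵδ₁, hϵδ₂, hϵδ₃, hϵϵ₁⟩ := hϵ
  have hG0 : ∀ z ∈ Metric.ball (0 : P2) 1, ‖G z - z‖ ≤ 1 / 8 := fun z hz => hGb.norm_le hz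
  obtain ⟨Y, hY, hGY⟩ := near_id_ivt hG.continuous hG0 hXp hY₀
  set Xp := (P (0, (0, yp))).1 with hXpd
  have hUc : |Y / κ yp| ≤ B := by
    rw [abs_div, hB]
    gcongr
    linarith
  set Uc := Y / κ yp with hUcd
  have hPc0 : P (0, (Uc, yp)) = (Xp, Y) := by
    refine Prod.ext (hP1 _ _) ?_
    rw [hP2, hUcd, div_mul_cancel₀ _ hκ]
  have hXY : ‖((Xp, Y) : P2)‖ < 1 / 2 := by
    rw [Prod.norm_def, max_lt_iff]
    exact ⟨by rw [Real.norm_eq_abs]; linarith, by rwa [Real.norm_eq_abs]⟩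
  have hXY1 : ((Xp, Y) : P2) ∈ Metric.ball (0 : P2) 1 := by
    rw [mem_ball_zero_iff]; linarith
  have hmemP : ∀ e : ℝ, |e| < 1 → ∀ z : P2, |z.1 - Uc| < u₀ → |z.2 - yp| < η → (e, z) ∈ KP := by
    intro e he z h1 h2
    rw [abs_lt] at he h1 h2
    have := abs_le.1 hUc
    exact ⟨⟨he.1.le, he.2.le⟩, ⟨by linarith, by linarith⟩, ⟨by linarith, by linarith⟩⟩
  have hc0P : ((0, (Uc, yp)) : ℝ × P2) ∈ KP :=
    hmemP 0 (by simp) (Uc, yp) (by simpa using hu₀0) (by simpa using hη0)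
  have hPnear : ∀ z : P2, |z.1 - Uc| < u₀ → |z.2 - yp| < η → ‖P (ϵ, z) - (Xp, Y)‖ < t' / 2 := by
    intro z h1 h2
    have := hP₁ (ϵ, z) (hmemP ϵ hϵ1 z h1 h2) (0, (Uc, yp)) hc0P (by
      rw [Prod.dist_eq, Prod.dist_eq, max_lt_iff, max_lt_iff]
      simp only [Real.dist_eq, sub_zero]
      exact ⟨hϵδ₁, by linarith, by linarith⟩)
    rwa [hPc0, dist_eq_norm] at this
  have hPball : ∀ z : P2, |z.1 - Uc| < u₀ → |z.2 - yp| < η →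
      P (ϵ, z) ∈ Metric.ball (0 : P2) 1 := fun z h1 h2 => by
    rw [mem_ball_zero_iff]
    have e : P (ϵ, z) = (P (ϵ, z) - (Xp, Y)) + (Xp, Y) := by abel
    rw [e]
    exact (norm_add_le _ _).trans_lt (by linarith [hPnear z h1 h2])
  have hG2 : ∀ z ∈ Metric.ball (0 : P2) 1, ‖G z‖ ≤ 2 := fun z hz => by
    have e : G z = (G z - z) + z := by abel
    rw [e]
    exact (norm_add_le _ _).trans (by linarith [hG0 z hz, mem_ball_zero_iff.1 hz])
  have hGnear : ∀ z : P2, |z.1 - Uc| < u₀ → |z.2 - yp| < η →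
      |(G (P (ϵ, z))).2 - Y₀| < t' := fun z h1 h2 => by
    have h3 := near_id_lipschitz hr hG hGb (hPball z h1 h2) hXY1
    have h4 := (norm_snd_le _).trans h3
    rw [Prod.snd_sub, hGY, Real.norm_eq_abs] at h4
    linarith [hPnear z h1 h2]
  have hchain : ∀ z : P2, HasFDerivAt (fun z => R (ϵ, G (P (ϵ, z)))) _ z := fun z =>
    (hdR (ϵ, G (P (ϵ, z)))).hasFDerivAt.comp z
      ((hasFDerivAt_prodMk_right ϵ (G (P (ϵ, z)))).comp z
        (((hG.differentiable hr0) (P (ϵ, z))).hasFDerivAt.comp z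
          ((hdP (ϵ, z)).hasFDerivAt.comp z (hasFDerivAt_prodMk_right ϵ z))))
  refine ⟨Uc, hUc.trans ((le_max_left _ _).trans (le_max_right _ _)), fun z h1 h2 =>
    ⟨hPball z h1 h2, hG2 _ (hPball z h1 h2), (hGnear z h1 h2).trans_le ht't⟩, ?_, ?_, ?_⟩
  · have hϵI : ϵ ∈ Icc (-1 : ℝ) 1 := ⟨(abs_lt.1 hϵ1).1.le, (abs_lt.1 hϵ1).2.le⟩
    have c1 : CB {z : P2 | |z.1 - Uc| < u₀ ∧ |z.2 - yp| < η} r D₁ (fun z => P (ϵ, z)) :=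
      hCPb.slice hP (by linarith) ϵ fun z hz => hmemP ϵ hϵ1 z hz.1 hz.2
    have hPs : ContDiff ℝ r (fun z => P (ϵ, z)) := hP.comp (contDiff_prodMk_right ϵ)
    have c2 : CB (Metric.ball (0 : P2) 1) r (1 / 8 + 2) G := by
      have c3 : CB (Metric.ball (0 : P2) 1) r 2 (fun z : P2 => ContinuousLinearMap.id ℝ P2 z) :=
        CB.of_clm _ (fun z hz => ((mem_ball_zero_iff.1 hz).le).trans (by norm_num))
          (ContinuousLinearMap.norm_id_le.trans (by norm_num))
      have := hGb.add c3 (hG.sub contDiff_id) contDiff_id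
      simpa using this
    have c4 : CB {z : P2 | |z.1 - Uc| < u₀ ∧ |z.2 - yp| < η} r D₂ (G ∘ fun z => P (ϵ, z)) :=
      c2.comp hG hPs (fun z hz => hPball z hz.1 hz.2) hD₁1 (by norm_num)
        fun i hi hir x hx => c1 i hir x hx
    have c5 : CB (Metric.closedBall (0 : P2) 2) r (r.factorial * CR) (fun z => R (ϵ, z)) :=
      hCRb.slice hR (by linarith) ϵ fun z hz => ⟨hϵI, hz⟩
    have c6 := c5.comp (hR.comp (contDiff_prodMk_right ϵ)) (hG.comp hPs)
      (fun z hz => mem_closedBall_zero_iff.2 (hG2 _ (hPball z hz.1 hz.2))) hD₂1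
      (by positivity) fun i hi hir x hx => c4 i hir x hx
    exact c6.mono Subset.rfl le_rfl ((le_max_right _ _).trans (le_max_right _ _))
  · intro z h1 h2
    rw [(hchain z).fderiv]
    have hT : fderiv ℝ G (P (ϵ, z)) ∈
        Metric.closedBall (ContinuousLinearMap.id ℝ P2) (1 / 2) := by
      rw [mem_closedBall_iff_norm]
      have h3 := hGb.norm_fderiv_le hr (hPball z h1 h2)
      have h4 : HasFDerivAt (fun z => G z - z) (_ : P2 →L[ℝ] P2) (P (ϵ, z)) :=
        (hG.differentiable hr0 _).hasFDerivAt.sub (hasFDerivAt_id (P (ϵ, z)))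
      rw [h4.fderiv] at h3
      exact h3.trans (by norm_num)
    have hG2' := hG2 _ (hPball z h1 h2)
    have hmem := hmemP ϵ hϵ1 z h1 h2
    have h3 := hq1 ϵ (by simpa using hϵϵ₁) (z, G (P (ϵ, z)), fderiv ℝ G (P (ϵ, z))) (by
      refine ⟨⟨hmem.2.1, ?_⟩, ⟨?_, ?_⟩, hT⟩
      · rw [abs_lt] at h2
        exact ⟨by linarith, by linarith⟩
      · have := abs_le.1 ((norm_fst_le _).trans hG2')
        exact this
      · have := abs_lt.1 (hGnear z h1 h2)
        exact ⟨by linarith, by linarith⟩)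
    exact h3.le
  · have hU0 : |((Uc, yp) : P2).1 - Uc| < u₀ := by simpa using hu₀0
    have hy0 : |((Uc, yp) : P2).2 - yp| < η := by simpa using hη0
    have h1 := hP₃ (ϵ, (Uc, yp)) (hmemP ϵ hϵ1 _ hU0 hy0) (0, (Uc, yp)) hc0P (by
      rw [Prod.dist_eq, dist_self, max_lt_iff]
      simpa using ⟨hϵδ₃, hδ₃⟩)
    rw [hPc0, dist_eq_norm] at h1
    have h2 := near_id_lipschitz hr hG hGb (hPball _ hU0 hy0) hXY1
    have h3 := hR₂ (ϵ, G (P (ϵ, (Uc, yp))))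
      ⟨⟨(abs_lt.1 hϵ1).1.le, (abs_lt.1 hϵ1).2.le⟩,
        mem_closedBall_zero_iff.2 (hG2 _ (hPball _ hU0 hy0))⟩ (0, G (Xp, Y))
      ⟨by simp, mem_closedBall_zero_iff.2 (hG2 _ hXY1)⟩ (by
        rw [Prod.dist_eq, max_lt_iff, dist_eq_norm (G _)]
        refine ⟨by simpa using hϵδ₂, ?_⟩
        change ‖G (P (ϵ, (Uc, yp))) - G (Xp, Y)‖ < δ₂
        linarith)
    rw [dist_eq_norm] at h3
    have h4 := (norm_snd_le _).trans_lt h3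
    rwa [Prod.snd_sub, hR2, hGY, hβY] at h4

/-! ### Return maps near the band -/

/-- Rescaling of the entrance map. -/
theorem entry_rescale {n : ℕ} {E : P2 → P2} (hE : ContDiff ℝ (n + 1 : ℕ) E) {a ρ yp η : ℝ}
    (hρ : 0 < ρ) (h0 : ∀ y, |y - yp| < η → (E (a, y)).2 = 0) :
    ∃ P : ℝ × P2 → P2, ContDiff ℝ n P ∧
      (∀ U y, (P (0, (U, y))).1 = (E (a, y)).1 / ρ) ∧
      (∀ U y, (P (0, (U, y))).2 = U * ((fderiv ℝ E (a, y) (1, 0)).2 / ρ)) ∧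
      ∀ ϵ z, |z.2 - yp| < η →
        E (a + ϵ * z.1, z.2) = (ρ * (P (ϵ, z)).1, ρ * ϵ * (P (ϵ, z)).2) := by
  obtain ⟨e, he, hev, he0⟩ := exists_hadamard hE
  have hE' : ContDiff ℝ n E := hE.of_le (by exact_mod_cast n.le_succ)
  refine ⟨fun q => ((E (a + q.1 * q.2.1, q.2.2)).1 / ρ,
    q.2.1 * ((e ((a, q.2.2), (q.1 * q.2.1, 0)) (1, 0)).2 / ρ)), ?_, ?_, ?_, ?_⟩
  · refine ContDiff.prodMk ?_ ?_
    · exact (contDiff_fst.comp (hE'.comp (by fun_prop))).div_const ρ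
    · refine ContDiff.mul (by fun_prop) (ContDiff.div_const ?_ ρ)
      exact contDiff_snd.comp (ContDiff.clm_apply (he.comp (by fun_prop)) contDiff_const)
  · intro U y
    simp
  · intro U y
    have := he0 (a, y)
    simp only [zero_mul]
    rw [show ((0 : ℝ), (0 : ℝ)) = 0 from rfl, this]
  · intro ϵ z hz
    have h1 := hev (a, z.2) (ϵ * z.1, 0)
    have h2 : ((ϵ * z.1, 0) : P2) = (ϵ * z.1) • ((1, 0) : P2) := by simp
    have h3 := congrArg Prod.snd h1
    rw [h2, map_smul, ← h2] at h3
    simp only [Prod.snd_sub, Prod.smul_snd, smul_eq_mul, Prod.mk_add_mk, add_zero,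
      h0 _ hz, sub_zero] at h3
    refine Prod.ext ?_ ?_
    · change _ = ρ * (_ / ρ)
      field_simp
    · change _ = ρ * ϵ * (z.1 * (_ / ρ))
      rw [h3]
      field_simp

/-- Rescaling of the exit map. -/
theorem exit_rescale {n : ℕ} {E : P2 → P2} (hE : ContDiff ℝ (n + 1 : ℕ) E) {a ρ Yp η : ℝ}
    (h0 : ∀ Y, |Y - Yp| < η → (E (0, Y)).1 = a) :
    ∃ R : ℝ × P2 → P2, ContDiff ℝ n R ∧
      (∀ z, (R (0, z)).2 = (E (0, ρ * z.2)).2) ∧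
      ∀ ϵ z, |ρ * z.2 - Yp| < η →
        E (ρ * ϵ * z.1, ρ * z.2) = (a + ϵ * (R (ϵ, z)).1, (R (ϵ, z)).2) := by
  obtain ⟨e, he, hev, he0⟩ := exists_hadamard hE
  have hE' : ContDiff ℝ n E := hE.of_le (by exact_mod_cast n.le_succ)
  refine ⟨fun q => (ρ * q.2.1 * (e ((0, ρ * q.2.2), (ρ * q.1 * q.2.1, 0)) (1, 0)).1,
    (E (ρ * q.1 * q.2.1, ρ * q.2.2)).2), ?_, ?_, ?_⟩
  · refine ContDiff.prodMk ?_ ?_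
    · refine ContDiff.mul (by fun_prop) ?_
      exact contDiff_fst.comp (ContDiff.clm_apply (he.comp (by fun_prop)) contDiff_const)
    · exact contDiff_snd.comp (hE'.comp (by fun_prop))
  · intro z
    simp
  · intro ϵ z hz
    have h1 := hev (0, ρ * z.2) (ρ * ϵ * z.1, 0)
    have h2 : ((ρ * ϵ * z.1, 0) : P2) = (ρ * ϵ * z.1) • ((1, 0) : P2) := by simp
    have h3 := congrArg Prod.fst h1
    rw [h2, map_smul, ← h2] at h3
    simp only [Prod.fst_sub, Prod.smul_fst, smul_eq_mul, Prod.mk_add_mk, add_zero, zero_add,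
      h0 _ hz] at h3
    refine Prod.ext ?_ rfl
    change _ = a + ϵ * (ρ * z.1 * _)
    rw [sub_eq_iff_eq_add'] at h3
    rw [h3]
    ring

/-- Finitely many continuous maps not sending `q` to `p` keep a ball around `q` away from a ball
around `p`. -/
theorem sep_ball {g : ℕ → P2 → P2} (hg : ∀ i, Continuous (g i)) {q p : P2} (M : ℕ)
    (h : ∀ i ≤ M, g i q ≠ p) :
    ∃ η > 0, ∀ i ≤ M, ∀ x ∈ Metric.closedBall q η, g i x ∉ Metric.ball p η := by
  induction M with
  | zero =>
    have h1 := h 0 le_rfl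
    have h2 : ∀ᶠ x in 𝓝 q, dist (g 0 q) p / 2 < dist (g 0 x) p :=
      (((hg 0).dist continuous_const).continuousAt).eventually_const_lt
        (by linarith [dist_pos.2 h1])
    obtain ⟨e, he, h3⟩ := Metric.eventually_nhds_iff_ball.1 h2
    refine ⟨min (e / 2) (dist (g 0 q) p / 2), lt_min (by positivity)
      (by linarith [dist_pos.2 h1]), fun i hi x hx => ?_⟩
    obtain rfl : i = 0 := by omega
    have := h3 x (Metric.closedBall_subset_ball (by linarith [min_le_left (e / 2) (dist (g 0 q) p / 2)]) hx)
    rw [Metric.mem_ball, not_lt]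
    exact (min_le_right _ _).trans this.le
  | succ M ih =>
    obtain ⟨η, hη, h1⟩ := ih fun i hi => h i (by omega)
    have h1' := h (M + 1) le_rfl
    have h2 : ∀ᶠ x in 𝓝 q, dist (g (M + 1) q) p / 2 < dist (g (M + 1) x) p :=
      (((hg _).dist continuous_const).continuousAt).eventually_const_lt
        (by linarith [dist_pos.2 h1'])
    obtain ⟨e, he, h3⟩ := Metric.eventually_nhds_iff_ball.1 h2
    set η' := min η (min (e / 2) (dist (g (M + 1) q) p / 2))
    refine ⟨η', lt_min hη (lt_min (by positivity) (by linarith [dist_pos.2 h1'])),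
      fun i hi x hx => ?_⟩
    rcases Nat.lt_or_ge M i with hMi | hMi
    · obtain rfl : i = M + 1 := by omega
      have h4 : η' ≤ e / 2 := (min_le_right _ _).trans (min_le_left _ _)
      have := h3 x (Metric.closedBall_subset_ball (by linarith) hx)
      rw [Metric.mem_ball, not_lt]
      exact ((min_le_right _ _).trans (min_le_right _ _)).trans this.le
    · exact fun h5 => h1 i hMi x (Metric.closedBall_subset_closedBall (min_le_left _ _) hx)
        (Metric.ball_subset_ball (min_le_left _ _) h5)

/-- The rescaled return map, in coordinates centred on the band. -/
noncomputable def ret (f : P2 → P2) (a ϵ : ℝ) (n : ℕ) (z : P2) : P2 :=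
  (ϵ⁻¹ * ((f^[n] (a + ϵ * z.1, z.2)).1 - a), (f^[n] (a + ϵ * z.1, z.2)).2)

/-- Near a homoclinic band, first return maps to a neighbourhood of a point of the band exist which,
after a rescaling of the horizontal direction by arbitrarily small factors `ϵ`, have uniformly
bounded derivatives and a twist of fixed sign bounded below. The intermediate iterates avoid the
neighbourhood. -/
theorem return_family (f : PlaneDiffeo ⊤) {τ : ℕ} (hyp : IsHypPerPtPlane f.toFun τ 0)
    {a c d : ℝ} (hcd : c < d) {j : ℕ} (hj : j < τ)
    (hIu : ({a} ×ˢ Icc c d : Set P2) ⊆ stableSetPlane f.invFun 0)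
    (hIs : ({a} ×ˢ Icc c d : Set P2) ⊆ stableSetPlane f.toFun (f.toFun^[j] 0))
    {U : Set P2} (hU : IsOpen U) (hIU : ({a} ×ˢ Icc c d : Set P2) ⊆ U) {r : ℕ} (hr : 1 ≤ r) :
    ∃ yp : ℝ, ∃ η > 0, Metric.ball ((a, yp) : P2) η ⊆ U ∧ ∃ u₀ > 0, ∃ C : ℝ, 1 ≤ C ∧
      ∃ c₀ > 0, ∃ s : ℝ, (s = 1 ∨ s = -1) ∧ ∀ θ > 0, ∃ ϵ : ℝ, ϵ ≠ 0 ∧ |ϵ| < θ ∧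
        ∃ Uc, |Uc| ≤ C ∧ ∃ n₁ : ℕ, 2 ≤ n₁ ∧
          (∀ z : P2, |z.1 - Uc| < u₀ → |z.2 - yp| < η → ∀ l, 0 < l → l < n₁ →
            f.toFun^[l] (a + ϵ * z.1, z.2) ∉ Metric.ball ((a, yp) : P2) η) ∧
          CB {z | |z.1 - Uc| < u₀ ∧ |z.2 - yp| < η} r C (ret f.toFun a ϵ n₁) ∧
          (∀ z : P2, |z.1 - Uc| < u₀ → |z.2 - yp| < η →
            c₀ ≤ s * (fderiv ℝ (ret f.toFun a ϵ n₁) z (1, 0)).2) ∧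
          |(ret f.toFun a ϵ n₁ (Uc, yp)).2 - yp| < θ := by
  have hτ := hyp.1
  have hfix := hyp.2.1
  have hfc : ∀ i, Continuous f.toFun^[i] := fun i => f.contDiff.continuous.iterate i
  obtain ⟨l, hl0, hl1, Ψ, F, hΨ0, hFS, hF, hF', ε, hε, hs, hu, hx, hy⟩ :=
    exists_chart (n := r + 2) (by omega) f hyp
  obtain ⟨yp, hyp', η₁, hη₁, M, hax, hnp, hno, ht1, ht2⟩ :=
    exists_band_point f hτ hfix Ψ F hΨ0 hF hF' hε hs hu hcd hj hIu hIs
  obtain ⟨CT, hCT, ρ₀, hρ₀, htr⟩ := transit (r := r) F.contDiff hl0 hl1 hFS.2 hε hx hy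
  set p : P2 := (a, yp) with hp
  have hΨi0 : Ψ.invFun 0 = 0 := inv_zero hΨ0
  -- the band point stays away from the orbit of the saddle
  obtain ⟨η₂, hη₂, hsep2⟩ := sep_ball (g := fun i z => f.toFun^[i] (Ψ.invFun z))
    (fun i => (hfc i).comp Ψ.contDiff_inv.continuous) (q := 0) (p := p) τ
    (fun i _ => by rw [hΨi0]; exact hno i)
  set ρ : ℝ := min ρ₀ (min (1 / (8 * CT)) (η₂ / 2)) with hρd
  have hρ : 0 < ρ := lt_min hρ₀ (lt_min (by positivity) (by positivity))
  have hρρ₀ : ρ ≤ ρ₀ := min_le_left _ _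
  have hρCT : CT * ρ ≤ 1 / 8 := by
    have : ρ ≤ 1 / (8 * CT) := (min_le_right _ _).trans (min_le_left _ _)
    calc CT * ρ ≤ CT * (1 / (8 * CT)) := by gcongr
      _ = 1 / 8 := by field_simp
  have hρη₂ : 2 * ρ ≤ η₂ := by
    have : ρ ≤ η₂ / 2 := (min_le_right _ _).trans (min_le_right _ _)
    linarith
  -- the transition times
  have hev1 : ∀ᶠ k in atTop, ‖Ψ.toFun (f.toFun^[τ * k + (τ - j)] p)‖ < ρ / 4 := by
    have := ht1.norm
    rw [norm_zero] at this
    exact this.eventually (gt_mem_nhds (by positivity))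
  have hev2 : ∀ᶠ k in atTop, ‖Ψ.toFun (f.invFun^[τ * k] p)‖ < ρ / 4 := by
    have := ht2.norm
    rw [norm_zero] at this
    exact this.eventually (gt_mem_nhds (by positivity))
  obtain ⟨M₁, hM₁, hM₁M⟩ := (hev1.and (eventually_ge_atTop M)).exists
  obtain ⟨M₂, hM₂, hM₂M⟩ := (hev2.and (eventually_ge_atTop (max M 1))).exists
  set m := τ * M₁ + (τ - j) with hm
  set m' := τ * M₂ with hm'
  have hm1 : 1 ≤ m := by omega
  have hm'1 : 1 ≤ m' := Nat.mul_pos hτ (by omega)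
  set E₁ : PlaneDiffeo (r + 2 : ℕ) := dcomp Ψ (dofLe le_top (dpow f m)) with hE₁
  set E₃ : PlaneDiffeo (r + 2 : ℕ) :=
    dcomp (dswap _) (dcomp Ψ (dsymm (dofLe le_top (dpow f m')))) with hE₃
  have hE₁z : ∀ z, E₁.toFun z = Ψ.toFun (f.toFun^[m] z) := fun z => rfl
  have hE₃z : ∀ z, E₃.toFun z = (Ψ.toFun (f.invFun^[m'] z)).swap := fun z => rfl
  have hE₃i : ∀ z : P2, E₃.invFun z.swap = f.toFun^[m'] (Ψ.invFun z) := fun z => rfl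
  have hE₁0 : ∀ y, |y - yp| < η₁ → (E₁.toFun (a, y)).2 = 0 := fun y hy =>
    ((hax y hy).2 M₁ hM₁M).1
  have hE₃0 : ∀ y, |y - yp| < η₁ → (E₃.toFun (a, y)).2 = 0 := fun y hy =>
    ((hax y hy).2 M₂ (by omega)).2
  obtain ⟨hk1, -, -⟩ := line_chart (by omega) E₁ hη₁ hE₁0
  obtain ⟨-, ⟨η₃, hη₃, hE₃a⟩, hk3⟩ := line_chart (by omega) E₃ hη₁ hE₃0
  set E₂ : P2 → P2 := fun z => E₃.invFun z.swap with hE₂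
  set Yp : ℝ := (E₃.toFun p).1 with hYp
  have hE₃p : E₃.toFun p = (Yp, 0) := Prod.ext rfl (hE₃0 yp (by simpa using hη₁))
  have hE₂c : ContDiff ℝ (r + 2 : ℕ) E₂ := E₃.contDiff_inv.comp (contDiff_snd.prodMk contDiff_fst)
  have hE₂p : E₂ (0, Yp) = p := by
    change E₃.invFun (Yp, 0) = p
    rw [← hE₃p, E₃.left_inv]
  have hle : ((r + 1 : ℕ) : ℕ∞ω) ≤ (r + 2 : ℕ) := by exact_mod_cast Nat.le_succ _
  obtain ⟨P, hPc, hP1, hP2, hPE⟩ := entry_rescale (n := r) (E := E₁.toFun)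
    (E₁.contDiff.of_le hle) (a := a) hρ hE₁0
  obtain ⟨R, hRc, hR2, hRE⟩ := exit_rescale (n := r) (E := E₂)
    (hE₂c.of_le hle) (a := a) (ρ := ρ) (Yp := Yp) (η := η₃) (fun Y hY => hE₃a Y hY)
  -- no recurrence during the transitions
  obtain ⟨η₆, hη₆, hsep6⟩ := sep_ball (g := fun i => f.toFun^[i + 1]) (fun i => hfc _)
    (q := p) (p := p) (m + m') (fun i _ => hnp _ (by omega))
  have hrec : ∀ i, 1 ≤ i → i ≤ m + m' → ∀ x ∈ Metric.ball p η₆,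
      f.toFun^[i] x ∉ Metric.ball p η₆ := fun i hi him x hx => by
    have := hsep6 (i - 1) (by omega) x (Metric.ball_subset_closedBall hx)
    simpa [Nat.sub_add_cancel hi] using this
  obtain ⟨η₅, hη₅, hE₂near⟩ : ∃ η₅ > 0, ∀ w, dist w (0, Yp) < η₅ → E₂ w ∈ Metric.ball p η₆ := by
    have := hE₂c.continuous.continuousAt (x := ((0, Yp) : P2))
    have h2 := Metric.continuousAt_iff.1 this η₆ hη₆
    rw [hE₂p] at h2
    obtain ⟨e, he, h⟩ := h2
    exact ⟨e, he, fun w hw => h hw⟩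
  have hpU : U ∈ 𝓝 p := hU.mem_nhds (hIU ⟨rfl, Ioo_subset_Icc_self hyp'⟩)
  obtain ⟨η₇, hη₇, hballU⟩ := Metric.mem_nhds_iff.1 hpU
  set Y₀ : ℝ := Yp / ρ with hY₀
  have hρY₀ : ρ * Y₀ = Yp := by rw [hY₀]; field_simp
  set t : ℝ := min (min η₁ η₂) (min (min η₆ η₇) (min (η₃ / ρ) (η₅ / ρ))) with ht
  have ht0 : 0 < t := by positivity
  have htη₁ : t ≤ η₁ := (min_le_left _ _).trans (min_le_left _ _)
  have htη₂ : t ≤ η₂ := (min_le_left _ _).trans (min_le_right _ _)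
  have htη₆ : t ≤ η₆ := (min_le_right _ _).trans ((min_le_left _ _).trans (min_le_left _ _))
  have htη₇ : t ≤ η₇ := (min_le_right _ _).trans ((min_le_left _ _).trans (min_le_right _ _))
  have htη₃ : ρ * t ≤ η₃ := by
    have : t ≤ η₃ / ρ := (min_le_right _ _).trans ((min_le_right _ _).trans (min_le_left _ _))
    rwa [le_div_iff₀' hρ] at this
  have htη₅ : ρ * t ≤ η₅ := by
    have : t ≤ η₅ / ρ := (min_le_right _ _).trans ((min_le_right _ _).trans (min_le_right _ _))
    rwa [le_div_iff₀' hρ] at this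
  have hE₂d : HasDerivAt (fun Y => (E₂ (0, ρ * Y)).2)
      (ρ * (fderiv ℝ E₃.invFun (E₃.toFun p) (1, 0)).2) Y₀ := by
    have h1 : HasDerivAt (fun Y : ℝ => ((ρ * Y, 0) : P2)) ((ρ, 0) : P2) Y₀ := by
      have := ((hasDerivAt_id Y₀).const_mul ρ).prodMk (hasDerivAt_const Y₀ (0 : ℝ))
      simpa using this
    have h2 : HasFDerivAt E₃.invFun (fderiv ℝ E₃.invFun (E₃.toFun p)) (ρ * Y₀, 0) := by
      rw [hρY₀, ← hE₃p]
      exact (E₃.contDiff_inv.differentiable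
        (by exact_mod_cast (by omega : r + 2 ≠ 0)) _).hasFDerivAt
    have h3 := h2.comp_hasDerivAt Y₀ h1
    have h4 := (ContinuousLinearMap.snd ℝ ℝ ℝ).hasFDerivAt.comp_hasDerivAt Y₀ h3
    refine h4.congr_deriv ?_
    have h5 : ((ρ, 0) : P2) = ρ • ((1, 0) : P2) := by simp
    rw [h5, map_smul, map_smul]
    rfl
  obtain ⟨η, hη0, hηt, u₀, hu₀, C, hC, c₀, hc₀, s, hsgn, hcore⟩ :=
    renorm_core hr hPc hRc (κ := fun y => (fderiv ℝ E₁.toFun (a, y) (1, 0)).2 / ρ)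
      (β := fun Y => (E₂ (0, ρ * Y)).2) (yp := yp) (Y₀ := Y₀)
      (fun U y => by rw [hP1, hP1]) hP2 hR2
      (by
        rw [hP1, abs_div, abs_of_pos hρ, div_lt_iff₀ hρ]
        have := (norm_fst_le (E₁.toFun (a, yp))).trans_lt hM₁
        rw [Real.norm_eq_abs] at this
        linarith)
      (by
        rw [hY₀, abs_div, abs_of_pos hρ, div_lt_iff₀ hρ]
        have := (norm_snd_le (Ψ.toFun (f.invFun^[m'] p))).trans_lt hM₂
        rw [Real.norm_eq_abs] at this
        change |(Ψ.toFun (f.invFun^[m'] p)).2| < _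
        linarith)
      (div_ne_zero hk1 hρ.ne')
      (by rw [hE₂d.deriv]; exact mul_ne_zero hρ.ne' hk3)
      (by rw [hρY₀, hE₂p]) ht0
  refine ⟨yp, η, hη0, (Metric.ball_subset_ball (hηt.trans htη₇)).trans hballU, u₀, hu₀, C, hC,
    c₀, hc₀, s, hsgn, fun θ hθ => ?_⟩
  obtain ⟨ϵ₀, hϵ₀, hcore⟩ := hcore θ hθ
  -- the transit time
  obtain ⟨k, hk⟩ : ∃ k : ℕ, |l ^ k| < min (min ϵ₀ θ) (min (η₆ / (C + u₀)) (η₅ / (2 * ρ))) := by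
    have h1 : Tendsto (fun k : ℕ => |l ^ k|) atTop (𝓝 0) := by
      simpa [abs_pow] using tendsto_pow_atTop_nhds_zero_of_lt_one (abs_nonneg l) hl1
    exact (h1.eventually (gt_mem_nhds (by positivity))).exists
  set ϵ : ℝ := l ^ k with hϵ
  have hϵ0 : ϵ ≠ 0 := pow_ne_zero _ hl0
  have hϵ₀' : |ϵ| < ϵ₀ := hk.trans_le ((min_le_left _ _).trans (min_le_left _ _))
  have hϵθ : |ϵ| < θ := hk.trans_le ((min_le_left _ _).trans (min_le_right _ _))
  have hϵ6 : |ϵ| * (C + u₀) < η₆ := by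
    rw [← lt_div_iff₀ (by positivity)]
    exact hk.trans_le ((min_le_right _ _).trans (min_le_left _ _))
  have hϵ5 : |ϵ| * (2 * ρ) < η₅ := by
    rw [← lt_div_iff₀ (by positivity)]
    exact hk.trans_le ((min_le_right _ _).trans (min_le_right _ _))
  obtain ⟨G, hG, hGb, hGtr⟩ := htr ρ hρ hρρ₀ k
  obtain ⟨Uc, hUc, hin, hCB, htw, hcen⟩ := hcore ϵ hϵ₀' G hG
    (hGb.mono Subset.rfl le_rfl hρCT)
  set n₁ := m + τ * k + m' with hn₁
  have hstart : ∀ z : P2, |z.1 - Uc| < u₀ → |z.2 - yp| < η →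
      ((a + ϵ * z.1, z.2) : P2) ∈ Metric.ball p η₆ := fun z h1 h2 => by
    rw [mem_ball_iff_norm, Prod.norm_def, max_lt_iff]
    constructor
    · change |a + ϵ * z.1 - a| < η₆
      rw [add_sub_cancel_left, abs_mul]
      refine lt_of_le_of_lt ?_ hϵ6
      gcongr
      have := abs_add_le (z.1 - Uc) Uc
      rw [sub_add_cancel] at this
      linarith
    · change |z.2 - yp| < η₆
      linarith
  have hmid : ∀ z : P2, |z.1 - Uc| < u₀ → |z.2 - yp| < η →
      ∀ i, Ψ.toFun (f.toFun^[m + τ * i] (a + ϵ * z.1, z.2)) =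
        F.toFun^[i] (ρ * (P (ϵ, z)).1, ρ * ϵ * (P (ϵ, z)).2) := fun z h1 h2 i => by
    rw [← hPE ϵ z (h2.trans_le (hηt.trans htη₁)), hE₁z, hF, ← Function.iterate_add_apply,
      Nat.add_comm (τ * i) m]
  have hend : ∀ z : P2, |z.1 - Uc| < u₀ → |z.2 - yp| < η →
      f.toFun^[n₁] (a + ϵ * z.1, z.2) =
        E₂ (ρ * ϵ * (G (P (ϵ, z))).1, ρ * (G (P (ϵ, z))).2) := fun z h1 h2 => by
    have h3 := hmid z h1 h2 k
    rw [(hGtr _ (hin z h1 h2).1).2] at h3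
    rw [hE₂, ← h3]
    change _ = f.toFun^[m'] (Ψ.invFun (Ψ.toFun _))
    rw [Ψ.left_inv, ← Function.iterate_add_apply, hn₁, add_comm m']
  have hend2 : ∀ z : P2, |z.1 - Uc| < u₀ → |z.2 - yp| < η →
      |ρ * (G (P (ϵ, z))).2 - Yp| < ρ * t := fun z h1 h2 => by
    rw [← hρY₀, ← mul_sub, abs_mul, abs_of_pos hρ]
    exact mul_lt_mul_of_pos_left (hin z h1 h2).2.2 hρ
  have hret : ∀ z : P2, |z.1 - Uc| < u₀ → |z.2 - yp| < η →
      ret f.toFun a ϵ n₁ z = R (ϵ, G (P (ϵ, z))) := fun z h1 h2 => by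
    rw [ret, hend z h1 h2, hRE ϵ _ ((hend2 z h1 h2).trans_le htη₃)]
    refine Prod.ext ?_ rfl
    change ϵ⁻¹ * (a + ϵ * _ - a) = _
    field_simp
    ring
  have hgood : ∀ z : P2, |z.1 - Uc| < u₀ → |z.2 - yp| < η →
      ret f.toFun a ϵ n₁ =ᶠ[𝓝 z] fun z => R (ϵ, G (P (ϵ, z))) := fun z h1 h2 => by
    have o1 : IsOpen {z : P2 | |z.1 - Uc| < u₀ ∧ |z.2 - yp| < η} :=
      IsOpen.inter
        (isOpen_lt (f := fun z : P2 => |z.1 - Uc|) (g := fun _ => u₀) (by fun_prop) (by fun_prop))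
        (isOpen_lt (f := fun z : P2 => |z.2 - yp|) (g := fun _ => η) (by fun_prop) (by fun_prop))
    filter_upwards [o1.mem_nhds ⟨h1, h2⟩] with w hw using hret w hw.1 hw.2
  refine ⟨ϵ, hϵ0, hϵθ, Uc, hUc, n₁, by omega, fun z h1 h2 q hq0 hqn hmem => ?_, ?_, ?_, ?_⟩
  · have hmem6 := Metric.ball_subset_ball (hηt.trans htη₆) hmem
    rcases Nat.lt_or_ge m q with hqm | hqm
    · rcases Nat.lt_or_ge (m + τ * k) q with hqk | hqk
      · -- during the exit
        have h3 := hrec (n₁ - q) (by omega) (by omega) _ hmem6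
        rw [← Function.iterate_add_apply, Nat.sub_add_cancel hqn.le, hend z h1 h2] at h3
        refine h3 (hE₂near _ ?_)
        rw [dist_eq_norm, Prod.norm_def, max_lt_iff]
        constructor
        · change |ρ * ϵ * _ - 0| < η₅
          rw [sub_zero, abs_mul, abs_mul, abs_of_pos hρ]
          have h5 : |(G (P (ϵ, z))).1| ≤ 2 := (norm_fst_le _).trans (hin z h1 h2).2.1
          refine lt_of_le_of_lt ?_ hϵ5
          calc ρ * |ϵ| * |(G (P (ϵ, z))).1| ≤ ρ * |ϵ| * 2 := by gcongr
            _ = |ϵ| * (2 * ρ) := by ring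
        · exact (hend2 z h1 h2).trans_le htη₅
      · -- near the saddle
        have h3 : q = (q - m) % τ + (m + τ * ((q - m) / τ)) := by
          have := Nat.mod_add_div (q - m) τ
          omega
        have h4 : (q - m) / τ ≤ k := by
          rw [Nat.div_le_iff_le_mul_add_pred hτ]
          have : q - m ≤ τ * k := by omega
          omega
        have h5 := (hGtr _ (hin z h1 h2).1).1 _ h4
        rw [← hmid z h1 h2] at h5
        have h6 := hsep2 _ (Nat.mod_lt (q - m) hτ).le _
          (mem_closedBall_zero_iff.2 (h5.trans hρη₂))
        rw [Ψ.left_inv, ← Function.iterate_add_apply, ← h3] at h6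
        exact h6 (Metric.ball_subset_ball (hηt.trans htη₂) hmem)
    · exact hrec q hq0 (by omega) _ (hstart z h1 h2) hmem6
  · exact hCB.congr fun z hz => hgood z hz.1 hz.2
  · intro z h1 h2
    rw [(hgood z h1 h2).fderiv_eq]
    exact htw z h1 h2
  · rw [hret _ (by simpa using hu₀) (by simpa using hη0)]
    exact hcen

/-! ### Affine charts, distances and cyclic exponents -/

/-- The upper triangular affine map `z ↦ p + (α z₁ + β z₂, γ z₂)`. -/
noncomputable def aff (p : P2) {α γ : ℝ} (β : ℝ) (hα : α ≠ 0) (hγ : γ ≠ 0) : PlaneDiffeo ⊤ where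
  toFun z := (p.1 + (α * z.1 + β * z.2), p.2 + γ * z.2)
  invFun z := (α⁻¹ * (z.1 - p.1 - β * (γ⁻¹ * (z.2 - p.2))), γ⁻¹ * (z.2 - p.2))
  left_inv z := by
    refine Prod.ext ?_ ?_
    · simp only [add_sub_cancel_left]; field_simp; ring
    · simp only [add_sub_cancel_left]; field_simp
  right_inv z := by
    refine Prod.ext ?_ ?_
    · simp only; field_simp; ring
    · simp only; field_simp; ring
  contDiff := by fun_prop
  contDiff_inv := by fun_prop

theorem hasFDerivAt_aff (p : P2) {α γ : ℝ} (β : ℝ) (hα : α ≠ 0) (hγ : γ ≠ 0) (z : P2) :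
    HasFDerivAt (aff p β hα hγ).toFun
      ((α • ContinuousLinearMap.fst ℝ ℝ ℝ + β • ContinuousLinearMap.snd ℝ ℝ ℝ).prod
        (γ • ContinuousLinearMap.snd ℝ ℝ ℝ)) z := by
  have h1 : HasFDerivAt (fun z : P2 => z.1) (ContinuousLinearMap.fst ℝ ℝ ℝ) z := hasFDerivAt_fst
  have h2 : HasFDerivAt (fun z : P2 => z.2) (ContinuousLinearMap.snd ℝ ℝ ℝ) z := hasFDerivAt_snd
  exact (((h1.const_mul α).add (h2.const_mul β)).const_add p.1).prodMk
    ((h2.const_mul γ).const_add p.2)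

theorem det_aff (p : P2) {α γ : ℝ} (β : ℝ) (hα : α ≠ 0) (hγ : γ ≠ 0) (z : P2) :
    (fderiv ℝ (aff p β hα hγ).toFun z).det = α * γ := by
  rw [(hasFDerivAt_aff p β hα hγ z).fderiv, det_P2]
  simp

theorem fderiv_det_inv {r : ℕ∞} (hr : (r : ℕ∞ω) ≠ 0) (S : PlaneDiffeo r) {k : ℝ}
    (h : ∀ z, (fderiv ℝ S.toFun z).det = k) (z : P2) : k * (fderiv ℝ S.invFun z).det = 1 := by
  have h1 : HasFDerivAt (S.toFun ∘ S.invFun) _ z :=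
    ((S.contDiff.differentiable hr _).hasFDerivAt).comp z
      ((S.contDiff_inv.differentiable hr z).hasFDerivAt)
  have h2 : S.toFun ∘ S.invFun = id := funext S.right_inv
  rw [h2] at h1
  have h3 := (hasFDerivAt_id z).unique h1
  have h4 := congrArg ContinuousLinearMap.det h3
  rw [det_comp_P2, h] at h4
  rw [← h4, det_P2]
  simp

theorem crDistGlobal_le {r : ℕ} {f g : P2 → P2} (hf : ContDiff ℝ r f) (hg : ContDiff ℝ r g)
    {M : ℝ} (h : CB univ r M (fun z => f z - g z)) :
    crDistGlobal r f g ≤ ENNReal.ofReal ((r + 1) * M) := by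
  have h1 : ∀ i ∈ Finset.range (r + 1),
      (⨆ x : P2, (‖iteratedFDeriv ℝ i f x - iteratedFDeriv ℝ i g x‖₊ : ℝ≥0∞)) ≤
        ENNReal.ofReal M := fun i hi => by
    have hir : i ≤ r := by rw [Finset.mem_range] at hi; omega
    refine iSup_le fun x => ?_
    have h2 := h i hir x (mem_univ x)
    have h3 : iteratedFDeriv ℝ i (fun z => f z - g z) x =
        iteratedFDeriv ℝ i f x - iteratedFDeriv ℝ i g x :=
      iteratedFDeriv_sub_apply (hf.contDiffAt.of_le (by exact_mod_cast hir))
        (hg.contDiffAt.of_le (by exact_mod_cast hir))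
    rw [h3] at h2
    rw [← ENNReal.ofReal_coe_nnreal, coe_nnnorm]
    exact ENNReal.ofReal_le_ofReal h2
  refine (Finset.sum_le_sum h1).trans ?_
  rw [Finset.sum_const, Finset.card_range, nsmul_eq_mul, ENNReal.ofReal_mul (by positivity)]
  refine le_of_eq ?_
  congr 1
  rw [show ((r : ℝ) + 1) = ((r + 1 : ℕ) : ℝ) by push_cast; ring, ENNReal.ofReal_natCast]

/-- On a cycle of odd length, any positive numbers `w_i` can be written `w_i = e_i e_{i+1}`. -/
theorem exists_cyclic_exponents {N : ℕ} [NeZero N] (hN : Odd N) {Γ : ℝ} :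
    ∃ E : ℝ, 1 ≤ E ∧ ∀ g : Fin N → ℝ, (∀ i, |g i| ≤ Γ) →
      ∃ e : Fin N → ℝ, (∀ i, 0 < e i ∧ e i ≤ E ∧ (e i)⁻¹ ≤ E) ∧
        ∀ i, e i * e (i + 1) = Real.exp (g i) := by
  refine ⟨Real.exp (N * |Γ|), Real.one_le_exp (by positivity), fun g hg => ?_⟩
  let S : Fin N → ℝ := fun i => ∑ j ∈ Finset.range N, (-1) ^ j * g (i + Fin.ofNat N j)
  have hS : ∀ i, |S i / 2| ≤ N * |Γ| := fun i => by
    have h1 : |S i| ≤ ∑ j ∈ Finset.range N, |Γ| := by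
      refine (Finset.abs_sum_le_sum_abs _ _).trans (Finset.sum_le_sum fun j _ => ?_)
      rw [abs_mul, abs_pow, abs_neg, abs_one, one_pow, one_mul]
      exact (hg _).trans (le_abs_self _)
    rw [Finset.sum_const, Finset.card_range, nsmul_eq_mul] at h1
    rw [abs_div, abs_two]
    have := abs_nonneg (S i)
    linarith
  have hSS : ∀ i, S i + S (i + 1) = 2 * g i := fun i => by
    let T : ℕ → ℝ := fun j => (-1) ^ j * g (i + Fin.ofNat N j)
    have h1 : S (i + 1) = - ∑ j ∈ Finset.range N, T (j + 1) := by
      rw [← Finset.sum_neg_distrib]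
      refine Finset.sum_congr rfl fun j _ => ?_
      have h2 : i + 1 + Fin.ofNat N j = i + Fin.ofNat N (j + 1) := by
        rw [add_assoc]
        congr 1
        refine Fin.ext ?_
        simp [Fin.val_add, Fin.ofNat, Nat.add_comm]
      simp only [T]
      rw [h2, pow_succ]
      ring
    have h3 := Finset.sum_range_succ T N
    have h4 := Finset.sum_range_succ' T N
    have h5 : T N = - g i := by
      have h6 : i + Fin.ofNat N N = i := by
        refine Fin.ext ?_
        simp [Fin.ofNat]
      simp only [T]
      rw [h6, hN.neg_one_pow]
      ring
    have h7 : T 0 = g i := by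
      have h6 : i + Fin.ofNat N 0 = i := by
        refine Fin.ext ?_
        simp [Fin.ofNat]
      simp only [T]
      rw [h6]
      ring
    have h8 : S i = ∑ j ∈ Finset.range N, T j := rfl
    rw [h1, h8]
    linarith
  refine ⟨fun i => Real.exp (S i / 2), fun i => ⟨Real.exp_pos _, ?_, ?_⟩, fun i => ?_⟩
  · exact Real.exp_le_exp.2 ((le_abs_self _).trans (hS i))
  · rw [← Real.exp_neg]
    exact Real.exp_le_exp.2 ((neg_le_abs _).trans (hS i))
  · rw [← Real.exp_add]
    congr 1
    have := hSS i
    linarith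

/-! ### Rescaled return maps are close to the identity -/

/-- `T ↦ A ∘ T ∘ B` as a bounded linear map. -/
theorem exists_conj {E E' F G : Type} [NormedAddCommGroup E] [NormedSpace ℝ E]
    [NormedAddCommGroup E'] [NormedSpace ℝ E'] [NormedAddCommGroup F] [NormedSpace ℝ F]
    [NormedAddCommGroup G] [NormedSpace ℝ G] (A : F →L[ℝ] G) (B : E →L[ℝ] E') :
    ∃ W : (E' →L[ℝ] F) →L[ℝ] (E →L[ℝ] G), (∀ T, W T = A.comp (T.comp B)) ∧ ‖W‖ ≤ ‖A‖ * ‖B‖ := by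
  let W : (E' →L[ℝ] F) →L[ℝ] (E →L[ℝ] G) :=
    (ContinuousLinearMap.compL ℝ E F G A).comp ((ContinuousLinearMap.compL ℝ E E' F).flip B)
  refine ⟨W, fun T => rfl, ContinuousLinearMap.opNorm_le_bound _ (by positivity) fun T => ?_⟩
  calc ‖A.comp (T.comp B)‖ ≤ ‖A‖ * (‖T‖ * ‖B‖) :=
        (ContinuousLinearMap.opNorm_comp_le _ _).trans (by
          gcongr; exact ContinuousLinearMap.opNorm_comp_le _ _)
    _ = ‖A‖ * ‖B‖ * ‖T‖ := by ring

/-- Precomposition with an affine contraction of ratio `μ` multiplies first derivatives by `μ`. -/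
theorem cb_fderiv_affine {E F G : Type} [NormedAddCommGroup E] [NormedSpace ℝ E]
    [NormedAddCommGroup F] [NormedSpace ℝ F] [NormedAddCommGroup G] [NormedSpace ℝ G]
    {r : ℕ} {C M μ : ℝ} (hC : 0 ≤ C) (hM : 1 ≤ M) {h : E → F} (hh : ContDiff ℝ ∞ h) {s t : Set E}
    (hs : CB s r C (fderiv ℝ h)) (W : F →L[ℝ] G) {B : E →L[ℝ] E} (hB : ‖B‖ ≤ M) (hμ0 : 0 < μ)
    (hμ1 : μ ≤ 1) (d : E) (hst : ∀ z ∈ t, d + μ • B z ∈ s) :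
    CB t r (‖W‖ * M * (r.factorial * C * M ^ r) * μ)
      (fderiv ℝ fun z => W (h (d + μ • B z))) := by
  have hM0 : 0 ≤ M := by linarith
  let ℓ : E → E := fun z => d + μ • B z
  have hℓd : ∀ z, HasFDerivAt ℓ (μ • B) z := fun z =>
    (B.hasFDerivAt.const_smul μ).const_add d
  have hℓ : ContDiff ℝ ∞ ℓ := by fun_prop
  have hdh : ContDiff ℝ ∞ (fderiv ℝ h) := hh.fderiv_right (by simp)
  obtain ⟨W', hW', hW'n⟩ := exists_conj W B
  have e1 : (fderiv ℝ fun z => W (h (d + μ • B z))) = fun z => (μ • W') (fderiv ℝ h (ℓ z)) := by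
    funext z
    have h1 : HasFDerivAt (fun z => h (ℓ z)) _ z :=
      ((hh.differentiable (by simp) (ℓ z)).hasFDerivAt).comp z (hℓd z)
    refine ((W.hasFDerivAt.comp z h1).congr_fderiv ?_).fderiv
    rw [smul_apply, hW']
    refine ContinuousLinearMap.ext fun v => ?_
    simp
  have c2 : CB t r (r.factorial * C * M ^ r) (fderiv ℝ h ∘ ℓ) := by
    refine hs.comp (hdh.of_le (by exact_mod_cast le_top)) (hℓ.of_le (by exact_mod_cast le_top)) hst
      hM hC ?_
    intro i hi hir x hx
    obtain ⟨i, rfl⟩ : ∃ k, i = k + 1 := ⟨i - 1, by omega⟩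
    rw [← norm_iteratedFDeriv_fderiv]
    have h1 : fderiv ℝ ℓ = fun _ => μ • B := funext fun z => (hℓd z).fderiv
    rw [h1]
    refine CB.const (s := univ) (r := i) ?_ i le_rfl x (mem_univ _)
    rw [norm_smul, Real.norm_eq_abs, abs_of_pos hμ0]
    nlinarith [norm_nonneg B]
  rw [e1]
  refine (c2.comp_left (μ • W') ?_).mono Subset.rfl le_rfl ?_
  · exact (hdh.comp hℓ).of_le (by exact_mod_cast le_top)
  · rw [norm_smul, Real.norm_eq_abs, abs_of_pos hμ0]
    calc μ * ‖W'‖ * (r.factorial * C * M ^ r) ≤ μ * (‖W‖ * M) * (r.factorial * C * M ^ r) := by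
          gcongr
          exact hW'n.trans (by gcongr)
      _ = ‖W‖ * M * (r.factorial * C * M ^ r) * μ := by ring

/-- If `A ∘ DK(d) ∘ B = 1`, then conjugating `K` by the dilation of ratio `μ` gives a map which is
`O(μ)`-close to the identity, since the quadratic and higher order terms are divided by powers of
`1/μ`. -/
theorem rescale_near_id {E : Type} [NormedAddCommGroup E] [NormedSpace ℝ E] (r : ℕ) {C M R₀ : ℝ} (hC : 0 ≤ C) (hM : 1 ≤ M) (hR : 1 ≤ R₀) :
    ∃ C' : ℝ, 1 ≤ C' ∧ ∀ (K : E → E) (s : Set E) (d : E) (A B : E →L[ℝ] E) (μ : ℝ),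
      ContDiff ℝ ∞ K → CB s (r + 2) C K → ‖A‖ ≤ M → ‖B‖ ≤ M → 0 < μ → μ ≤ 1 →
      A.comp ((fderiv ℝ K d).comp B) = ContinuousLinearMap.id ℝ E →
      (∀ z ∈ Metric.closedBall (0 : E) R₀, d + μ • B z ∈ s) →
      CB (Metric.closedBall (0 : E) R₀) (r + 2) (C' * μ)
        (fun z => μ⁻¹ • A (K (d + μ • B z) - K d) - z) := by
  set C₁ : ℝ := r.factorial * C * M ^ r with hC₁
  have hC₁0 : 0 ≤ C₁ := by positivity
  set C₂ : ℝ := M ^ 3 * C₁ with hC₂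
  have hC₂0 : 0 ≤ C₂ := by positivity
  refine ⟨C₂ * R₀ ^ 2 + 1, by nlinarith [sq_nonneg R₀], ?_⟩
  intro K s d A B μ hK hKs hA hB hμ0 hμ1 hid hs
  have hM0 : 0 ≤ M := by linarith
  let ℓ : E → E := fun z => d + μ • B z
  have hℓd : ∀ z, HasFDerivAt ℓ (μ • B) z := fun z =>
    (B.hasFDerivAt.const_smul μ).const_add d
  have hℓ : ContDiff ℝ ∞ ℓ := by fun_prop
  have hdK : ContDiff ℝ ∞ (fderiv ℝ K) := hK.fderiv_right (by simp)
  obtain ⟨W, hW, hWn'⟩ := exists_conj A B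
  have hWn : ‖W‖ ≤ M ^ 2 := hWn'.trans (by nlinarith [norm_nonneg A, norm_nonneg B])
  set g : E → E := fun z => μ⁻¹ • A (K (d + μ • B z) - K d) - z with hg
  have hgd : ∀ z, HasFDerivAt g (W (fderiv ℝ K (ℓ z)) - ContinuousLinearMap.id ℝ E) z := fun z => by
    have h1 : HasFDerivAt (fun z => K (ℓ z)) _ z :=
      ((hK.differentiable (by simp) (ℓ z)).hasFDerivAt).comp z (hℓd z)
    have h2 : HasFDerivAt (fun z => A (K (ℓ z) - K d)) _ z :=
      A.hasFDerivAt.comp z (h1.sub_const (K d))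
    have h3 : HasFDerivAt g _ z := (h2.const_smul μ⁻¹).sub (hasFDerivAt_id z)
    refine h3.congr_fderiv ?_
    rw [hW]
    refine ContinuousLinearMap.ext fun v => ?_
    simp [hμ0.ne']
  have hgd' : fderiv ℝ g = fun z => W (fderiv ℝ K (ℓ z)) - ContinuousLinearMap.id ℝ E :=
    funext fun z => (hgd z).fderiv
  have hdg : ContDiff ℝ ∞ (fderiv ℝ g) := by
    rw [hgd']
    exact (W.contDiff.comp (hdK.comp hℓ)).sub contDiff_const
  have hhd : ∀ z, HasFDerivAt (fderiv ℝ g) (fderiv ℝ (fderiv ℝ g) z) z := fun z =>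
    (hdg.differentiable (by simp) z).hasFDerivAt
  have c3 : CB (Metric.closedBall (0 : E) R₀) r (C₂ * μ) (fderiv ℝ (fderiv ℝ g)) := by
    have h1 : fderiv ℝ (fderiv ℝ g) = fderiv ℝ fun z => W (fderiv ℝ K (d + μ • B z)) := by
      rw [hgd']
      funext z
      exact fderiv_sub_const _
    rw [h1]
    refine (cb_fderiv_affine hC hM hdK hKs.fderiv.fderiv W hB hμ0 hμ1 d hs).mono Subset.rfl
      le_rfl ?_
    rw [hC₂, pow_succ M 2]
    gcongr
  have h0mem : (0 : E) ∈ Metric.closedBall (0 : E) R₀ := Metric.mem_closedBall_self (by linarith)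
  have hcv := convex_closedBall (0 : E) R₀
  have hg0 : g 0 = 0 := by simp [hg]
  have hh0 : fderiv ℝ g 0 = 0 := by
    rw [hgd']
    simp only [hW, ℓ, map_zero, smul_zero, add_zero]
    rw [hid, sub_self]
  have hle : C₂ * μ ≤ (C₂ * R₀ ^ 2 + 1) * μ := by
    gcongr
    nlinarith [mul_nonneg hC₂0 (by nlinarith : (0:ℝ) ≤ R₀ ^ 2 - 1)]
  have b1 : ∀ z ∈ Metric.closedBall (0 : E) R₀, ‖fderiv ℝ g z‖ ≤ C₂ * μ * R₀ := fun z hz => by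
    have h1 := hcv.norm_image_sub_le_of_norm_hasFDerivWithin_le
      (fun x hx => (hhd x).hasFDerivWithinAt) (fun x hx => ?_) h0mem hz (C := C₂ * μ)
    · rw [hh0, sub_zero, sub_zero] at h1
      refine h1.trans ?_
      gcongr
      exact mem_closedBall_zero_iff.1 hz
    · exact c3.norm_le hx
  have b0 : ∀ z ∈ Metric.closedBall (0 : E) R₀, ‖g z‖ ≤ C₂ * μ * R₀ * R₀ := fun z hz => by
    have h1 := hcv.norm_image_sub_le_of_norm_hasFDerivWithin_le
      (fun x hx => (hgd x).hasFDerivWithinAt) (fun x hx => ?_) h0mem hz (C := C₂ * μ * R₀)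
    · rw [hg0, sub_zero, sub_zero] at h1
      refine h1.trans ?_
      gcongr
      exact mem_closedBall_zero_iff.1 hz
    · rw [← (hgd x).fderiv]
      exact b1 x hx
  refine CB.of_fderiv (fun z hz => (b0 z hz).trans ?_) (CB.of_fderiv (fun z hz => (b1 z hz).trans ?_)
    (c3.mono Subset.rfl le_rfl hle))
  · nlinarith
  · have : C₂ * R₀ ≤ C₂ * R₀ ^ 2 := by gcongr; nlinarith
    nlinarith

/-- The twist condition lets one prescribe the second coordinate of the image. -/
theorem exists_transit_point {K : P2 → P2} (hK : ContDiff ℝ 1 K) {Uc y₀ u₀ η C c₀ s θ : ℝ}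
    (hs : s = 1 ∨ s = -1) (hu₀ : 0 < u₀)
    (hCB : CB {z | |z.1 - Uc| < u₀ ∧ |z.2 - y₀| < η} 1 C K)
    (htw : ∀ z : P2, |z.1 - Uc| < u₀ → |z.2 - y₀| < η → c₀ ≤ s * (fderiv ℝ K z (1, 0)).2)
    (hθ : |(K (Uc, y₀)).2 - y₀| ≤ θ) {y y' : ℝ} (hy : |y - y₀| < η)
    (h : θ + C * |y - y₀| + |y' - y₀| ≤ c₀ * (u₀ / 2)) :
    ∃ U, |U - Uc| ≤ u₀ / 2 ∧ (K (U, y)).2 = y' := by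
  have hd : ∀ z, HasFDerivAt K (fderiv ℝ K z) z := fun z =>
    (hK.differentiable one_ne_zero z).hasFDerivAt
  have hKy : |(K (Uc, y)).2 - (K (Uc, y₀)).2| ≤ C * |y - y₀| := by
    have hcv : Convex ℝ (Metric.ball y₀ η) := convex_ball y₀ η
    have hη : 0 < η := (abs_nonneg _).trans_lt hy
    have hd1 : ∀ t : ℝ, HasDerivAt (fun t => (K (Uc, t)).2) ((fderiv ℝ K (Uc, t) (0, 1)).2) t :=
      fun t => by
        have h1 : HasDerivAt (fun t : ℝ => ((Uc, t) : P2)) ((0, 1) : P2) t :=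
          (hasDerivAt_const t Uc).prodMk (hasDerivAt_id t)
        exact (ContinuousLinearMap.snd ℝ ℝ ℝ).hasFDerivAt.comp_hasDerivAt t
          ((hd (Uc, t)).comp_hasDerivAt t h1)
    have := hcv.norm_image_sub_le_of_norm_hasDerivWithin_le
      (fun t _ => (hd1 t).hasDerivWithinAt) (C := C) (fun t ht => ?_)
      (Metric.mem_ball_self hη) (by rwa [mem_ball_iff_norm] : y ∈ Metric.ball y₀ η)
    · exact this
    · have h1 := hCB.norm_fderiv_le le_rfl (x := (Uc, t)) ⟨by simpa using hu₀, by
        rwa [mem_ball_iff_norm] at ht⟩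
      refine (norm_snd_le _).trans (((fderiv ℝ K (Uc, t)).le_of_opNorm_le h1 _).trans ?_)
      simp [Prod.norm_def]
  let G : ℝ → ℝ := fun U => s * (K (U, y)).2
  have hGd : ∀ t : ℝ, HasDerivAt G (s * (fderiv ℝ K (t, y) (1, 0)).2) t := fun t => by
    have h1 : HasDerivAt (fun t : ℝ => ((t, y) : P2)) ((1, 0) : P2) t :=
      (hasDerivAt_id t).prodMk (hasDerivAt_const t y)
    exact ((ContinuousLinearMap.snd ℝ ℝ ℝ).hasFDerivAt.comp_hasDerivAt t
      ((hd (t, y)).comp_hasDerivAt t h1)).const_mul s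
  have hGc : Continuous G := continuous_iff_continuousAt.2 fun t => (hGd t).continuousAt
  have hgrow : ∀ u v, |u - Uc| ≤ u₀ / 2 → |v - Uc| ≤ u₀ / 2 → u ≤ v →
      c₀ * (v - u) ≤ G v - G u := fun u v hu hv huv => by
    have := (convex_Icc u v).mul_sub_le_image_sub_of_le_deriv hGc.continuousOn
      (fun t _ => (hGd t).differentiableAt.differentiableWithinAt) (C := c₀) (fun t ht => ?_)
      u (left_mem_Icc.2 huv) v (right_mem_Icc.2 huv) huv
    · exact this
    · rw [(hGd t).deriv]
      have ht' := interior_subset ht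
      refine htw (t, y) ?_ hy
      change |t - Uc| < u₀
      rw [abs_le] at hu hv
      rw [abs_lt]
      constructor <;> linarith [ht'.1, ht'.2]
  have hss : s * s = 1 := by rcases hs with rfl | rfl <;> norm_num
  have hsabs : ∀ t, |s * t| = |t| := fun t => by rcases hs with rfl | rfl <;> simp
  have hmid : |G Uc - s * y'| ≤ c₀ * (u₀ / 2) := by
    simp only [G]
    rw [← mul_sub, hsabs]
    have h1 := abs_sub_le (K (Uc, y)).2 y₀ y'
    have h2 := abs_sub_le (K (Uc, y)).2 (K (Uc, y₀)).2 y₀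
    rw [abs_sub_comm y₀ y'] at h1
    linarith
  have h1 := hgrow (Uc - u₀ / 2) Uc (by rw [sub_sub_cancel_left, abs_neg, abs_of_pos (by linarith)])
    (by rw [sub_self, abs_zero]; linarith) (by linarith)
  have h2 := hgrow Uc (Uc + u₀ / 2) (by rw [sub_self, abs_zero]; linarith)
    (by rw [add_sub_cancel_left, abs_of_pos (by linarith)]) (by linarith)
  rw [abs_le] at hmid
  obtain ⟨U, hU, hGU⟩ := intermediate_value_Icc (a := Uc - u₀ / 2) (b := Uc + u₀ / 2) (by linarith)
    hGc.continuousOn (show s * y' ∈ Icc _ _ from ⟨by nlinarith, by nlinarith⟩)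
  refine ⟨U, ?_, ?_⟩
  · rw [abs_le]
    constructor <;> linarith [hU.1, hU.2]
  · have h3 := congrArg (s * ·) hGU
    simp only [G, ← mul_assoc, hss, one_mul] at h3
    exact h3

/-! ### Small symplectic shears supported in disjoint squares -/

theorem cb_sum {E F ι : Type} [NormedAddCommGroup E] [NormedSpace ℝ E] [NormedAddCommGroup F]
    [NormedSpace ℝ F] {r : ℕ} {s : Set E} (t : Finset ι) {f : ι → E → F} {M : ι → ℝ}
    (hf : ∀ i, ContDiff ℝ r (f i)) (h : ∀ i, CB s r (M i) (f i)) :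
    CB s r (∑ i ∈ t, M i) (fun z => ∑ i ∈ t, f i z) := by
  classical
  induction t using Finset.induction_on with
  | empty => simpa using CB.const (s := s) (r := r) (c := (0 : F)) (M := 0) (by simp)
  | insert i t hi ih =>
    simp only [Finset.sum_insert hi]
    exact (h i).add ih (hf i) (ContDiff.sum fun j _ => hf j)

/-- Multiplication of reals as a bilinear map of norm at most one. -/
theorem exists_mul_clm : ∃ Λ : ℝ →L[ℝ] ℝ →L[ℝ] ℝ, (∀ c t, Λ c t = c * t) ∧ ‖Λ‖ ≤ 1 :=
  ⟨ContinuousLinearMap.mul ℝ ℝ, fun _ _ => rfl, ContinuousLinearMap.opNorm_mul_le ℝ ℝ⟩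

/-- The primitive of a `C^r`-small function is `C^(r+1)`-small near its base point. -/
theorem cb_primitive {r : ℕ} {ζ : ℝ → ℝ} (hζ : ContDiff ℝ r ζ) {y₀ ρ M : ℝ} (hρ : 0 ≤ ρ)
    (h : CB (Metric.closedBall y₀ ρ) r M ζ) :
    ContDiff ℝ (r + 1) (fun y => ∫ t in y₀..y, ζ t) ∧
      (∀ y, HasDerivAt (fun y => ∫ t in y₀..y, ζ t) (ζ y) y) ∧
      CB (Metric.closedBall y₀ ρ) (r + 1) ((1 + ρ) * M) (fun y => ∫ t in y₀..y, ζ t) := by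
  have hd : ∀ y, HasDerivAt (fun y => ∫ t in y₀..y, ζ t) (ζ y) y := fun y =>
    (hζ.continuous.integral_hasStrictDerivAt y₀ y).hasDerivAt
  obtain ⟨Λ, hΛ, hΛn⟩ := exists_mul_clm
  have hfd : (fderiv ℝ fun y => ∫ t in y₀..y, ζ t) =
      fun y => Λ (ζ y) := by
    funext y
    rw [(hd y).hasFDerivAt.fderiv]
    refine ContinuousLinearMap.ext fun t => ?_
    rw [hΛ]
    simp [mul_comm]
  have hM : 0 ≤ M :=
    (norm_nonneg _).trans (h.norm_le (x := y₀) (Metric.mem_closedBall_self hρ))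
  refine ⟨?_, hd, ?_⟩
  · refine contDiff_succ_iff_deriv.2 ⟨fun y => (hd y).differentiableAt, by simp, ?_⟩
    rwa [show deriv (fun y => ∫ t in y₀..y, ζ t) = ζ from funext fun y => (hd y).deriv]
  · refine CB.of_fderiv (fun y hy => ?_) ?_
    · have h1 := (convex_closedBall y₀ ρ).norm_image_sub_le_of_norm_hasDerivWithin_le
        (fun x _ => (hd x).hasDerivWithinAt) (C := M) (fun x hx => h.norm_le hx)
        (Metric.mem_closedBall_self hρ) hy
      simp only [intervalIntegral.integral_same, sub_zero] at h1
      have h2 : ‖y - y₀‖ ≤ ρ := by rwa [← dist_eq_norm]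
      nlinarith
    · rw [hfd]
      refine (h.comp_left Λ hζ).mono Subset.rfl le_rfl ?_
      nlinarith [mul_le_mul_of_nonneg_right hΛn hM, mul_nonneg hρ hM]

/-- Given small functions `ζ i`, there is a symplectic diffeomorphism close to the identity which
is the shear `(x, y) ↦ (x + ζ i y, y)` on a square around `(a, y i)` for every `i`, and which is the
identity away from these squares: it has generating function `∑ χ i • ∫ ζ i`. -/
theorem shear_family (r : ℕ) (hr : 1 ≤ r) {N : ℕ} (a : ℝ) (y : Fin N → ℝ) {w : ℝ} (hw : 0 < w)
    (V : Set P2) (hdisj : ∀ i i', i ≠ i' → 4 * w ≤ |y i - y i'|)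
    (hV : ∀ i, Metric.closedBall ((a, y i) : P2) (2 * w) ⊆ V) :
    ∃ Cs : ℝ, 1 ≤ Cs ∧ ∀ (ζ : Fin N → ℝ → ℝ) (M : ℝ), (∀ i, ContDiff ℝ r (ζ i)) →
      (∀ i, CB (Metric.closedBall (y i) (2 * w)) r M (ζ i)) → 0 ≤ M → Cs * M ≤ 1 →
      ∃ S : PlaneDiffeo r, S.Symplectic ∧ CB univ r (Cs * M) (fun z => S.toFun z - z) ∧
        (∀ i, ∀ z : P2, |z.1 - a| < w → |z.2 - y i| < w → S.toFun z = (z.1 + ζ i z.2, z.2)) ∧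
        ∀ z ∉ V, S.toFun z = z := by
  let χ : ∀ i, ContDiffBump ((a, y i) : P2) := fun i => ⟨w, 2 * w, hw, by linarith⟩
  choose Cc hCc hcut using fun i => CB.cutoff (E := P2) (F := ℝ) (χ i) (r + 1)
  obtain ⟨Cg, hCg, hgen⟩ := gen_diffeo r hr
  set K : ℝ := ∑ i, Cc i * ((r + 1).factorial * (1 + 2 * w) * 1 ^ (r + 1)) with hK
  have hK0 : 0 ≤ K := Finset.sum_nonneg fun i _ => by
    have := hCc i
    positivity
  refine ⟨2 * Cg * K + 2 * K + 1, by nlinarith, ?_⟩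
  intro ζ M hζ hζM hM0 hCM
  let Z : Fin N → ℝ → ℝ := fun i y' => ∫ t in (y i)..y', ζ i t
  have hZ := fun i => cb_primitive (hζ i) (by linarith : 0 ≤ 2 * w) (hζM i)
  have hZ1 : ∀ i, ContDiff ℝ ((r + 1 : ℕ) : ℕ∞ω) fun z : P2 => Z i z.2 := fun i => by
    have h1 : ContDiff ℝ ((r + 1 : ℕ) : ℕ∞ω) (Z i) := by exact_mod_cast (hZ i).1
    exact h1.comp contDiff_snd
  have hZ2 : ∀ i, CB (Metric.closedBall ((a, y i) : P2) (2 * w)) (r + 1)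
      ((r + 1).factorial * ((1 + 2 * w) * M) * 1 ^ (r + 1)) (fun z : P2 => Z i z.2) := fun i => by
    refine (hZ i).2.2.comp (by exact_mod_cast (hZ i).1) contDiff_snd ?_ le_rfl (by positivity) ?_
    · intro z hz
      rw [Metric.mem_closedBall, Prod.dist_eq] at hz
      exact (le_max_right _ _).trans hz
    · intro k hk _ x _
      exact (CB.iteratedFDeriv_clm (ContinuousLinearMap.snd ℝ ℝ ℝ) _ hk x).trans
        (ContinuousLinearMap.norm_snd_le ℝ ℝ ℝ)
  let H : P2 → ℝ := fun z => ∑ i, χ i z • Z i z.2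
  have hHs : ∀ i, ContDiff ℝ ((r + 1 : ℕ) : ℕ∞ω) fun z => χ i z • Z i z.2 := fun i =>
    (χ i).contDiff.smul (hZ1 i)
  have hH : ContDiff ℝ ((r + 1 : ℕ) : ℕ∞ω) H := ContDiff.sum fun i _ => hHs i
  have hHM : CB univ (r + 1) (K * M) H := by
    refine (cb_sum Finset.univ hHs fun i => hcut i _ _ (hZ1 i) (hZ2 i)).mono Subset.rfl le_rfl ?_
    rw [hK, Finset.sum_mul]
    refine Finset.sum_le_sum fun i _ => le_of_eq ?_
    ring
  have hKM : 0 ≤ K * M := by positivity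
  have hCKM : 0 ≤ Cg * (K * M) := by positivity
  obtain ⟨S, hS, hSid, hSz⟩ := hgen r le_rfl H (K * M) (by exact_mod_cast hH) hHM (by nlinarith)
  have hoff : ∀ i, ∀ z : P2, z ∉ Metric.closedBall ((a, y i) : P2) (2 * w) →
      (fun z => χ i z • Z i z.2) =ᶠ[𝓝 z] fun _ => 0 := fun i z hz => by
    filter_upwards [Metric.isClosed_closedBall.isOpen_compl.mem_nhds hz] with x hx
    rw [(χ i).zero_of_le_dist, zero_smul]
    rw [mem_compl_iff, Metric.mem_closedBall, not_le] at hx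
    exact hx.le
  refine ⟨S, hS, hSid.mono Subset.rfl le_rfl (by nlinarith), ?_, ?_⟩
  · intro i z hz1 hz2
    have hzb : z ∈ Metric.ball ((a, y i) : P2) w := by
      rw [Metric.mem_ball, Prod.dist_eq, max_lt_iff]
      exact ⟨hz1, hz2⟩
    have hHz : H =ᶠ[𝓝 z] fun z => Z i z.2 := by
      have h1 : ∀ᶠ x in 𝓝 z, ∀ i', i' ≠ i → χ i' x • Z i' x.2 = 0 := by
        rw [eventually_all]
        intro i'
        by_cases hii : i' = i
        · exact Eventually.of_forall fun x h => absurd hii h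
        · have hzi : z ∉ Metric.closedBall ((a, y i') : P2) (2 * w) := by
            rw [Metric.mem_closedBall, not_le, Prod.dist_eq]
            refine lt_of_lt_of_le ?_ (le_max_right _ _)
            rw [Real.dist_eq]
            have h2 := hdisj i' i hii
            have h3 := abs_sub_le (y i') z.2 (y i)
            rw [abs_sub_comm (y i') z.2] at h3
            change 2 * w < |z.2 - y i'|
            linarith
          filter_upwards [hoff i' z hzi] with x hx _ using hx
      filter_upwards [h1, Metric.isOpen_ball.mem_nhds hzb] with x hx hxb
      change ∑ i, χ i x • Z i x.2 = Z i x.2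
      rw [Finset.sum_eq_single i (fun i' _ h => hx i' h) (by simp),
        (χ i).one_of_mem_closedBall (Metric.ball_subset_closedBall hxb), one_smul]
    have hd : HasFDerivAt (fun z : P2 => Z i z.2) _ z :=
      ((hZ i).2.1 z.2).hasFDerivAt.comp z (ContinuousLinearMap.snd ℝ ℝ ℝ).hasFDerivAt
    have h4 := hSz z
    rw [hHz.fderiv_eq, hd.fderiv] at h4
    simpa using h4
  · intro z hz
    have hHz : H =ᶠ[𝓝 z] fun _ => 0 := by
      have h1 : ∀ᶠ x in 𝓝 z, ∀ i, χ i x • Z i x.2 = 0 :=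
        eventually_all.2 fun i => hoff i z fun h => hz (hV i h)
      filter_upwards [h1] with x hx
      exact Finset.sum_eq_zero fun i _ => hx i
    have h4 := hSz z
    rw [hHz.fderiv_eq] at h4
    simpa using h4

/-- Scaling estimate for a function `t ↦ ψ (κ * (t - y₀))`. -/
theorem cb_rescaled_scalar {r : ℕ} {ψ : ℝ → ℝ} (hψ : ContDiff ℝ r ψ) {L : ℝ} (hL : 0 ≤ L)
    (hψL : ∀ k ≤ r, ∀ t, |iteratedDeriv k ψ t| ≤ L) {κ K : ℝ} (hK : 1 ≤ K) (hκ : |κ| ≤ K)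
    (y₀ : ℝ) (s : Set ℝ) :
    CB s r (r.factorial * L * K ^ r) (fun t => ψ (κ * (t - y₀))) := by
  refine CB.comp (t := univ) (g := ψ) (f := fun t => κ * (t - y₀)) (fun k hk x _ => ?_) hψ
    (by fun_prop) (mapsTo_univ _ _) hK hL ?_
  · rw [norm_iteratedFDeriv_eq_norm_iteratedDeriv]
    exact hψL k hk x
  · intro i hi _ x _
    obtain ⟨i, rfl⟩ : ∃ k, i = k + 1 := ⟨i - 1, by omega⟩
    rw [← norm_iteratedFDeriv_fderiv]
    obtain ⟨Λ, hΛ, hΛn⟩ := exists_mul_clm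
    have h1 : (fderiv ℝ fun t => κ * (t - y₀)) = fun _ => Λ κ := by
      funext t
      have : HasDerivAt (fun t => κ * (t - y₀)) κ t := by
        simpa using ((hasDerivAt_id t).sub_const y₀).const_mul κ
      rw [this.hasFDerivAt.fderiv]
      refine ContinuousLinearMap.ext fun t => ?_
      rw [hΛ]
      simp [mul_comm]
    rw [h1]
    refine CB.const (s := univ) (r := i) ?_ i le_rfl x (mem_univ _)
    refine (Λ.le_of_opNorm_le hΛn κ).trans ?_
    simpa using hκ

/-! ### Charts in which the transit map is a rotation -/

/-- The linear map of the plane with matrix `(a, b; c, d)`. -/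
noncomputable def mat (a b c d : ℝ) : P2 →L[ℝ] P2 :=
  (a • ContinuousLinearMap.fst ℝ ℝ ℝ + b • ContinuousLinearMap.snd ℝ ℝ ℝ).prod
    (c • ContinuousLinearMap.fst ℝ ℝ ℝ + d • ContinuousLinearMap.snd ℝ ℝ ℝ)

theorem mat_apply (a b c d : ℝ) (z : P2) :
    mat a b c d z = (a * z.1 + b * z.2, c * z.1 + d * z.2) := rfl

theorem norm_mat_le {a b c d m : ℝ} (ha : |a| ≤ m) (hb : |b| ≤ m) (hc : |c| ≤ m) (hd : |d| ≤ m) :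
    ‖mat a b c d‖ ≤ 2 * m := by
  have hm : 0 ≤ m := (abs_nonneg a).trans ha
  have key : ∀ a b : ℝ, |a| ≤ m → |b| ≤ m → ∀ z : P2, |a * z.1 + b * z.2| ≤ 2 * m * ‖z‖ := by
    intro a b ha hb z
    have h1 : |z.1| ≤ ‖z‖ := norm_fst_le z
    have h2 : |z.2| ≤ ‖z‖ := norm_snd_le z
    calc |a * z.1 + b * z.2| ≤ |a * z.1| + |b * z.2| := abs_add_le _ _
      _ = |a| * |z.1| + |b| * |z.2| := by rw [abs_mul, abs_mul]
      _ ≤ m * ‖z‖ + m * ‖z‖ := by gcongr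
      _ = 2 * m * ‖z‖ := by ring
  refine ContinuousLinearMap.opNorm_le_bound _ (by positivity) fun z => ?_
  rw [mat_apply, Prod.norm_def]
  exact max_le (key a b ha hb z) (key c d hc hd z)

/-- Let `K` be an area preserving map sending `d i` to `ar (i + 1)` and satisfying a twist condition
at the points `d i`. If the number of points is odd, there are triangular affine charts `dep i`
around `d i` and `arr i` around `ar i`, with the same diagonal part at `d i` and `ar i`, such that
`K` read in these charts is the rotation `(x, y) ↦ (y, -x)` up to a map close to the identity.
Writing `(A, B; c, D)` for the derivative of `K` at `d i`, the diagonal parts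
`(σ e i, (e i)⁻¹)` have to satisfy `e i * e (i + 1) = |c|⁻¹`. -/
theorem near_id_charts {N : ℕ} [NeZero N] (hN : Odd N) (r : ℕ) {C c₀ R₀ : ℝ} (hC : 1 ≤ C)
    (hc₀ : 0 < c₀) (hR : 1 ≤ R₀) :
    ∃ E : ℝ, 1 ≤ E ∧ ∃ C' : ℝ, 1 ≤ C' ∧ ∀ (K : P2 → P2) (Ω : Set P2) (s : ℝ)
      (d ar : Fin N → P2) (μ : ℝ), ContDiff ℝ ∞ K → (∀ z, (fderiv ℝ K z).det = 1) →
      CB Ω (r + 2) C K → (s = 1 ∨ s = -1) → (∀ i, c₀ ≤ s * (fderiv ℝ K (d i) (1, 0)).2) →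
      (∀ i, K (d i) = ar (i + 1)) → 0 < μ → μ ≤ 1 →
      (∀ i, Metric.closedBall (d i) (μ * E * R₀) ⊆ Ω) →
      ∃ (σ : ℝ) (e p q : Fin N → ℝ) (dep arr : Fin N → PlaneDiffeo ⊤), (σ = 1 ∨ σ = -1) ∧
        (∀ i, 0 < e i ∧ e i ≤ E ∧ (e i)⁻¹ ≤ E ∧ |p i| ≤ E ∧ |q i| ≤ E) ∧
        (∀ i z, (dep i).toFun z = ((d i).1 + (μ * σ * e i * z.1 - q i * (μ * (e i)⁻¹ * z.2)),
          (d i).2 + μ * (e i)⁻¹ * z.2)) ∧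
        (∀ i z, (arr i).toFun z = ((ar i).1 + (μ * σ * e i * z.1 + p i * (μ * (e i)⁻¹ * z.2)),
          (ar i).2 + μ * (e i)⁻¹ * z.2)) ∧
        (∀ i z, (fderiv ℝ (dep i).toFun z).det = σ * μ ^ 2) ∧
        (∀ i z, (fderiv ℝ (arr i).toFun z).det = σ * μ ^ 2) ∧
        ∀ i, CB (Metric.closedBall (0 : P2) R₀) (r + 2) (C' * μ)
          (fun z => (arr (i + 1)).invFun (K ((dep i).toFun (-z.2, z.1))) - z) := by
  have hC0 : 0 < C := by linarith
  obtain ⟨E₀, hE₀, hexp⟩ := exists_cyclic_exponents hN (Γ := |Real.log c₀| + |Real.log C|)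
  have hCc : 0 < C / c₀ := by positivity
  set m : ℝ := E₀ * (1 + C / c₀) with hm
  have hE₀m : E₀ ≤ m := by nlinarith
  have hm1 : 1 ≤ m := by linarith
  have hE₀Cc : E₀ * (C / c₀) ≤ m := by nlinarith
  have hCcm : C / c₀ ≤ m := by nlinarith
  obtain ⟨C', hC', hres⟩ := rescale_near_id (E := P2) r (C := C) (M := 2 * m) (R₀ := R₀) hC0.le
    (by linarith) hR
  refine ⟨2 * m, by linarith, C', hC', ?_⟩
  intro K Ω s d ar μ hK hdet hKC hs htw hKd hμ hμ1 hΩ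
  have hdΩ : ∀ i, d i ∈ Ω := fun i => hΩ i (Metric.mem_closedBall_self (by positivity))
  have hent : ∀ i, ∀ v : P2, ‖v‖ ≤ 1 → ‖fderiv ℝ K (d i) v‖ ≤ C := fun i v hv => by
    have h1 := hKC.norm_fderiv_le (by omega) (hdΩ i)
    exact ((fderiv ℝ K (d i)).le_of_opNorm_le_of_le h1 hv).trans (by simp)
  have hA : ∀ i, |(fderiv ℝ K (d i) (1, 0)).1| ≤ C := fun i =>
    (norm_fst_le _).trans (hent i _ norm_e1)
  have hc : ∀ i, |(fderiv ℝ K (d i) (1, 0)).2| ≤ C := fun i =>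
    (norm_snd_le _).trans (hent i _ norm_e1)
  have hD : ∀ i, |(fderiv ℝ K (d i) (0, 1)).2| ≤ C := fun i =>
    (norm_snd_le _).trans (hent i _ norm_e2)
  have hss : s * s = 1 := by rcases hs with rfl | rfl <;> norm_num
  have hsabs : ∀ t, |s * t| = |t| := fun t => by rcases hs with rfl | rfl <;> simp
  have hscpos : ∀ i, 0 < s * (fderiv ℝ K (d i) (1, 0)).2 := fun i => hc₀.trans_le (htw i)
  have hscC : ∀ i, s * (fderiv ℝ K (d i) (1, 0)).2 ≤ C := fun i =>
    (le_abs_self _).trans (by rw [hsabs]; exact hc i)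
  have hcne : ∀ i, (fderiv ℝ K (d i) (1, 0)).2 ≠ 0 := fun i h => by
    have := hscpos i
    rw [h, mul_zero] at this
    exact lt_irrefl _ this
  have hcabs : ∀ i, c₀ ≤ |(fderiv ℝ K (d i) (1, 0)).2| := fun i => by
    rw [← hsabs]
    exact (htw i).trans (le_abs_self _)
  obtain ⟨e, he, hee⟩ := hexp
    (fun i => -Real.log (s * (fderiv ℝ K (d i) (1, 0)).2)) (fun i => by
      rw [abs_neg, abs_le]
      have h1 := Real.log_le_log hc₀ (htw i)
      have h2 := Real.log_le_log (hscpos i) (hscC i)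
      have h3 := neg_abs_le (Real.log c₀)
      have h4 := le_abs_self (Real.log C)
      have h5 := abs_nonneg (Real.log c₀)
      have h6 := abs_nonneg (Real.log C)
      constructor <;> linarith)
  have hee' : ∀ i, e i * e (i + 1) * (s * (fderiv ℝ K (d i) (1, 0)).2) = 1 := fun i => by
    rw [hee, Real.exp_neg, Real.exp_log (hscpos i), inv_mul_cancel₀ (hscpos i).ne']
  have he0 : ∀ i, e i ≠ 0 := fun i => (he i).1.ne'
  have hs0 : s ≠ 0 := by rintro rfl; simp at hss
  let q : Fin N → ℝ := fun i => (fderiv ℝ K (d i) (0, 1)).2 / (fderiv ℝ K (d i) (1, 0)).2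
  let p : Fin N → ℝ := fun i =>
    (fderiv ℝ K (d (i - 1)) (1, 0)).1 / (fderiv ℝ K (d (i - 1)) (1, 0)).2
  have hq : ∀ i, |q i| ≤ C / c₀ := fun i => by
    rw [abs_div]
    exact div_le_div₀ hC0.le (hD i) hc₀ (hcabs i)
  have hp : ∀ i, |p i| ≤ C / c₀ := fun i => by
    rw [abs_div]
    exact div_le_div₀ hC0.le (hA _) hc₀ (hcabs _)
  have hαne : ∀ i, μ * -s * e i ≠ 0 := fun i => by
    have := he0 i
    have := hμ.ne'
    simp [*]
  have hγne : ∀ i, μ * (e i)⁻¹ ≠ 0 := fun i => by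
    have := he0 i
    have := hμ.ne'
    simp [*]
  let dep : Fin N → PlaneDiffeo ⊤ := fun i =>
    aff (d i) (-(q i * (μ * (e i)⁻¹))) (hαne i) (hγne i)
  let arr : Fin N → PlaneDiffeo ⊤ := fun i => aff (ar i) (p i * (μ * (e i)⁻¹)) (hαne i) (hγne i)
  have hdetc : ∀ i, μ * -s * e i * (μ * (e i)⁻¹) = -s * μ ^ 2 := fun i => by
    have := he0 i
    field_simp
  refine ⟨-s, e, p, q, dep, arr, by rcases hs with rfl | rfl <;> simp,
    fun i => ⟨(he i).1, (he i).2.1.trans (by linarith), (he i).2.2.trans (by linarith),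
      (hp i).trans (by linarith), (hq i).trans (by linarith)⟩,
    fun i z => Prod.ext (by simp only [dep, aff]; ring) (by simp only [dep, aff]),
    fun i z => Prod.ext (by simp only [arr, aff]; ring) (by simp only [arr, aff]),
    fun i z => (det_aff _ _ _ _ z).trans (hdetc i), fun i z => (det_aff _ _ _ _ z).trans (hdetc i),
    ?_⟩
  intro i
  have hpi : p (i + 1) = (fderiv ℝ K (d i) (1, 0)).1 / (fderiv ℝ K (d i) (1, 0)).2 := by
    simp only [p, add_sub_cancel_right]
  have hsa : |-s| = 1 := by rcases hs with rfl | rfl <;> simp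
  have heabs : ∀ i, |e i| ≤ E₀ := fun i => by rw [abs_of_pos (he i).1]; exact (he i).2.1
  have heiabs : ∀ i, |(e i)⁻¹| ≤ E₀ := fun i => by
    rw [abs_of_pos (inv_pos.2 (he i).1)]; exact (he i).2.2
  let A : P2 →L[ℝ] P2 := mat (-s * (e (i + 1))⁻¹) (-(-s * (e (i + 1))⁻¹ * p (i + 1))) 0 (e (i + 1))
  let B : P2 →L[ℝ] P2 := mat (-(q i * (e i)⁻¹)) (-(-s * e i)) (e i)⁻¹ 0
  have hAn : ‖A‖ ≤ 2 * m := by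
    refine norm_mat_le ?_ ?_ (by simpa using by linarith) ((heabs _).trans hE₀m)
    · rw [abs_mul, hsa, one_mul]
      exact (heiabs _).trans hE₀m
    · rw [abs_neg, abs_mul, abs_mul, hsa, one_mul]
      refine le_trans ?_ hE₀Cc
      gcongr
      · exact heiabs _
      · exact hp _
  have hBn : ‖B‖ ≤ 2 * m := by
    refine norm_mat_le ?_ ?_ ((heiabs _).trans hE₀m) (by simpa using by linarith)
    · rw [abs_neg, abs_mul, mul_comm]
      refine le_trans ?_ hE₀Cc
      gcongr
      · exact heiabs _
      · exact hq _
    · rw [abs_neg, abs_mul, hsa, one_mul]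
      exact (heabs _).trans hE₀m
  have hid : A.comp ((fderiv ℝ K (d i)).comp B) = ContinuousLinearMap.id ℝ P2 := by
    have hdi := hdet (d i)
    rw [det_P2] at hdi
    have h1 := hee' i
    have hc := hcne i
    have hq' : q i = (fderiv ℝ K (d i) (0, 1)).2 / (fderiv ℝ K (d i) (1, 0)).2 := rfl
    have hL : ∀ z, fderiv ℝ K (d i) z = z.1 • fderiv ℝ K (d i) (1, 0) +
      z.2 • fderiv ℝ K (d i) (0, 1) := clm_P2_apply _
    refine ContinuousLinearMap.ext fun z => ?_
    simp only [ContinuousLinearMap.comp_apply, A, B, mat_apply, ContinuousLinearMap.id_apply]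
    rw [hL]
    simp only [Prod.fst_add, Prod.snd_add, Prod.smul_fst, Prod.smul_snd, smul_eq_mul, hpi, hq']
    generalize (fderiv ℝ K (d i) (1, 0)).1 = a at *
    generalize (fderiv ℝ K (d i) (1, 0)).2 = c at *
    generalize (fderiv ℝ K (d i) (0, 1)).1 = b at *
    generalize (fderiv ℝ K (d i) (0, 1)).2 = D at *
    have he1 := he0 i
    have he2 := he0 (i + 1)
    generalize e i = e₁ at *
    generalize e (i + 1) = e₂ at *
    have hsc : s * c * e₁ * e₂ = 1 := by linarith
    refine Prod.ext ?_ ?_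
    · simp only
      field_simp
      linear_combination s * z.1 * hdi - s * z.1 * hsc + c * e₁ * e₂ * z.1 * hss
    · simp only
      field_simp
      linear_combination c * e₁ * z.2 * hsc
  have := hres K Ω (d i) A B μ hK hKC hAn hBn hμ hμ1 hid (fun z hz => hΩ i ?_)
  · have hfun : (fun z : P2 => (arr (i + 1)).invFun (K ((dep i).toFun (-z.2, z.1))) - z) =
        fun z => μ⁻¹ • A (K (d i + μ • B z) - K (d i)) - z := by
      funext z
      congr 1
      have h1 : (dep i).toFun (-z.2, z.1) = d i + μ • B z := by
        refine Prod.ext ?_ ?_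
        · simp only [dep, aff, B, mat_apply, Prod.fst_add, Prod.smul_fst, smul_eq_mul]; ring
        · simp only [dep, aff, B, mat_apply, Prod.snd_add, Prod.smul_snd, smul_eq_mul]; ring
      rw [h1, hKd i]
      generalize K (d i + μ • B z) = k
      have he2 := he0 (i + 1)
      have hμ' := hμ.ne'
      refine Prod.ext ?_ ?_
      · simp only [arr, aff, A, mat_apply, Prod.fst_sub, Prod.snd_sub, Prod.smul_fst, smul_eq_mul]
        have h2 : (μ * -s * e (i + 1))⁻¹ = μ⁻¹ * -s * (e (i + 1))⁻¹ := by
          refine inv_eq_of_mul_eq_one_right ?_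
          field_simp
          linear_combination hss
        rw [h2]
        field_simp
        ring
      · simp only [arr, aff, A, mat_apply, Prod.fst_sub, Prod.snd_sub, Prod.smul_snd, smul_eq_mul]
        field_simp
        ring
    rw [hfun]
    exact this
  · rw [Metric.mem_closedBall, dist_self_add_left, norm_smul, Real.norm_eq_abs, abs_of_pos hμ,
      mul_assoc]
    gcongr
    exact B.le_of_opNorm_le_of_le hBn (mem_closedBall_zero_iff.1 hz)

/-- The charts of `near_id_charts`, after extension to the whole plane of the near-identity
parts. -/
theorem transit_normal_form {N : ℕ} [NeZero N] (hN : Odd N) (r : ℕ) (hr : 1 ≤ r)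
    {C c₀ R δ : ℝ} (hC : 1 ≤ C) (hc₀ : 0 < c₀) (hR : 1 ≤ R) (hδ : 0 < δ) :
    ∃ E : ℝ, 1 ≤ E ∧ ∃ μ₀ : ℝ, 0 < μ₀ ∧ μ₀ ≤ 1 ∧ ∀ (K : P2 → P2) (Ω : Set P2) (s : ℝ)
      (d ar : Fin N → P2) (μ : ℝ), ContDiff ℝ ∞ K → (∀ z, (fderiv ℝ K z).det = 1) →
      CB Ω (r + 2) C K → (s = 1 ∨ s = -1) → (∀ i, c₀ ≤ s * (fderiv ℝ K (d i) (1, 0)).2) →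
      (∀ i, K (d i) = ar (i + 1)) → 0 < μ → μ ≤ μ₀ →
      (∀ i, Metric.closedBall (d i) (μ * E * (R + 4)) ⊆ Ω) →
      ∃ (σ : ℝ) (e p q : Fin N → ℝ) (dep arr Φ : Fin N → PlaneDiffeo ⊤), (σ = 1 ∨ σ = -1) ∧
        (∀ i, 0 < e i ∧ e i ≤ E ∧ (e i)⁻¹ ≤ E ∧ |p i| ≤ E ∧ |q i| ≤ E) ∧
        (∀ i z, (dep i).toFun z = ((d i).1 + (μ * σ * e i * z.1 - q i * (μ * (e i)⁻¹ * z.2)),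
          (d i).2 + μ * (e i)⁻¹ * z.2)) ∧
        (∀ i z, (arr i).toFun z = ((ar i).1 + (μ * σ * e i * z.1 + p i * (μ * (e i)⁻¹ * z.2)),
          (ar i).2 + μ * (e i)⁻¹ * z.2)) ∧
        (∀ i z, (fderiv ℝ (arr i).toFun z).det = σ * μ ^ 2) ∧
        (∀ i, (Φ i).Symplectic) ∧ (∀ i, CB univ r δ fun z => (Φ i).toFun z - z) ∧
        ∀ i (z : P2), ‖z‖ < R →
          K ((dep i).toFun z) = (arr (i + 1)).toFun ((Φ (i + 1)).toFun (z.2, -z.1)) := by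
  obtain ⟨E, hE, C', hC', hch⟩ := near_id_charts hN r hC hc₀ (by linarith : 1 ≤ R + 4)
  obtain ⟨Ce, hCe, ε₀, hε₀, hext⟩ := exists_extension r hr R (by linarith)
  refine ⟨E, hE, min 1 (min (ε₀ / C') (δ / (Ce * C'))), by positivity, min_le_left _ _, ?_⟩
  intro K Ω s d ar μ hK hdet hKC hs htw hKd hμ hμ₀ hΩ
  rw [le_min_iff, le_min_iff, le_div_iff₀ (by positivity), le_div_iff₀ (by positivity)] at hμ₀
  obtain ⟨σ, e, p, q, dep, arr, hσ, he, hdep, harr, hdetd, hdeta, hφ⟩ :=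
    hch K Ω s d ar μ hK hdet hKC hs htw hKd hμ hμ₀.1 hΩ
  let J' : P2 →L[ℝ] P2 := mat 0 (-1) 1 0
  have hJ' : ∀ z, J' z = (-z.2, z.1) := fun z => by simp [J', mat_apply]
  have hσ0 : σ * μ ^ 2 ≠ 0 := by
    rcases hσ with rfl | rfl <;> simp [hμ.ne']
  have hext' := fun i => hext (fun z => (arr (i + 1)).invFun (K ((dep i).toFun (J' z)))) (by
      have h1 := (arr (i + 1)).contDiff_inv
      have h2 := (dep i).contDiff
      exact h1.comp (hK.comp (h2.comp J'.contDiff))) (fun z => by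
      have h1 : HasFDerivAt (fun z => (dep i).toFun (J' z)) _ z :=
        (((dep i).contDiff.differentiable (by simp) (J' z)).hasFDerivAt).comp z J'.hasFDerivAt
      have h2 : HasFDerivAt (fun z => K ((dep i).toFun (J' z))) _ z :=
        ((hK.differentiable (by simp) _).hasFDerivAt).comp z h1
      have h3 : HasFDerivAt (fun z => (arr (i + 1)).invFun (K ((dep i).toFun (J' z)))) _ z :=
        (((arr (i + 1)).contDiff_inv.differentiable (by simp) _).hasFDerivAt).comp z h2
      rw [h3.fderiv, det_comp_P2, det_comp_P2, det_comp_P2, hdet, hdetd]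
      have h4 := fderiv_det_inv (by simp) (arr (i + 1)) (hdeta (i + 1))
        (K ((dep i).toFun (J' z)))
      have h5 : J'.det = 1 := by rw [det_P2]; simp [hJ']
      rw [h5]
      linear_combination h4) (C' * μ) (by linarith) (by
      have := (hφ i).mono Subset.rfl (show r ≤ r + 2 by omega) le_rfl
      simpa only [hJ'] using this)
  choose Ψ hΨs hΨδ hΨ using hext'
  refine ⟨σ, e, p, q, dep, arr, fun i => Ψ (i - 1), hσ, he, hdep, harr, hdeta,
    fun i => hΨs _, fun i => (hΨδ _).mono Subset.rfl le_rfl (by nlinarith), ?_⟩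
  intro i z hz
  have h1 := hΨ i (z.2, -z.1) (by
    rw [mem_ball_zero_iff, Prod.norm_mk, norm_neg]
    rwa [Prod.norm_def, max_comm] at hz)
  simp only [add_sub_cancel_right]
  rw [h1, (arr (i + 1)).right_inv, hJ']
  simp

/-! ### Symbolic dynamics of the perturbed map -/

/-- The orbit of a point under a sequence of maps. -/
def orb (G : ℕ → P2 → P2) : ℕ → P2 → P2
  | 0, x => x
  | k + 1, x => G k (orb G k x)

theorem seqComp_eq_orb (G : ℕ → P2 → P2) : ∀ (n : ℕ) (x : P2),
    seqComp (fun i : Fin n => G i) x = orb G n x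
  | 0, x => rfl
  | n + 1, x => by
    have := seqComp_eq_orb G n x
    change G n (seqComp (fun i : Fin n => G i) x) = G n (orb G n x)
    rw [this]

/-- In the charts `Pa i` the perturbation `S` followed by the return map is the Hénon-type map
`H_{ψ i}` followed by `Φ (i + 1)`. Hence the orbit of a point of the disc visits the `N` windows
cyclically, and comes back to the first one only after `N` returns. -/
theorem perturbed_dynamics {N : ℕ} [NeZero N] {L R : ℝ} (hL : 0 ≤ L) {f S : P2 → P2} {V : Set P2}
    {n₁ : ℕ} (hn₁ : 0 < n₁) (Pa Pd Φ : Fin N → P2 → P2) (ψ : Fin N → ℝ → ℝ)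
    (hΦ : ∀ i z, ‖Φ i z - z‖ ≤ 1) (hψ : ∀ i t, |ψ i t| ≤ L)
    (hS : ∀ i (z : P2), ‖z‖ < R → S (Pa i z) = Pd i (z.1 - ψ i z.2, z.2))
    (hf : ∀ i (z : P2), ‖z‖ < R → f^[n₁] (Pd i z) = Pa (i + 1) (Φ (i + 1) (z.2, -z.1)))
    (hV : ∀ i (z : P2), ‖z‖ < R → ∀ l, 0 < l → l < n₁ → f^[l] (Pd i z) ∉ V)
    (hSV : ∀ z ∉ V, S z = z) (hPaV : ∀ i (z : P2), ‖z‖ < R → Pa i z ∈ V)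
    (hdisj : ∀ i i', i ≠ i' → ∀ z z' : P2, ‖z‖ < R → ‖z'‖ < R → Pa i z ≠ Pa i' z')
    (hR : N * (L + 2) + L + 3 ≤ R) :
    (∀ x ∈ Disc, (f ∘ S)^[N * n₁] (Pa 0 (Φ 0 x)) =
      Pa 0 (Φ 0 (seqComp (fun i => henon (ψ i) ∘ Φ i) x))) ∧
    (∀ x ∈ Disc, Pa 0 (Φ 0 x) ∈ V) ∧
    ∀ k, 1 ≤ k → k < N * n₁ → ∀ x ∈ Disc, ∀ x' ∈ Disc,
      (f ∘ S)^[k] (Pa 0 (Φ 0 x)) ≠ Pa 0 (Φ 0 x') := by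
  let G : ℕ → P2 → P2 := fun k => henon (ψ (Fin.ofNat N k)) ∘ Φ (Fin.ofNat N k)
  have hG : (fun i : Fin N => G i) = fun i => henon (ψ i) ∘ Φ i := by
    funext i
    simp only [G, Fin.ofNat_val_eq_self]
  have hΦn : ∀ i z, ‖Φ i z‖ ≤ ‖z‖ + 1 := fun i z => by
    have := norm_add_le z (Φ i z - z)
    rw [add_sub_cancel] at this
    linarith [hΦ i z]
  have hGn : ∀ k z, ‖G k z‖ ≤ ‖z‖ + 1 + L := fun k z => by
    have h1 := hΦn (Fin.ofNat N k) z
    have h2 := norm_fst_le (Φ (Fin.ofNat N k) z)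
    have h3 := norm_snd_le (Φ (Fin.ofNat N k) z)
    have h4 := hψ (Fin.ofNat N k) (Φ (Fin.ofNat N k) z).2
    simp only [G, Function.comp_apply, henon, Prod.norm_mk]
    refine max_le (by linarith) ((norm_add_le _ _).trans ?_)
    rw [norm_neg, Real.norm_eq_abs (ψ _ _)]
    linarith
  have horb : ∀ k (x : P2), ‖x‖ ≤ 1 → ‖orb G k x‖ ≤ 1 + k * (1 + L) := fun k x hx => by
    induction k with
    | zero => simpa [orb] using hx
    | succ k ih =>
      refine (hGn k _).trans ?_
      push_cast
      linarith
  have hbd : ∀ k ≤ N, ∀ x : P2, ‖x‖ ≤ 1 → ‖orb G k x‖ + 2 + L < R := fun k hk x hx => by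
    have h1 := horb k x hx
    have h2 : (k : ℝ) ≤ N := by exact_mod_cast hk
    have h3 : (1 : ℝ) ≤ N := by exact_mod_cast NeZero.one_le
    nlinarith
  -- the first return: the perturbation only acts at the starting point
  have hret : ∀ i (v : P2), ‖v‖ + L < R → ∀ l, 0 < l → l ≤ n₁ →
      (f ∘ S)^[l] (Pa i v) = f^[l] (Pd i (v.1 - ψ i v.2, v.2)) := by
    intro i v hv l hl
    have hw : ‖((v.1 - ψ i v.2, v.2) : P2)‖ < R := by
      rw [Prod.norm_mk]
      have h1 := norm_fst_le v
      have h2 := norm_snd_le v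
      refine max_lt ((norm_sub_le _ _).trans_lt ?_) (by linarith)
      rw [Real.norm_eq_abs (ψ _ _)]
      linarith [hψ i v.2]
    induction l, hl using Nat.le_induction with
    | base =>
      intro _
      simp only [Nat.succ_eq_add_one, zero_add, Function.iterate_one, Function.comp_apply]
      rw [hS i v (by linarith)]
    | succ l hl ih =>
      intro hl'
      rw [Function.iterate_succ_apply', ih (by omega), Function.iterate_succ_apply',
        Function.comp_apply, hSV _ (hV i _ hw l hl (by omega))]
  have hstep : ∀ k < N, ∀ x : P2, ‖x‖ ≤ 1 →
      (f ∘ S)^[n₁] (Pa (Fin.ofNat N k) (Φ (Fin.ofNat N k) (orb G k x))) =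
        Pa (Fin.ofNat N (k + 1)) (Φ (Fin.ofNat N (k + 1)) (orb G (k + 1) x)) := by
    intro k hk x hx
    have h1 := hbd k hk.le x hx
    have h2 := hΦn (Fin.ofNat N k) (orb G k x)
    have hsucc : Fin.ofNat N (k + 1) = Fin.ofNat N k + 1 := by
      ext
      simp [Fin.val_add]
    rw [hret _ _ (by linarith) n₁ hn₁ le_rfl, hf, ← hsucc]
    · congr 2
      simp only [orb, G, Function.comp_apply, henon, neg_sub]
      rw [sub_eq_neg_add]
    · set v := Φ (Fin.ofNat N k) (orb G k x)
      rw [Prod.norm_mk]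
      have h1 := norm_fst_le v
      have h2 := norm_snd_le v
      refine max_lt ((norm_sub_le _ _).trans_lt ?_) (by linarith)
      rw [Real.norm_eq_abs (ψ _ _)]
      linarith [hψ (Fin.ofNat N k) v.2]
  have h00 : Fin.ofNat N 0 = 0 := by ext; simp
  have hmain : ∀ k ≤ N, ∀ x : P2, ‖x‖ ≤ 1 → (f ∘ S)^[k * n₁] (Pa 0 (Φ 0 x)) =
      Pa (Fin.ofNat N k) (Φ (Fin.ofNat N k) (orb G k x)) := by
    intro k
    induction k with
    | zero =>
      intro _ x _
      simp [orb]
    | succ k ih =>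
      intro hk x hx
      rw [Nat.succ_mul, Nat.add_comm, Function.iterate_add_apply, ih (by omega) x hx,
        hstep k (by omega) x hx]
  have hball : ∀ k ≤ N, ∀ x : P2, ‖x‖ ≤ 1 →
      ‖Φ (Fin.ofNat N k) (orb G k x)‖ + L < R := fun k hk x hx => by
    linarith [hbd k hk x hx, hΦn (Fin.ofNat N k) (orb G k x)]
  have hDisc : ∀ x ∈ Disc, ‖x‖ ≤ 1 := fun x hx => mem_closedBall_zero_iff.1 hx
  have hball0 : ∀ x ∈ Disc, ‖Φ 0 x‖ < R := fun x hx => by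
    have := hball 0 (Nat.zero_le _) x (hDisc x hx)
    rw [h00] at this
    change ‖Φ 0 x‖ + L < R at this
    linarith
  refine ⟨fun x hx => ?_, fun x hx => hPaV _ _ (hball0 x hx), fun k hk hkN x hx x' hx' => ?_⟩
  · have hNN : Fin.ofNat N N = 0 := by ext; simp
    rw [hmain N le_rfl x (hDisc x hx), hNN, ← hG, seqComp_eq_orb G N x]
  · have hq : k / n₁ < N := (Nat.div_lt_iff_lt_mul hn₁).2 hkN
    have hb := hball (k / n₁) hq.le x (hDisc x hx)
    have hk' : k = k % n₁ + k / n₁ * n₁ := by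
      rw [Nat.mul_comm]; exact (Nat.mod_add_div k n₁).symm
    rw [hk', Function.iterate_add_apply, hmain _ hq.le x (hDisc x hx)]
    rcases Nat.eq_zero_or_pos (k % n₁) with h0 | h0
    · rw [h0, Function.iterate_zero, id]
      refine hdisj _ _ ?_ _ _ (by linarith) (hball0 x' hx')
      intro h
      have h1 := congrArg Fin.val h
      simp only [Fin.val_ofNat, Fin.val_zero, Nat.mod_eq_of_lt hq] at h1
      rw [h0, h1] at hk'
      omega
    · have hlt := Nat.mod_lt k hn₁
      rw [hret _ _ hb _ h0 hlt.le]
      intro h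
      refine hV _ _ ?_ _ h0 hlt (h ▸ hPaV _ _ (hball0 x' hx'))
      set v := Φ (Fin.ofNat N (k / n₁)) (orb G (k / n₁) x)
      rw [Prod.norm_mk]
      have h1 := norm_fst_le v
      have h2 := norm_snd_le v
      refine max_lt ((norm_sub_le _ _).trans_lt ?_) (by linarith)
      rw [Real.norm_eq_abs (ψ _ _)]
      linarith [hψ (Fin.ofNat N (k / n₁)) v.2]

/-! ### Auxiliary estimates for the perturbation -/

/-- The horizontal displacement which the perturbation has to realise in one window is `O(|ϵ|)` in
the `C^r` sense. -/
theorem zeta_bound {r : ℕ} {ψ : ℝ → ℝ} (hψ : ContDiff ℝ r ψ) {L : ℝ} (hL : 0 ≤ L)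
    (hψL : ∀ k ≤ r, ∀ t, |iteratedDeriv k ψ t| ≤ L) {κ K : ℝ} (hK : 1 ≤ K) (hκ : |κ| ≤ K)
    {k₀ k₁ m B₀ B₁ B₂ : ℝ} (h₀ : |k₀| ≤ B₀) (h₁ : |k₁| ≤ B₁) (h₂ : |m| ≤ B₂) (ϵ y₀ : ℝ) {ρ : ℝ}
    (hρ : 0 ≤ ρ) :
    ContDiff ℝ r (fun t => ϵ * (k₀ + k₁ * (t - y₀) + m * ψ (κ * (t - y₀)))) ∧
    CB (Metric.closedBall y₀ ρ) r
      (|ϵ| * (B₀ + B₁ * (1 + ρ) + B₂ * (r.factorial * L * K ^ r)))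
      (fun t => ϵ * (k₀ + k₁ * (t - y₀) + m * ψ (κ * (t - y₀)))) := by
  obtain ⟨Λ, hΛ, hΛn⟩ := exists_mul_clm
  have hΛc : ∀ c, ‖Λ c‖ ≤ |c| := fun c => (Λ.le_of_opNorm_le hΛn c).trans (by simp)
  have hB₁ : 0 ≤ B₁ := (abs_nonneg _).trans h₁
  have c0 : CB (Metric.closedBall y₀ ρ) r B₀ (fun _ : ℝ => k₀) := CB.const h₀
  have c1 : CB (Metric.closedBall y₀ ρ) r (B₁ * (1 + ρ)) (fun t : ℝ => k₁ * (t - y₀)) := by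
    refine CB.mono (r := r + 1) ?_ Subset.rfl (Nat.le_succ r) le_rfl
    refine CB.of_fderiv (fun x hx => ?_) ?_
    · rw [Real.norm_eq_abs, abs_mul]
      rw [Metric.mem_closedBall, Real.dist_eq] at hx
      gcongr
      linarith
    · have h1 : (fderiv ℝ fun t => k₁ * (t - y₀)) = fun _ => Λ k₁ := by
        funext t
        have : HasDerivAt (fun t => k₁ * (t - y₀)) k₁ t := by
          simpa using ((hasDerivAt_id t).sub_const y₀).const_mul k₁
        rw [this.hasFDerivAt.fderiv]
        refine ContinuousLinearMap.ext fun t => ?_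
        rw [hΛ]
        simp [mul_comm]
      rw [h1]
      exact CB.const (((hΛc _).trans h₁).trans (by nlinarith))
  have c2 := cb_rescaled_scalar hψ hL hψL hK hκ y₀ (Metric.closedBall y₀ ρ)
  have s2 : ContDiff ℝ r (fun t => ψ (κ * (t - y₀))) := hψ.comp (by fun_prop)
  have c2' : CB (Metric.closedBall y₀ ρ) r (B₂ * (r.factorial * L * K ^ r))
      (fun t => m * ψ (κ * (t - y₀))) := by
    have := (c2.comp_left (Λ m) s2).mono Subset.rfl le_rfl
      (mul_le_mul_of_nonneg_right ((hΛc m).trans h₂) (by positivity))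
    simpa only [hΛ] using this
  have s0 : ContDiff ℝ r (fun _ : ℝ => k₀) := contDiff_const
  have s1 : ContDiff ℝ r (fun t : ℝ => k₁ * (t - y₀)) := by fun_prop
  have s2' : ContDiff ℝ r (fun t => m * ψ (κ * (t - y₀))) := contDiff_const.mul s2
  have cs := (c0.add c1 s0 s1).add c2' (s0.add s1) s2'
  have ss := (s0.add s1).add s2'
  refine ⟨contDiff_const.mul ss, ?_⟩
  have hnn : 0 ≤ B₀ + B₁ * (1 + ρ) + B₂ * (r.factorial * L * K ^ r) :=
    (norm_nonneg _).trans (cs.norm_le (Metric.mem_closedBall_self hρ))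
  have := (cs.comp_left (Λ ϵ) ss).mono Subset.rfl le_rfl
      (mul_le_mul_of_nonneg_right (hΛc ϵ) hnn)
  simpa only [hΛ] using this

theorem det_iterate {f : P2 → P2} (hf : ContDiff ℝ ∞ f) (h : ∀ x, (fderiv ℝ f x).det = 1) (n : ℕ) :
    ContDiff ℝ ∞ f^[n] ∧ ∀ x, (fderiv ℝ f^[n] x).det = 1 := by
  induction n with
  | zero =>
    refine ⟨contDiff_id, fun x => ?_⟩
    rw [Function.iterate_zero, fderiv_id, det_P2]
    simp
  | succ n ih =>
    have h1 : f^[n + 1] = f ∘ f^[n] := Function.iterate_succ' f n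
    rw [h1]
    refine ⟨hf.comp ih.1, fun x => ?_⟩
    rw [fderiv_comp x (hf.differentiable (by simp) _) (ih.1.differentiable (by simp) _),
      det_comp_P2, h, ih.2, one_mul]

/-- The rescaled return map is area preserving, and conjugate to an iterate of `f` by the rescaling. -/
theorem ret_props {f : P2 → P2} (hf : ContDiff ℝ ∞ f) (h : ∀ x, (fderiv ℝ f x).det = 1) (n : ℕ)
    (a : ℝ) {ϵ : ℝ} (hϵ : ϵ ≠ 0) :
    ContDiff ℝ ∞ (ret f a ϵ n) ∧ (∀ z, (fderiv ℝ (ret f a ϵ n) z).det = 1) ∧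
      ∀ z, f^[n] ((aff (a, 0) 0 hϵ one_ne_zero).toFun z) =
        (aff (a, 0) 0 hϵ one_ne_zero).toFun (ret f a ϵ n z) := by
  set T := aff (a, 0) 0 hϵ one_ne_zero with hT
  have h1 : ret f a ϵ n = fun z => T.invFun (f^[n] (T.toFun z)) := by
    funext z
    simp [ret, hT, aff]
  obtain ⟨hn, hdet⟩ := det_iterate hf h n
  refine ⟨?_, fun z => ?_, fun z => ?_⟩
  · rw [h1]
    exact T.contDiff_inv.comp (hn.comp T.contDiff)
  · rw [h1]
    have h2 : HasFDerivAt (fun z => f^[n] (T.toFun z)) _ z :=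
      ((hn.differentiable (by simp) _).hasFDerivAt).comp z
        (T.contDiff.differentiable (by simp) z).hasFDerivAt
    have h3 : HasFDerivAt (fun z => T.invFun (f^[n] (T.toFun z))) _ z :=
      ((T.contDiff_inv.differentiable (by simp) _).hasFDerivAt).comp z h2
    rw [h3.fderiv, det_comp_P2, det_comp_P2, hdet, one_mul]
    have h4 := fderiv_det_inv (by simp) T (det_aff _ _ hϵ one_ne_zero) (f^[n] (T.toFun z))
    rw [hT, det_aff, ← hT]
    linear_combination h4
  · rw [h1, T.right_inv]

/-! ### Assembling the perturbation -/

/-- Size of the window of radius `R` seen in the renormalization charts of scale `μ`. -/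
theorem chart_bound {μ σ e q E R x y : ℝ} (hμ : 0 < μ) (hσ : σ = 1 ∨ σ = -1) (he : 0 < e)
    (heE : e ≤ E) (heE' : e⁻¹ ≤ E) (hq : |q| ≤ E) (hE : 1 ≤ E) (hR : 0 ≤ R) (hx : |x| ≤ R)
    (hy : |y| ≤ R) :
    |μ * σ * e * x| + |q * (μ * e⁻¹ * y)| ≤ μ * (2 * E ^ 2 * (R + 4)) ∧
      |μ * e⁻¹ * y| ≤ μ * (2 * E ^ 2 * (R + 4)) := by
  have hσ' : |σ| = 1 := by rcases hσ with h | h <;> simp [h]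
  have he' : 0 < e⁻¹ := inv_pos.2 he
  have h1 : |μ * σ * e * x| ≤ μ * (E * R) := by
    rw [abs_mul, abs_mul, abs_mul, hσ', abs_of_pos hμ, abs_of_pos he, mul_one, mul_assoc]
    gcongr
  have h2 : |μ * e⁻¹ * y| ≤ μ * (E * R) := by
    rw [abs_mul, abs_mul, abs_of_pos hμ, abs_of_pos he', mul_assoc]
    gcongr
  have h3 : |q * (μ * e⁻¹ * y)| ≤ E * (μ * (E * R)) := by
    rw [abs_mul]
    gcongr
  have h4 : E * R ≤ E ^ 2 * (R + 4) := by nlinarith [mul_nonneg (sub_nonneg.2 hE) hR]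
  have h5 : μ * (E * R) ≤ μ * (E ^ 2 * (R + 4)) := by gcongr
  have h6 : E * (μ * (E * R)) ≤ μ * (E ^ 2 * (R + 4)) := by
    rw [show E * (μ * (E * R)) = μ * (E ^ 2 * R) by ring]
    gcongr
    linarith
  have h7 : 0 ≤ μ * (E ^ 2 * (R + 4)) := by positivity
  constructor <;> nlinarith

theorem crDistGlobal_lt {r : ℕ} {f g : P2 → P2} (hf : ContDiff ℝ r f) (hg : ContDiff ℝ r g)
    {M δ : ℝ} (h : CB univ r M (fun z => f z - g z)) (hM : (r + 1) * M < δ) (hδ : 0 < δ) :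
    crDistGlobal r f g < ENNReal.ofReal δ :=
  (crDistGlobal_le hf hg h).trans_lt ((ENNReal.ofReal_lt_ofReal_iff hδ).2 hM)

/-- Equally spaced heights `y i` near `y₀`, and the half-width `w` of disjoint windows. -/
theorem exists_heights {N : ℕ} [NeZero N] (y₀ : ℝ) {κ : ℝ} (hκ : 0 < κ) :
    ∃ (w : ℝ) (y : Fin N → ℝ), 0 < w ∧ 4 * w ≤ κ ∧ (∀ i, |y i - y₀| ≤ κ) ∧
      ∀ i i', i ≠ i' → 4 * w ≤ |y i - y i'| := by
  have hN : (0 : ℝ) < N := by exact_mod_cast Nat.pos_of_ne_zero (NeZero.ne N)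
  have hN1 : (1 : ℝ) ≤ N := by exact_mod_cast Nat.pos_of_ne_zero (NeZero.ne N)
  refine ⟨κ / (4 * N), fun i => y₀ + κ / N * (i.val : ℝ), by positivity, ?_, fun i => ?_,
    fun i i' h => ?_⟩
  · rw [show 4 * (κ / (4 * N)) = κ / N by field_simp]
    exact div_le_self hκ.le hN1
  · rw [add_sub_cancel_left, abs_of_nonneg (by positivity), div_mul_eq_mul_div, div_le_iff₀ hN]
    have : (i.val : ℝ) ≤ N := by exact_mod_cast i.isLt.le
    gcongr
  · rw [show 4 * (κ / (4 * N)) = κ / N * 1 by field_simp,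
      show y₀ + κ / N * (i.val : ℝ) - (y₀ + κ / N * (i'.val : ℝ)) =
        κ / N * ((i.val : ℝ) - i'.val) by ring, abs_mul, abs_of_pos (by positivity)]
    gcongr
    have h1 : (i.val : ℤ) - i'.val ≠ 0 := by
      intro h2
      exact h (Fin.ext (by omega))
    exact_mod_cast Int.one_le_abs h1

theorem mul_lt_of_le_div {W t θ : ℝ} (hW : 0 < W) (ht : 0 < t) (h : θ ≤ t / (W + 1)) :
    θ * W < t := by
  calc θ * W ≤ t / (W + 1) * W := by gcongr
    _ < t / (W + 1) * (W + 1) := by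
        have : 0 < t / (W + 1) := by positivity
        nlinarith
    _ = t := by field_simp

set_option maxHeartbeats 3000000 in
/-- The renormalization lemma, for the saddle at the origin. The constants are chosen in the order:
positions of the windows, scale `μ` of the charts, distance `ϵ` of the return maps to the band. -/
theorem renormalization (f : PlaneDiffeo ⊤) (hsymp : f.Symplectic) {τ : ℕ}
    (hyp : IsHypPerPtPlane f.toFun τ 0) {a c d : ℝ} (hcd : c < d) {j : ℕ} (hj : j < τ)
    (hIu : ({a} ×ˢ Icc c d : Set P2) ⊆ stableSetPlane f.invFun 0)
    (hIs : ({a} ×ˢ Icc c d : Set P2) ⊆ stableSetPlane f.toFun (f.toFun^[j] 0))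
    {N : ℕ} (hN : Odd N) {r : ℕ} (hr : 1 ≤ r) {L δ : ℝ} (hL : 0 < L) (hδ : 0 < δ)
    {U : Set P2} (hU : IsOpen U) (hIU : ({a} ×ˢ Icc c d : Set P2) ⊆ U) :
    ∃ n : ℕ, 1 < n ∧
      ∃ Φ : Fin N → PlaneDiffeo ⊤,
        (∀ i, (Φ i).Symplectic) ∧
        (∀ i, crDistGlobal r (Φ i).toFun id < ENNReal.ofReal δ) ∧
      ∃ Q : PlaneDiffeo ⊤,
        (∃ cJ : ℝ, cJ ≠ 0 ∧ ∀ x : P2, (fderiv ℝ Q.toFun x).det = cJ) ∧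
        Q.toFun '' Disc ⊆ U ∧
        ∀ ψ : Fin N → (ℝ → ℝ),
          (∀ i, ContDiff ℝ r (ψ i)) →
          (∀ i, ∀ k ≤ r, ∀ t : ℝ, |iteratedDeriv k (ψ i) t| ≤ L) →
          ∃ fhat : PlaneDiffeo r, fhat.Symplectic ∧
            (∀ x ∉ U, fhat.toFun x = f.toFun x) ∧
            crDistGlobal r fhat.toFun f.toFun < ENNReal.ofReal δ ∧
            (∀ x ∈ Disc, fhat.toFun^[n] (Q.toFun x) =
              Q.toFun (seqComp (fun i => henon (ψ i) ∘ (Φ i).toFun) x)) ∧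
            ∀ k : ℕ, 1 ≤ k → k < n →
              fhat.toFun^[k] '' (Q.toFun '' Disc) ∩ Q.toFun '' Disc = ∅ := by
  have : NeZero N := ⟨hN.pos.ne'⟩
  have hN1 : (1 : ℝ) ≤ N := by exact_mod_cast hN.pos
  obtain ⟨R, hRdef⟩ : ∃ R : ℝ, R = N * (L + 2) + L + 3 := ⟨_, rfl⟩
  have hR2 : 2 < R := by nlinarith
  have hR0 : 0 ≤ R := by linarith
  obtain ⟨δ₁, hδ₁, hδ₁1, hδ₁δ⟩ : ∃ δ₁ : ℝ, 0 < δ₁ ∧ δ₁ ≤ 1 ∧ (r + 1) * δ₁ < δ := by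
    refine ⟨min 1 (δ / (r + 2)), by positivity, min_le_left _ _, ?_⟩
    calc ((r : ℝ) + 1) * min 1 (δ / (r + 2)) ≤ (r + 1) * (δ / (r + 2)) := by
          gcongr; exact min_le_right _ _
      _ < (r + 2) * (δ / (r + 2)) := by gcongr; norm_num
      _ = δ := by field_simp
  obtain ⟨yp, η, hη, hVU, u₀, hu₀, C, hC, c₀, hc₀, s, hs, hfam⟩ :=
    return_family f hyp hcd hj hIu hIs hU hIU (r := r + 2) (by omega)
  obtain ⟨V, hV⟩ : ∃ V, V = Metric.ball ((a, yp) : P2) η := ⟨_, rfl⟩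
  rw [← hV] at hVU
  obtain ⟨E, hE, μ₀, hμ₀, hμ₀1, htnf⟩ :=
    transit_normal_form hN r hr hC hc₀ (by linarith : 1 ≤ R) hδ₁
  -- heights of the `N` windows
  obtain ⟨κ, hκ, hκη, hκc⟩ : ∃ κ : ℝ, 0 < κ ∧ κ ≤ η / 4 ∧ C * κ + κ ≤ c₀ * u₀ / 8 := by
    refine ⟨min (η / 4) (c₀ * u₀ / (16 * C)), by positivity, min_le_left _ _, ?_⟩
    have h1 : C * min (η / 4) (c₀ * u₀ / (16 * C)) ≤ c₀ * u₀ / 16 := by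
      calc _ ≤ C * (c₀ * u₀ / (16 * C)) := by gcongr; exact min_le_right _ _
        _ = c₀ * u₀ / 16 := by field_simp
    have h2 : min (η / 4) (c₀ * u₀ / (16 * C)) ≤ C * min (η / 4) (c₀ * u₀ / (16 * C)) :=
      le_mul_of_one_le_left (by positivity) hC
    linarith
  obtain ⟨w, y, hw, hwκ, hyκ, hyd⟩ := exists_heights (N := N) yp hκ
  have hballV : ∀ i, Metric.closedBall ((a, y i) : P2) (2 * w) ⊆ V := fun i => by
    rw [hV]
    refine Metric.closedBall_subset_ball' ?_
    rw [Prod.dist_eq, dist_self, max_eq_right dist_nonneg, Real.dist_eq]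
    have := hyκ i
    linarith
  obtain ⟨Cs, hCs, hshear⟩ := shear_family r hr a y hw V hyd hballV
  obtain ⟨C6, hC6, hcomp⟩ := comp_sub_bound f.contDiff
    (isCompact_closedBall ((a, yp) : P2) η) r
  -- the scale of the renormalization window
  obtain ⟨P, hPdef⟩ : ∃ P : ℝ, P = 2 * E ^ 2 * (R + 4) := ⟨_, rfl⟩
  have hP : 0 < P := by rw [hPdef]; positivity
  obtain ⟨μ, hμ, hμμ₀, hμu, hμw⟩ :
      ∃ μ : ℝ, 0 < μ ∧ μ ≤ μ₀ ∧ μ * P ≤ u₀ / 4 ∧ μ * P ≤ w / 2 := by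
    refine ⟨min μ₀ (min (u₀ / (4 * P)) (w / (2 * P))), by positivity, min_le_left _ _, ?_, ?_⟩
    · calc _ ≤ u₀ / (4 * P) * P := by
            gcongr; exact (min_le_right _ _).trans (min_le_left _ _)
        _ = u₀ / 4 := by field_simp
    · calc _ ≤ w / (2 * P) * P := by
            gcongr; exact (min_le_right _ _).trans (min_le_right _ _)
        _ = w / 2 := by field_simp
  have hμER : μ * E * (R + 4) ≤ μ * P := by
    rw [hPdef, mul_assoc]
    gcongr
    nlinarith
  obtain ⟨Cζ, hCζdef⟩ : ∃ Cζ : ℝ, Cζ = (2 * C + u₀) + (2 * E) * (1 + 2 * w) +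
    E * (r.factorial * L * (E / μ) ^ r) := ⟨_, rfl⟩
  have hCζ : 0 < Cζ := by rw [hCζdef]; positivity
  -- the distance of the return to the homoclinic band
  obtain ⟨W, hWdef⟩ : ∃ W : ℝ, W = (r + 1) * (C6 * (Cs * Cζ)) := ⟨_, rfl⟩
  have hW : 0 < W := by rw [hWdef]; positivity
  obtain ⟨θ, hθ, hθc, hθw, hθ1, hθδ⟩ : ∃ θ : ℝ, 0 < θ ∧ θ ≤ c₀ * u₀ / 8 ∧
      θ * (C + w) < w ∧ θ * W < 1 ∧ θ * W < δ := by
    refine ⟨min (c₀ * u₀ / 8) (min (w / (C + w + 1)) (min (1 / (W + 1)) (δ / (W + 1)))),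
      by positivity, min_le_left _ _, ?_, ?_, ?_⟩
    · exact mul_lt_of_le_div (by positivity) hw ((min_le_right _ _).trans (min_le_left _ _))
    · exact mul_lt_of_le_div hW one_pos
        ((min_le_right _ _).trans ((min_le_right _ _).trans (min_le_left _ _)))
    · exact mul_lt_of_le_div hW hδ
        ((min_le_right _ _).trans ((min_le_right _ _).trans (min_le_right _ _)))
  obtain ⟨ϵ, hϵ, hϵθ, Uc, hUc, n₁, hn₁, hesc, hCB, htw, hcen⟩ := hfam θ hθ
  obtain ⟨K, hK⟩ : ∃ K, K = ret f.toFun a ϵ n₁ := ⟨_, rfl⟩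
  obtain ⟨hKs, hKdet, hKconj⟩ := ret_props f.contDiff hsymp n₁ a hϵ
  rw [← hK] at hCB htw hcen hKs hKdet hKconj
  -- the points of transit from the `i`-th window to the next one
  have htr : ∀ i, ∃ Ud, |Ud - Uc| ≤ u₀ / 2 ∧ (K (Ud, y i)).2 = y (i + 1) := fun i => by
    refine exists_transit_point (hKs.of_le (by exact_mod_cast le_top)) hs hu₀
      (hCB.mono Subset.rfl (by omega) le_rfl) htw (hcen.le.trans hθc) ?_ ?_
    · have := hyκ i
      linarith
    · have h1 := hyκ i
      have h2 := hyκ (i + 1)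
      have h3 : C * |y i - yp| ≤ C * κ := by gcongr
      nlinarith [mul_pos hc₀ hu₀]
  choose Ud hUd hKUd using htr
  obtain ⟨Ω, hΩ⟩ : ∃ Ω, Ω = {z : P2 | |z.1 - Uc| < u₀ ∧ |z.2 - yp| < η} := ⟨_, rfl⟩
  rw [← hΩ] at hCB
  have hdΩ : ∀ i (z : P2), |z.1 - Ud i| ≤ μ * P → |z.2 - y i| ≤ μ * P → z ∈ Ω := by
    intro i z h1 h2
    have h3 := abs_sub_le z.1 (Ud i) Uc
    have h4 := abs_sub_le z.2 (y i) yp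
    have h5 := hUd i
    have h6 := hyκ i
    rw [hΩ]
    exact ⟨by linarith, by linarith⟩
  obtain ⟨Ua, hUa⟩ : ∃ Ua : Fin N → ℝ, ∀ i, Ua i = (K (Ud (i - 1), y (i - 1))).1 :=
    ⟨_, fun i => rfl⟩
  have hUaC : ∀ i, |Ua i| ≤ C := fun i => by
    have h1 := hCB.norm_le (hdΩ (i - 1) (Ud (i - 1), y (i - 1))
      (by simp; positivity) (by simp; positivity))
    rw [hUa]
    exact (norm_fst_le _).trans h1
  obtain ⟨σ, e, p, q, dep, arr, Φ, hσ, hepq, hdep, harr, hdetarr, hΦs, hΦδ, htrans⟩ :=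
    htnf K Ω s (fun i => (Ud i, y i)) (fun i => (Ua i, y i)) μ hKs hKdet hCB hs
      (fun i => by
        have h1 := hdΩ i (Ud i, y i) (by simp; positivity) (by simp; positivity)
        rw [hΩ] at h1
        exact htw _ h1.1 h1.2)
      (fun i => by
        refine Prod.ext ?_ ?_
        · simp only [hUa]
          rw [add_sub_cancel_right]
        · exact hKUd i)
      hμ hμμ₀
      (fun i z hz => by
        rw [Metric.mem_closedBall, Prod.dist_eq, max_le_iff, Real.dist_eq, Real.dist_eq] at hz
        exact hdΩ i z (hz.1.trans hμER) (hz.2.trans hμER))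
  simp only at hdep harr
  have hepq' : ∀ i (z : P2), ‖z‖ < R →
      |μ * σ * e i * z.1 - q i * (μ * (e i)⁻¹ * z.2)| ≤ μ * P ∧
      |μ * σ * e i * z.1 + p i * (μ * (e i)⁻¹ * z.2)| ≤ μ * P ∧
      |μ * (e i)⁻¹ * z.2| ≤ μ * P := fun i z hz => by
    obtain ⟨h1, h2, h3, h4, h5⟩ := hepq i
    have hz1 : |z.1| ≤ R := (norm_fst_le z).trans hz.le
    have hz2 : |z.2| ≤ R := (norm_snd_le z).trans hz.le
    have k1 := chart_bound hμ hσ h1 h2 h3 h4 hE hR0 hz1 hz2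
    have k2 := chart_bound hμ hσ h1 h2 h3 h5 hE hR0 hz1 hz2
    rw [← hPdef] at k1 k2
    exact ⟨(abs_sub _ _).trans k2.1, (abs_add_le _ _).trans k1.1, k1.2⟩
  obtain ⟨T, hTdef⟩ : ∃ T : PlaneDiffeo ⊤, T = aff (a, 0) 0 hϵ one_ne_zero := ⟨_, rfl⟩
  rw [← hTdef] at hKconj
  have hT : ∀ z, T.toFun z = (a + ϵ * z.1, z.2) := fun z => by
    rw [hTdef]
    simp [aff]
  have hTdet : ∀ z, (fderiv ℝ T.toFun z).det = ϵ := fun z => by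
    rw [hTdef, det_aff, mul_one]
  have hPa2 : ∀ i (z : P2), ‖z‖ < R → |(T.toFun ((arr i).toFun z)).1 - a| < w ∧
      |(T.toFun ((arr i).toFun z)).2 - y i| < w := fun i z hz => by
    obtain ⟨-, h2, h3⟩ := hepq' i z hz
    rw [hT, harr]
    simp only [add_sub_cancel_left]
    refine ⟨?_, by linarith⟩
    rw [abs_mul]
    have h4 := (abs_add_le (Ua i) (μ * σ * e i * z.1 + p i * (μ * (e i)⁻¹ * z.2))).trans
      (add_le_add (hUaC i) (h2.trans (hμw.trans (by linarith : w / 2 ≤ w))))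
    calc _ ≤ θ * (C + w) := by gcongr
      _ < w := hθw
  have hPaV : ∀ i (z : P2), ‖z‖ < R → T.toFun ((arr i).toFun z) ∈ V := fun i z hz => by
    obtain ⟨h1, h2⟩ := hPa2 i z hz
    have h3 := abs_sub_le (T.toFun ((arr i).toFun z)).2 (y i) yp
    have h4 := hyκ i
    rw [hV, Metric.mem_ball, Prod.dist_eq, max_lt_iff, Real.dist_eq, Real.dist_eq]
    exact ⟨by simp only; linarith, by simp only; linarith⟩
  have hΦ1 : ∀ i z, ‖(Φ i).toFun z - z‖ ≤ 1 := fun i z =>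
    ((hΦδ i).norm_le (mem_univ z)).trans hδ₁1
  have hdepV : ∀ i (z : P2), ‖z‖ < R → ∀ l, 0 < l → l < n₁ →
      f.toFun^[l] (T.toFun ((dep i).toFun z)) ∉ V := fun i z hz l hl hl' => by
    obtain ⟨h1, -, h3⟩ := hepq' i z hz
    have h4 := hdΩ i ((dep i).toFun z) (by rw [hdep]; simpa using h1)
      (by rw [hdep]; simpa using h3)
    rw [hΩ] at h4
    rw [hT, hV]
    exact hesc _ h4.1 h4.2 l hl hl'
  have hreturn : ∀ i (z : P2), ‖z‖ < R → f.toFun^[n₁] (T.toFun ((dep i).toFun z)) =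
      T.toFun ((arr (i + 1)).toFun ((Φ (i + 1)).toFun (z.2, -z.1))) := fun i z hz => by
    rw [hKconj, htrans i z hz]
  have hdisj : ∀ i i', i ≠ i' → ∀ z z' : P2, ‖z‖ < R → ‖z'‖ < R →
      T.toFun ((arr i).toFun z) ≠ T.toFun ((arr i').toFun z') := by
    intro i i' hii z z' hz hz' h
    have h1 := (hPa2 i z hz).2
    have h2 := (hPa2 i' z' hz').2
    rw [← h] at h2
    have h3 := abs_sub_le (y i) (T.toFun ((arr i).toFun z)).2 (y i')
    rw [abs_sub_comm (y i) (T.toFun ((arr i).toFun z)).2] at h3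
    have h4 := hyd i i' hii
    linarith
  refine ⟨N * n₁, by nlinarith [hN.pos], Φ, hΦs, fun i => ?_,
    dcomp T (dcomp (arr 0) (Φ 0)), ⟨ϵ * (σ * μ ^ 2), ?_, fun x => ?_⟩, ?_, ?_⟩
  · exact crDistGlobal_lt ((Φ i).contDiff.of_le (by exact_mod_cast le_top)) contDiff_id
      (hΦδ i) hδ₁δ hδ
  · have hσ0 : σ ≠ 0 := by rcases hσ with h | h <;> rw [h] <;> norm_num
    positivity
  · have hd : ∀ g : PlaneDiffeo ⊤, Differentiable ℝ g.toFun := fun g =>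
      g.contDiff.differentiable (by simp)
    have h1 : fderiv ℝ (T.toFun ∘ ((arr 0).toFun ∘ (Φ 0).toFun)) x = _ :=
      (((hd T _).hasFDerivAt.comp x
        ((hd (arr 0) _).hasFDerivAt.comp x (hd (Φ 0) x).hasFDerivAt))).fderiv
    change (fderiv ℝ (T.toFun ∘ ((arr 0).toFun ∘ (Φ 0).toFun)) x).det = _
    rw [h1, det_comp_P2, det_comp_P2, hTdet, hdetarr, hΦs 0 x, mul_one]
  · rintro _ ⟨x, hx, rfl⟩
    refine hVU (hPaV 0 _ ?_)
    have h1 : ‖x‖ ≤ 1 := by simpa [Disc] using hx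
    have h2 := norm_le_norm_add_norm_sub x ((Φ 0).toFun x)
    have h3 := hΦ1 0 x
    rw [norm_sub_rev] at h3
    linarith
  intro ψ hψ hψL
  have hψ0 : ∀ i t, |ψ i t| ≤ L := fun i t => by simpa using hψL i 0 (Nat.zero_le _) t
  have hζ : ∀ i, ContDiff ℝ r (fun t => ϵ * ((Ud i - Ua i) + (-(q i + p i)) * (t - y i) +
      (-(μ * σ * e i)) * ψ i (e i / μ * (t - y i)))) ∧
      CB (Metric.closedBall (y i) (2 * w)) r (|ϵ| * Cζ)
        (fun t => ϵ * ((Ud i - Ua i) + (-(q i + p i)) * (t - y i) +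
          (-(μ * σ * e i)) * ψ i (e i / μ * (t - y i)))) := fun i => by
    obtain ⟨h1, h2, h3, h4, h5⟩ := hepq i
    have hσ' : |σ| = 1 := by rcases hσ with h | h <;> simp [h]
    have hμ1 : μ ≤ 1 := hμμ₀.trans hμ₀1
    rw [hCζdef]
    refine zeta_bound (hψ i) hL.le (hψL i) ?_ ?_ ?_ ?_ ?_ ϵ (y i) (by positivity)
    · rw [le_div_iff₀ hμ]
      linarith
    · rw [abs_of_pos (by positivity)]
      gcongr
    · have h6 := abs_sub (Ud i) (Ua i)
      have h7 := hUaC i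
      have h8 := abs_sub_abs_le_abs_sub (Ud i) Uc
      have h9 := hUd i
      linarith
    · rw [abs_neg]
      have := abs_add_le (q i) (p i)
      linarith
    · rw [abs_neg, abs_mul, abs_mul, hσ', abs_of_pos hμ, abs_of_pos h1, mul_one]
      nlinarith
  have hM : |ϵ| * W ≤ θ * W := by gcongr
  have hM1 : (r + 1) * (C6 * (Cs * (|ϵ| * Cζ))) = |ϵ| * W := by rw [hWdef]; ring
  have hM0 : 0 ≤ Cs * (|ϵ| * Cζ) := by positivity
  have hM2 : Cs * (|ϵ| * Cζ) ≤ 1 := by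
    have h1 : Cs * (|ϵ| * Cζ) ≤ C6 * (Cs * (|ϵ| * Cζ)) := le_mul_of_one_le_left hM0 hC6
    have h2 : C6 * (Cs * (|ϵ| * Cζ)) ≤ (r + 1) * (C6 * (Cs * (|ϵ| * Cζ))) :=
      le_mul_of_one_le_left (by positivity) (by simp)
    linarith
  obtain ⟨S, hSs, hSCB, hSw, hSV⟩ := hshear _ (|ϵ| * Cζ) (fun i => (hζ i).1)
    (fun i => (hζ i).2) (by positivity) hM2
  have hSPa : ∀ i (z : P2), ‖z‖ < R → S.toFun (T.toFun ((arr i).toFun z)) =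
      T.toFun ((dep i).toFun (z.1 - ψ i z.2, z.2)) := fun i z hz => by
    obtain ⟨h1, h2⟩ := hPa2 i z hz
    have h3 := (hepq i).1
    have h4 : e i / μ * (y i + μ * (e i)⁻¹ * z.2 - y i) = z.2 := by field_simp; ring
    rw [hSw i _ h1 h2, hT, hT, harr, hdep]
    refine Prod.ext ?_ rfl
    simp only
    rw [h4]
    ring
  obtain ⟨hD1, -, hD3⟩ := perturbed_dynamics hL.le (f := f.toFun) (S := S.toFun) (V := V)
    (by omega : 0 < n₁) (fun i z => T.toFun ((arr i).toFun z))
    (fun i z => T.toFun ((dep i).toFun z)) (fun i => (Φ i).toFun) ψ hΦ1 hψ0 hSPa hreturn hdepV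
    hSV hPaV hdisj hRdef.ge
  have hfr : ContDiff ℝ r f.toFun := f.contDiff.of_le (by exact_mod_cast le_top)
  have hr0 : ((r : ℕ∞) : ℕ∞ω) ≠ 0 := by
    have : r ≠ 0 := by omega
    exact_mod_cast this
  refine ⟨dcomp (dofLe le_top f) S, fun x => ?_, fun x hx => ?_, ?_, hD1, fun k hk hkn => ?_⟩
  · have h1 : fderiv ℝ (f.toFun ∘ S.toFun) x = _ :=
      ((hfr.differentiable hr0 _).hasFDerivAt.comp x
        ((S.contDiff.differentiable hr0) x).hasFDerivAt).fderiv
    change (fderiv ℝ (f.toFun ∘ S.toFun) x).det = 1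
    rw [h1, det_comp_P2, hsymp, hSs, mul_one]
  · change f.toFun (S.toFun x) = f.toFun x
    rw [hSV x fun h => hx (hVU h)]
  · have h1 := hcomp (fun z => S.toFun z - z) (Cs * (|ϵ| * Cζ)) (S.contDiff.sub contDiff_id) hM2
      hSCB (fun z hz => by
        rw [hSV z fun h => hz ?_, sub_self]
        rw [hV] at h
        exact Metric.ball_subset_closedBall h)
    simp only [add_sub_cancel] at h1
    exact crDistGlobal_lt (hfr.comp S.contDiff) hfr h1 (by linarith) hδ
  · refine eq_empty_iff_forall_notMem.2 ?_
    rintro _ ⟨⟨_, ⟨x, hx, rfl⟩, h1⟩, ⟨x', hx', h2⟩⟩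
    exact hD3 k hk hkn x hx x' hx' (h1.trans h2.symm)

end RL

/-- **Renormalization lemma (Berger–Turaev).** Let `f` be a `C^∞` symplectic
diffeomorphism of the plane having a hyperbolic periodic point `O` with a homoclinic
band `I`; one assumes coordinates in which `O = 0`, the stable and unstable manifolds of
`O` coincide locally with the two coordinate axes, `I` is a vertical segment and some
iterate `f^m` maps `I` onto a horizontal segment.  Then for every odd `N`, every
`r ≥ 1`, all `L, δ > 0` and every neighbourhood `U` of `I` there exist `n > 1`,
symplectic `C^∞` diffeomorphisms `Φ₁, …, Φ_N` of the plane that are `δ`-close to the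
identity and a `C^∞` diffeomorphism `Q` of the plane of constant Jacobian with
`Q(𝔻) ⊆ U`, such that for all `ψ₁, …, ψ_N` of class `C^r` with `C^r` norms bounded by
`L` there is a `C^r` symplectic diffeomorphism `f̂` coinciding with `f` outside `U`,
with `‖f̂ − f‖_{C^r} < δ`, satisfying
`Q⁻¹ ∘ f̂ⁿ ∘ Q|_𝔻 = H_{ψ_N} ∘ Φ_N ∘ ⋯ ∘ H_{ψ₁} ∘ Φ₁|_𝔻`; moreover
`f̂^m(Q(𝔻)) ∩ Q(𝔻) = ∅` for `m = 1, …, n−1`. -/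
theorem renormalization_lemma
    (f : PlaneDiffeo ⊤) (hsymp : f.Symplectic)
    (τ : ℕ) (O : P2) (hOhyp : IsHypPerPtPlane f.toFun τ O) (hO0 : O = 0)
    (ρ : ℝ) (hρ : 0 < ρ)
    (hstable_axis : Set.Icc (-ρ) ρ ×ˢ ({0} : Set ℝ) ⊆ stableSetPlane f.toFun O)
    (hunstable_axis : ({0} : Set ℝ) ×ˢ Set.Icc (-ρ) ρ ⊆ stableSetPlane f.invFun O)
    (Iband : Set P2) (a c d : ℝ) (hcd : c < d) (hIseg : Iband = {a} ×ˢ Set.Icc c d)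
    (j : ℕ) (hj : j < τ)
    (hIu : Iband ⊆ stableSetPlane f.invFun O)
    (hIs : Iband ⊆ stableSetPlane f.toFun (f.toFun^[j] O))
    (m₀ : ℕ) (a' b' b : ℝ)
    (hhoriz : f.toFun^[m₀] '' Iband = Set.Icc a' b' ×ˢ ({b} : Set ℝ)) :
    ∀ N : ℕ, Odd N → ∀ r : ℕ, 1 ≤ r → ∀ L δ : ℝ, 0 < L → 0 < δ →
      ∀ U : Set P2, IsOpen U → Iband ⊆ U →
        ∃ n : ℕ, 1 < n ∧
        ∃ Φ : Fin N → PlaneDiffeo ⊤,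
          (∀ i, (Φ i).Symplectic) ∧
          (∀ i, crDistGlobal r (Φ i).toFun id < ENNReal.ofReal δ) ∧
        ∃ Q : PlaneDiffeo ⊤,
          (∃ cJ : ℝ, cJ ≠ 0 ∧ ∀ x : P2, (fderiv ℝ Q.toFun x).det = cJ) ∧
          Q.toFun '' Disc ⊆ U ∧
          ∀ ψ : Fin N → (ℝ → ℝ),
            (∀ i, ContDiff ℝ r (ψ i)) →
            (∀ i, ∀ k ≤ r, ∀ t : ℝ, |iteratedDeriv k (ψ i) t| ≤ L) →
            ∃ fhat : PlaneDiffeo r, fhat.Symplectic ∧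
              (∀ x ∉ U, fhat.toFun x = f.toFun x) ∧
              crDistGlobal r fhat.toFun f.toFun < ENNReal.ofReal δ ∧
              (∀ x ∈ Disc, fhat.toFun^[n] (Q.toFun x) =
                Q.toFun (seqComp (fun i => henon (ψ i) ∘ (Φ i).toFun) x)) ∧
              ∀ k : ℕ, 1 ≤ k → k < n →
                fhat.toFun^[k] '' (Q.toFun '' Disc) ∩ Q.toFun '' Disc = ∅ := by
  subst hO0 hIseg
  exact fun N hN r hr L δ hL hδ U hU hIU =>
    RL.renormalization f hsymp hOhyp hcd hj hIu hIs hN hr hL hδ hU hIU
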